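/- Let 0 ≤ l < d ≤ n be integers. There is a constant τ_0(n) > 0 such that the following holds for every 0 < τ_l ≤ τ_0(n). Let T be a finite set of l-dimensional irreducible varieties in ℂ^n and let V ⊆ ℂ^n be a d-dimensional irreducible variety. Let 0 ≤ s ≤ n−d be an integer admissible with respect to V such that deg(T) ∈ ℛ^l_{s,τ_l}(V). Then there exists a polynomial P ∈ ℂ[x_1,…,x_n] of degree at most C(n,τ_l)·(deg(T)/Δ_s(V))^{1/(n−(s+l))}, for a constant C(n,τ_l) depending only on n and τ_l, vanishing at every point of every element of T but not vanishing identically on V. -/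

import Mathlib

open MvPolynomial Set

noncomputable section

namespace Paper

variable (n : ℕ)

/-- The zero locus in `ℂⁿ` of a set of polynomials. -/
def zeroLocus (I : Set (MvPolynomial (Fin n) ℂ)) : Set (Fin n → ℂ) :=
  {x | ∀ f ∈ I, eval x f = 0}

/-- A subset of `ℂⁿ` is algebraic if it is the zero locus of a set of polynomials. -/
def IsAlgebraicSet (V : Set (Fin n → ℂ)) : Prop :=
  ∃ I : Set (MvPolynomial (Fin n) ℂ), V = zeroLocus n I

/-- An irreducible (affine) variety in `ℂⁿ`: a nonempty algebraic set that is not covered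
by two algebraic sets unless it is contained in one of them. -/
def IsIrredVariety (V : Set (Fin n → ℂ)) : Prop :=
  IsAlgebraicSet n V ∧ V.Nonempty ∧
    ∀ V₁ V₂ : Set (Fin n → ℂ), IsAlgebraicSet n V₁ → IsAlgebraicSet n V₂ →
      V ⊆ V₁ ∪ V₂ → V ⊆ V₁ ∨ V ⊆ V₂

/-- There is a strictly increasing chain of `d + 1` irreducible varieties inside `V`. -/
def HasChain (V : Set (Fin n → ℂ)) (d : ℕ) : Prop :=
  ∃ W : Fin (d + 1) → Set (Fin n → ℂ),
    (∀ i, IsIrredVariety n (W i)) ∧ (∀ i j : Fin (d + 1), i < j → W i ⊂ W j) ∧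
      W (Fin.last d) ⊆ V

/-- The (Krull) dimension of a subset of `ℂⁿ`, as the length of the longest chain of
irreducible subvarieties. -/
def dim (V : Set (Fin n → ℂ)) : ℕ := sSup {d | HasChain n V d}

/-- `W` is an irreducible component of `X`: an irreducible subvariety that is maximal among
irreducible subvarieties of `X`. -/
def IsIrredComponent (W X : Set (Fin n → ℂ)) : Prop :=
  IsIrredVariety n W ∧ W ⊆ X ∧
    ∀ W', IsIrredVariety n W' → W ⊆ W' → W' ⊆ X → W' = W

/-- The degree of an irreducible variety `V ⊆ ℂⁿ` of dimension `d` (i.e. the degree of its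
projective closure): the largest finite number of points in which an affine-linear subspace of
dimension `n - d` meets `V`. -/
def degree (V : Set (Fin n → ℂ)) : ℕ :=
  sSup { m | ∃ L : AffineSubspace ℂ (Fin n → ℂ),
    Module.finrank ℂ L.direction = n - dim n V ∧ (V ∩ ↑L).Finite ∧ (V ∩ ↑L).ncard = m }

/-- The degree of an algebraic set: the sum of the degrees of its irreducible components. -/
def degreeSum (X : Set (Fin n → ℂ)) : ℕ :=
  ∑ᶠ W ∈ {W | IsIrredComponent n W X}, degree n W

/-- The maximal dimension of an irreducible component of `X` containing `V` equals `e`. -/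
def MaxCompDimEq (X V : Set (Fin n → ℂ)) (e : ℕ) : Prop :=
  (∃ W, IsIrredComponent n W X ∧ V ⊆ W ∧ dim n W = e) ∧
    ∀ W, IsIrredComponent n W X → V ⊆ W → dim n W ≤ e

/-- The partial degrees `δ_i(V)` of an irreducible variety `V`:  the minimal `δ` such that there
are polynomials of degree at most `δ` cutting out an algebraic set containing `V` whose
irreducible components containing `V` have maximal dimension `n - i`.  By convention
`δ_0(V) = 0`. -/
def partialDeg (V : Set (Fin n → ℂ)) (i : ℕ) : ℕ :=
  if i = 0 then 0
  else sInf { δ | ∃ I : Finset (MvPolynomial (Fin n) ℂ),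
    (∀ f ∈ I, f.totalDegree ≤ δ) ∧ V ⊆ zeroLocus n ↑I ∧
      MaxCompDimEq n (zeroLocus n ↑I) V (n - i) }

/-- The partial degrees as extended naturals, with the convention `δ_i(V) = ∞` for
`i > n - dim V`. -/
def partialDegE (V : Set (Fin n → ℂ)) (i : ℕ) : ℕ∞ :=
  if i ≤ n - dim n V then (partialDeg n V i : ℕ∞) else ⊤

/-- `δ(V)` for an irreducible variety `V`: the minimal `δ` such that `V` is an irreducible
component of the zero set of a finite family of polynomials of degree at most `δ`. -/
def deltaIrr (V : Set (Fin n → ℂ)) : ℕ :=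
  sInf { δ | ∃ I : Finset (MvPolynomial (Fin n) ℂ),
    (∀ f ∈ I, f.totalDegree ≤ δ) ∧ IsIrredComponent n V (zeroLocus n ↑I) }

/-- `δ(V)` for a general algebraic set `V`: the minimal `δ` such that every irreducible
component of `V` is an irreducible component of the zero set of a finite family of polynomials
of degree at most `δ`. -/
def deltaSet (V : Set (Fin n → ℂ)) : ℕ :=
  sInf { δ | ∃ I : Finset (MvPolynomial (Fin n) ℂ),
    (∀ f ∈ I, f.totalDegree ≤ δ) ∧
      ∀ W, IsIrredComponent n W V → IsIrredComponent n W (zeroLocus n ↑I) }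

/-- An algebraic set all of whose irreducible components have dimension `d`. -/
def IsAlgSetOfDim (V : Set (Fin n → ℂ)) (d : ℕ) : Prop :=
  IsAlgebraicSet n V ∧ V.Nonempty ∧ ∀ W, IsIrredComponent n W V → dim n W = d

/-- `Δ_i(V) = max (deg V / (δ_{i+1}(V) ⋯ δ_{n-d}(V))) 1`. -/
def Delta (V : Set (Fin n → ℂ)) (i : ℕ) : ℝ :=
  max ((degree n V : ℝ) / ∏ j ∈ Finset.Icc (i + 1) (n - dim n V), (partialDeg n V j : ℝ)) 1

/-- `i` is admissible with respect to `V` if `δ_{i+1}(V) > 2 i δ_i(V)` (with the convention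
`δ_i(V) = ∞` for `i > n - dim V`). -/
def Admissible (V : Set (Fin n → ℂ)) (i : ℕ) : Prop :=
  ((2 * i : ℕ) : ℕ∞) * partialDegE n V i < partialDegE n V (i + 1)

/-- The interval `ℛ_i(V) = [c₁ δ_i(V)^{n-i} Δ_i(V), (c₀/2) δ_{i+1}(V)^{n-i} Δ_i(V)]`,
where `δ_{n-d+1}(V) = ∞` makes the last interval a half-line. -/
def RSet (c0 c1 : ℝ) (V : Set (Fin n → ℂ)) (i : ℕ) : Set ℝ :=
  if i = n - dim n V then
    Set.Ici (c1 * (partialDeg n V i : ℝ) ^ (n - i) * Delta n V i)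
  else
    Set.Icc (c1 * (partialDeg n V i : ℝ) ^ (n - i) * Delta n V i)
      ((c0 / 2) * (partialDeg n V (i + 1) : ℝ) ^ (n - i) * Delta n V i)

/-- The interval `ℛ^l_{s,τ}(V) = [τ δ_s(V)^{n-(s+l)} Δ_s(V), τ δ_{s+1}(V)^{n-(s+l)} Δ_s(V)]`,
where `δ_{n-d+1}(V) = ∞` makes the last interval a half-line. -/
def RlSet (τ : ℝ) (l : ℕ) (V : Set (Fin n → ℂ)) (s : ℕ) : Set ℝ :=
  if s = n - dim n V then
    Set.Ici (τ * (partialDeg n V s : ℝ) ^ (n - (s + l)) * Delta n V s)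
  else
    Set.Icc (τ * (partialDeg n V s : ℝ) ^ (n - (s + l)) * Delta n V s)
      (τ * (partialDeg n V (s + 1) : ℝ) ^ (n - (s + l)) * Delta n V s)

/-- The ideal `I(V)` of polynomials vanishing on `V ⊆ ℂⁿ`. -/
def vanishingIdeal (V : Set (Fin n → ℂ)) : Ideal (MvPolynomial (Fin n) ℂ) where
  carrier := {f | ∀ x ∈ V, eval x f = 0}
  add_mem' := by
    intro a b ha hb x hx
    simp [ha x hx, hb x hx]
  zero_mem' := by
    intro x hx
    simp
  smul_mem' := by
    intro c f hf x hx
    simp [smul_eq_mul, hf x hx]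

/-- The ideal `I_ℝ(V)` of real polynomials vanishing on `V ⊆ ℂⁿ`. -/
def vanishingIdealR (V : Set (Fin n → ℂ)) : Ideal (MvPolynomial (Fin n) ℝ) :=
  (vanishingIdeal n V).comap (MvPolynomial.map (algebraMap ℝ ℂ))

/-- The affine Hilbert function `H_{I(V)}(m) = dim_ℂ ℂ[x]_{≤ m} / I(V)_{≤ m}`, realised as the
dimension of the image of the space of polynomials of total degree at most `m` in the quotient
ring `ℂ[x]/I(V)`. -/
def hilbert (V : Set (Fin n → ℂ)) (m : ℕ) : ℕ :=
  Module.finrank ℂ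
    (Submodule.map (Ideal.Quotient.mkₐ ℂ (vanishingIdeal n V)).toLinearMap
      (restrictTotalDegree (Fin n) ℂ m))

/-- The real affine Hilbert function `H_{I(V),ℝ}(m) = dim_ℝ ℝ[x]_{≤ m} / I_ℝ(V)_{≤ m}`. -/
def hilbertR (V : Set (Fin n → ℂ)) (m : ℕ) : ℕ :=
  Module.finrank ℝ
    (Submodule.map (Ideal.Quotient.mkₐ ℝ (vanishingIdealR n V)).toLinearMap
      (restrictTotalDegree (Fin n) ℝ m))

/-- The inclusion `ℝⁿ → ℂⁿ`. -/
def toC (x : Fin n → ℝ) : Fin n → ℂ := fun i => (x i : ℂ)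

/-- The set of real points of `V ⊆ ℂⁿ`. -/
def realPts (V : Set (Fin n → ℂ)) : Set (Fin n → ℝ) := {x | toC n x ∈ V}

/-- The real zero set of a real polynomial. -/
def zeroSetR (g : MvPolynomial (Fin n) ℝ) : Set (Fin n → ℝ) := {x | eval x g = 0}

/-- The zero locus of the polynomials `P 1, …, P i` (the first `i` members of a tuple of
polynomials indexed from `1`). -/
def zeroLocusUpTo (P : ℕ → MvPolynomial (Fin n) ℂ) (i : ℕ) : Set (Fin n → ℂ) :=
  zeroLocus n {f | ∃ j : ℕ, 1 ≤ j ∧ j ≤ i ∧ f = P j}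

/-- `V'` is an `(n-s)`-minimal variety of the irreducible variety `V`. -/
def IsMinimalVariety (V V' : Set (Fin n → ℂ)) (s : ℕ) : Prop :=
  IsIrredVariety n V' ∧ V ⊆ V' ∧ dim n V' = n - s ∧
    ∀ f ∈ vanishingIdeal n V, f ∉ vanishingIdeal n V' →
      partialDegE n V (s + 1) ≤ (f.totalDegree : ℕ∞)

/-- `S` is `(k,b)`-free with respect to `T`, for the incidence relation `R`. -/
def KBFree {α β : Type*} (R : α → β → Prop) (S : Finset α) (T : Finset β) (k b : ℕ) : Prop :=
  ¬ ∃ (P : Finset α) (B : Finset β), P ⊆ S ∧ B ⊆ T ∧ P.card = k ∧ B.card = b ∧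
      ∀ s ∈ P, ∀ t ∈ B, R s t

/-- The number of incidences between a finite set of points and a finite family of sets. -/
def incCountAbs {α : Type*} (S : Finset α) (T : Finset (Set α)) : ℕ :=
  ∑ t ∈ T, (↑S ∩ t).ncard

/-- The number of incidences between a finite set of real points and a finite family of
subsets of `ℂⁿ`. -/
def incCount (S : Finset (Fin n → ℝ)) (T : Finset (Set (Fin n → ℂ))) : ℕ :=
  ∑ t ∈ T, (↑S ∩ toC n ⁻¹' t).ncard

/-- The total degree `deg T = ∑_{t ∈ T} deg t` of a finite family of algebraic sets. -/
def degFamily (T : Finset (Set (Fin n → ℂ))) : ℕ := ∑ t ∈ T, degreeSum n t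

/-- The total degree of a finite family of irreducible varieties. -/
def degFamilyIrred (T : Finset (Set (Fin n → ℂ))) : ℕ := ∑ t ∈ T, degree n t

/-- `α_k(d)`. -/
def alpha (k d : ℕ) : ℝ :=
  if k = 1 ∧ d = 1 then 0 else (k : ℝ) * ((d : ℝ) - 1) / ((d : ℝ) * (k : ℝ) - 1)

/-- `β_k(d)`. -/
def beta (k d : ℕ) : ℝ :=
  if k = 1 ∧ d = 1 then 1 else (d : ℝ) * ((k : ℝ) - 1) / ((d : ℝ) * (k : ℝ) - 1)

/-- `τ_d(b,k) = b^{1-β_k(d)} k^{1-α_k(d)}`. -/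
def tauC (d b k : ℕ) : ℝ := (b : ℝ) ^ (1 - beta k d) * (k : ℝ) ^ (1 - alpha k d)

/-- The Chardin–Philippon property of the constant `c₀`: for every pure-dimensional algebraic
set `W ⊆ ℂⁿ` and every `m ≥ 2 (n - dim W) δ(W)` one has `H_{I(W)}(m) ≥ c₀ m^{dim W} deg W`. -/
def ChardinPhilippon (c0 : ℝ) : Prop :=
  ∀ (W : Set (Fin n → ℂ)) (e : ℕ), IsAlgSetOfDim n W e →
    ∀ m : ℕ, 2 * (n - e) * deltaSet n W ≤ m →
      c0 * (m : ℝ) ^ e * (degreeSum n W : ℝ) ≤ (hilbert n W m : ℝ)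

/-- The defining property of the constant `c₁`: for every irreducible variety `V`, every
positive integer lies in some interval `ℛ_i(V)` with `i` admissible with respect to `V`. -/
def CoversPositiveIntegers (c0 c1 : ℝ) : Prop :=
  ∀ V : Set (Fin n → ℂ), IsIrredVariety n V →
    ∀ m : ℕ, 0 < m → ∃ i, Admissible n V i ∧ (m : ℝ) ∈ RSet n c0 c1 V i

/-- `i_V(M)`: the smallest admissible `i` such that `M^{n-i} Δ_i(V) ∈ ℛ_i(V)`. -/
def iV (c0 c1 : ℝ) (V : Set (Fin n → ℂ)) (M : ℕ) : ℕ :=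
  sInf {i | Admissible n V i ∧ (M : ℝ) ^ (n - i) * Delta n V i ∈ RSet n c0 c1 V i}

/-- A real polynomial bisects a finite set `S ⊆ ℝⁿ` if it is positive on at most half of `S`
and negative on at most half of `S`. -/
def Bisects (g : MvPolynomial (Fin n) ℝ) (S : Finset (Fin n → ℝ)) : Prop :=
  ((↑S ∩ {x | 0 < eval x g}).ncard : ℝ) ≤ (S.card : ℝ) / 2 ∧
    ((↑S ∩ {x | eval x g < 0}).ncard : ℝ) ≤ (S.card : ℝ) / 2

/-- The set of `r`-rich points of a family `T`: points lying in at least `r` members of `T`. -/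
def richPts (T : Finset (Set (Fin n → ℂ))) (r : ℕ) : Set (Fin n → ℂ) :=
  {x | r ≤ ({t | t ∈ T ∧ x ∈ t} : Set (Set (Fin n → ℂ))).ncard}

/-- A real hypersurface of degree at most `D`: the real zero set of a nonzero real polynomial
of degree at most `D`. -/
def IsRealHypersurfaceDegLE (t : Set (Fin n → ℝ)) (D : ℕ) : Prop :=
  ∃ p : MvPolynomial (Fin n) ℝ, p ≠ 0 ∧ t = zeroSetR n p ∧ p.totalDegree ≤ D

/-- Lexicographic comparison of the tuples `(f 1, …, f m)` and `(g 1, …, g m)`. -/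
def LexLE (m : ℕ) (f g : ℕ → ℕ) : Prop :=
  (∀ j ∈ Finset.Icc 1 m, f j = g j) ∨
    ∃ i ∈ Finset.Icc 1 m, (∀ j, 1 ≤ j → j < i → f j = g j) ∧ f i < g i



/-! ### Power series: Hensel and lex counting -/

lemma hensel_mv {r : ℕ} (F : Polynomial (MvPowerSeries (Fin r) ℂ)) (a : ℂ)
    (h0 : MvPowerSeries.constantCoeff (F.eval (MvPowerSeries.C a)) = 0)
    (h1 : MvPowerSeries.constantCoeff (F.derivative.eval (MvPowerSeries.C a)) ≠ 0) :
    ∃ u : MvPowerSeries (Fin r) ℂ, F.eval u = 0 := by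
  classical
  set β : ℂ := MvPowerSeries.constantCoeff (F.derivative.eval (MvPowerSeries.C a)) with hβ
  -- congruence
  have hcongr : ∀ (G : Polynomial (MvPowerSeries (Fin r) ℂ)) (x y : MvPowerSeries (Fin r) ℂ) (k : ℕ∞), k ≤ (x - y).order →
      k ≤ (G.eval x - G.eval y).order := by
    intro G x y k hk
    obtain ⟨z, hz⟩ := Polynomial.sub_dvd_eval_sub x y G
    rw [hz]
    exact (hk.trans (by simp)).trans MvPowerSeries.le_order_mul
  let w : ℕ → MvPowerSeries (Fin r) ℂ := fun k => Nat.rec (MvPowerSeries.C a)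
    (fun _ x => x - MvPowerSeries.C β⁻¹ * F.eval x) k
  have w0 : w 0 = MvPowerSeries.C a := rfl
  have ws : ∀ k, w (k+1) = w k - MvPowerSeries.C β⁻¹ * F.eval (w k) := fun k => rfl
  have key : ∀ k : ℕ, (1 : ℕ∞) ≤ (w k - MvPowerSeries.C a).order ∧
      ((k + 1 : ℕ) : ℕ∞) ≤ (F.eval (w k)).order := by
    intro k
    induction k with
    | zero =>
      rw [w0]
      refine ⟨by simp, ?_⟩
      have := (MvPowerSeries.one_le_order_iff_constCoeff_eq_zero
        (f := F.eval (MvPowerSeries.C a))).2 h0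
      simpa using this
    | succ k ih =>
      obtain ⟨i1, i2⟩ := ih
      have hk1 : (1 : ℕ∞) ≤ ((k + 1 : ℕ) : ℕ∞) := by exact_mod_cast (by omega)
      have hstep : ((k + 1 : ℕ) : ℕ∞) ≤ (MvPowerSeries.C β⁻¹ * F.eval (w k)).order :=
        (i2.trans (by simp)).trans MvPowerSeries.le_order_mul
      refine ⟨?_, ?_⟩
      · have : w (k+1) - MvPowerSeries.C a =
          (w k - MvPowerSeries.C a) + (-(MvPowerSeries.C β⁻¹ * F.eval (w k))) := by
          rw [ws]; ring
        rw [this]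
        refine le_trans ?_ MvPowerSeries.min_order_le_add
        rw [MvPowerSeries.order_neg]
        exact le_min i1 (hk1.trans hstep)
      · obtain ⟨z, hz⟩ := Polynomial.binomExpansion F (w k) (-(MvPowerSeries.C β⁻¹ * F.eval (w k)))
        have e1 : w (k+1) = w k + (-(MvPowerSeries.C β⁻¹ * F.eval (w k))) := by
          rw [ws]; ring
        rw [e1, hz]
        have e2 : F.eval (w k) + F.derivative.eval (w k) * (-(MvPowerSeries.C β⁻¹ * F.eval (w k)))
            + z * (-(MvPowerSeries.C β⁻¹ * F.eval (w k)))^2 =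
            (1 - F.derivative.eval (w k) * MvPowerSeries.C β⁻¹) * F.eval (w k)
            + z * ((MvPowerSeries.C β⁻¹ * F.eval (w k)) * (MvPowerSeries.C β⁻¹ * F.eval (w k))) := by
          ring
        rw [e2]
        have e3 : (1:ℕ∞) ≤ (1 - F.derivative.eval (w k) * MvPowerSeries.C β⁻¹).order := by
          rw [MvPowerSeries.one_le_order_iff_constCoeff_eq_zero]
          have := hcongr F.derivative _ _ _ i1
          rw [MvPowerSeries.one_le_order_iff_constCoeff_eq_zero, map_sub, sub_eq_zero] at this
          rw [map_sub, map_mul, this, ← hβ]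
          simp [h1]
        refine le_trans ?_ MvPowerSeries.min_order_le_add
        refine le_min ?_ ?_
        · refine le_trans ?_ MvPowerSeries.le_order_mul
          calc ((k + 1 + 1 : ℕ) : ℕ∞) = 1 + ((k+1 : ℕ) : ℕ∞) := by push_cast; ring
            _ ≤ _ := add_le_add e3 i2
        · refine le_trans ?_ MvPowerSeries.le_order_mul
          refine le_trans ?_ (le_add_left MvPowerSeries.le_order_mul)
          calc ((k + 1 + 1 : ℕ) : ℕ∞) = 1 + ((k+1 : ℕ) : ℕ∞) := by push_cast; ring
            _ ≤ _ := add_le_add (hk1.trans hstep) hstep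
  have hdiff : ∀ k j : ℕ, ((k + 1 : ℕ) : ℕ∞) ≤ (w (k + j) - w k).order := by
    intro k j
    induction j with
    | zero => simp
    | succ j ih =>
      have : w (k + (j+1)) - w k = (w (k+j) - w k) + (-(MvPowerSeries.C β⁻¹ * F.eval (w (k+j)))) := by
        rw [← add_assoc, ws]; ring
      rw [this]
      refine le_trans ?_ MvPowerSeries.min_order_le_add
      rw [MvPowerSeries.order_neg]
      refine le_min ih ?_
      refine le_trans ?_ (((key (k+j)).2.trans (by simp)).trans MvPowerSeries.le_order_mul)
      exact_mod_cast (by omega)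
  let u : MvPowerSeries (Fin r) ℂ := fun m => MvPowerSeries.coeff m (w m.degree)
  have hu : ∀ k, ((k + 1 : ℕ) : ℕ∞) ≤ (u - w k).order := by
    intro k
    apply MvPowerSeries.le_order
    intro m hm
    have hm' : m.degree < k + 1 := by exact_mod_cast hm
    rw [map_sub]
    have : MvPowerSeries.coeff m u = MvPowerSeries.coeff m (w m.degree) := rfl
    rw [this]
    obtain ⟨j, rfl⟩ : ∃ j, k = m.degree + j := ⟨k - m.degree, by omega⟩
    have := MvPowerSeries.coeff_of_lt_order (f := w (m.degree + j) - w m.degree) (d := m)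
      (lt_of_lt_of_le (by exact_mod_cast Nat.lt_succ_self _) (hdiff m.degree j))
    rw [map_sub] at this
    rw [sub_eq_zero] at this ⊢
    exact this.symm
  refine ⟨u, ?_⟩
  rw [← MvPowerSeries.order_eq_top_iff, ENat.eq_top_iff_forall_ge]
  intro k
  have h1 := hcongr F _ _ _ (hu k)
  have : F.eval u = (F.eval u - F.eval (w k)) + F.eval (w k) := by ring
  rw [this]
  refine le_trans ?_ MvPowerSeries.min_order_le_add
  refine le_trans ?_ (le_min h1 (key k).2)
  exact_mod_cast (by omega)

/-- finite dimensional spaces of power series: set of leading exponents -/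
lemma lex_count {r : ℕ} (W : Submodule ℂ (MvPowerSeries (Fin r) ℂ)) [FiniteDimensional ℂ W]
    (S : Finset (Fin r →₀ ℕ))
    (hS : ∀ s ∈ S, ∃ w ∈ W, w.lexOrder = ((toLex s : Lex (Fin r →₀ ℕ)) : WithTop _)) :
    S.card ≤ Module.finrank ℂ W := by
  classical
  choose! w hw hw' using hS
  have : LinearIndependent ℂ (fun s : S => (⟨w s, hw s s.2⟩ : W)) := by
    rw [Fintype.linearIndependent_iff]
    intro g hg
    by_contra! hne
    obtain ⟨i, hi⟩ := hne
    let T := (Finset.univ : Finset S).filter (fun s => g s ≠ 0)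
    have hT : T.Nonempty := ⟨i, by simp [T, hi]⟩
    obtain ⟨m, hmT, hm⟩ := Finset.exists_min_image T (fun s => toLex (s : Fin r →₀ ℕ)) hT
    have hgm : g m ≠ 0 := by simpa [T] using hmT
    have h := congrArg (fun x : W => MvPowerSeries.coeff (m : Fin r →₀ ℕ) (x : MvPowerSeries (Fin r) ℂ)) hg
    simp only [AddSubmonoidClass.coe_finsetSum, Submodule.coe_smul, ZeroMemClass.coe_zero,
      map_sum, map_smul, map_zero, smul_eq_mul] at h
    rw [Finset.sum_eq_single m] at h
    · rcases mul_eq_zero.1 h with h | h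
      · exact hgm h
      · exact MvPowerSeries.coeff_ne_zero_of_lexOrder (hw' m m.2).symm h
    · intro b _ hb
      by_cases hgb : g b = 0
      · simp [hgb]
      · have hbT : b ∈ T := by simp [T, hgb]
        have hle := hm b hbT
        have hlt : toLex (m : Fin r →₀ ℕ) < toLex (b : Fin r →₀ ℕ) := by
          refine lt_of_le_of_ne hle ?_
          intro h
          exact hb (Subtype.ext (toLex.injective h)).symm
        rw [MvPowerSeries.coeff_eq_zero_of_lt_lexOrder, mul_zero]
        rw [hw' b b.2]
        exact_mod_cast hlt
    · simp
  simpa using this.fintype_card_le_finrank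

lemma lex_exists {r : ℕ} (W : Submodule ℂ (MvPowerSeries (Fin r) ℂ)) [FiniteDimensional ℂ W] :
    ∃ S : Finset (Fin r →₀ ℕ), Module.finrank ℂ W = S.card ∧
     ∀ s ∈ S, ∃ w ∈ W, w.lexOrder = ((toLex s : Lex (Fin r →₀ ℕ)) : WithTop _) := by
  classical
  let T : Set (Fin r →₀ ℕ) := {s | ∃ w ∈ W, w.lexOrder = ((toLex s : Lex (Fin r →₀ ℕ)) : WithTop _)}
  have hTf : T.Finite := by
    by_contra hinf
    obtain ⟨S, hS, hc⟩ := (show T.Infinite from hinf).exists_subset_card_eq (Module.finrank ℂ W + 1)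
    have := lex_count W S (fun s hs => hS hs)
    omega
  refine ⟨hTf.toFinset, le_antisymm ?_ (lex_count W _ (fun s hs => by simpa [T] using hs)),
    fun s hs => by simpa [T] using hs⟩
  let φ : W →ₗ[ℂ] (hTf.toFinset → ℂ) :=
    LinearMap.pi (fun s => (MvPowerSeries.coeff (s : Fin r →₀ ℕ)).comp W.subtype)
  have hφ : Function.Injective φ := by
    rw [injective_iff_map_eq_zero]
    intro w hw
    by_contra hne
    have hne' : (w : MvPowerSeries (Fin r) ℂ) ≠ 0 := by simpa using hne
    obtain ⟨d, hd⟩ := MvPowerSeries.exists_finsupp_eq_lexOrder_of_ne_zero hne'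
    have hdT : d ∈ hTf.toFinset := by simpa [T] using ⟨w, w.2, hd⟩
    have := congrFun hw ⟨d, hdT⟩
    exact MvPowerSeries.coeff_ne_zero_of_lexOrder hd.symm (by simpa [φ] using this)
  simpa using LinearMap.finrank_le_finrank_of_injective hφ



/-! ### Linear Noether normalization -/

section NN
variable {A : Type*} [CommRing A] [Algebra ℂ A]

def lspan {k : ℕ} (x : Fin k → A) : Submodule ℂ A := Submodule.span ℂ (insert 1 (range x))

lemma one_mem_lspan {k : ℕ} (x : Fin k → A) : (1 : A) ∈ lspan x :=
  Submodule.subset_span (mem_insert _ _)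

lemma mem_lspan {k : ℕ} (x : Fin k → A) (i : Fin k) : x i ∈ lspan x :=
  Submodule.subset_span (mem_insert_of_mem _ (mem_range_self i))

lemma sub_pow_mono {X : Submodule ℂ A} (h : (1 : A) ∈ X) {a b : ℕ} (hab : a ≤ b) :
    X ^ a ≤ X ^ b := by
  obtain ⟨c, rfl⟩ := Nat.exists_eq_add_of_le hab
  rw [pow_add]
  intro t ht
  have : t * 1 ∈ X ^ a * X ^ c := Submodule.mul_mem_mul ht (by
    simpa using Submodule.pow_mem_pow X h c)
  simpa using this

def EE (z : A) (X : Submodule ℂ A) (a m : ℕ) : Submodule ℂ A :=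
  Submodule.span ℂ {t | ∃ i j : ℕ, ∃ w ∈ X ^ j, i < a ∧ i + j ≤ m ∧ t = z ^ i * w}

lemma EE_mul {z : A} {X : Submodule ℂ A} {a b m m' c : ℕ} (h : a + b ≤ c + 1) {t t' : A}
    (ht : t ∈ EE z X a m) (ht' : t' ∈ EE z X b m') : t * t' ∈ EE z X c (m + m') := by
  have : EE z X a m * EE z X b m' ≤ EE z X c (m + m') := by
    unfold EE
    rw [Submodule.span_mul_span, Submodule.span_le]
    rintro _ ⟨_, ⟨i, j, w, hw, h1, h2, rfl⟩, _, ⟨i', j', w', hw', h1', h2', rfl⟩, rfl⟩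
    refine Submodule.subset_span ⟨i + i', j + j', w * w', ?_, by omega, by omega, by ring⟩
    rw [pow_add]
    exact Submodule.mul_mem_mul hw hw'
  exact this (Submodule.mul_mem_mul ht ht')

lemma EE_mono {z : A} {X : Submodule ℂ A} {a b m m' : ℕ} (h : a ≤ b) (h' : m ≤ m') :
    EE z X a m ≤ EE z X b m' := by
  apply Submodule.span_mono
  rintro _ ⟨i, j, w, hw, h1, h2, rfl⟩
  exact ⟨i, j, w, hw, by omega, by omega, rfl⟩

lemma EE_z {z : A} {X : Submodule ℂ A} (b : ℕ) : z ^ b ∈ EE z X (b+1) b :=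
  Submodule.subset_span ⟨b, 0, 1, by simp [Submodule.one_le.1 le_rfl], by omega, by omega, by simp⟩

lemma EE_w {z : A} {X : Submodule ℂ A} {j : ℕ} {w : A} (hw : w ∈ X ^ j) : w ∈ EE z X 1 j :=
  Submodule.subset_span ⟨0, j, w, hw, by omega, by omega, by simp⟩

lemma nn_monomial {k : ℕ} (x : Fin k → A) (z : A) (X : Submodule ℂ A) (v : Fin k → ℂ)
    (hx : ∀ i, x i - v i • z ∈ X) (s : Fin k →₀ ℕ) :
    aeval x (monomial s (1:ℂ)) - (eval v (monomial s (1:ℂ))) • z ^ s.degree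
      ∈ EE z X s.degree s.degree := by
  have hadd : ∀ s t : Fin k →₀ ℕ,
      aeval x (monomial s (1:ℂ)) - (eval v (monomial s (1:ℂ))) • z ^ s.degree
        ∈ EE z X s.degree s.degree →
      aeval x (monomial t (1:ℂ)) - (eval v (monomial t (1:ℂ))) • z ^ t.degree
        ∈ EE z X t.degree t.degree →
      aeval x (monomial (s+t) (1:ℂ)) - (eval v (monomial (s+t) (1:ℂ))) • z ^ (s+t).degree
        ∈ EE z X (s+t).degree (s+t).degree := by
    intro s t hs ht
    have e : (monomial (s+t) (1:ℂ)) = monomial s (1:ℂ) * monomial t 1 := by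
      rw [monomial_mul, one_mul]
    rw [e, map_mul, map_mul, map_add, pow_add]
    set p := aeval x (monomial s (1:ℂ))
    set q := aeval x (monomial t (1:ℂ))
    set α := eval v (monomial s (1:ℂ))
    set β := eval v (monomial t (1:ℂ))
    have : p * q - (α * β) • (z ^ s.degree * z ^ t.degree) =
      (p - α • z ^ s.degree) * (q - β • z ^ t.degree)
      + α • (z ^ s.degree * (q - β • z ^ t.degree))
      + β • ((p - α • z ^ s.degree) * z ^ t.degree) := by
      simp only [Algebra.smul_def, map_mul]; ring
    rw [this]
    refine add_mem (add_mem ?_ ?_) ?_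
    · exact EE_mul (by omega) hs ht
    · exact Submodule.smul_mem _ _ (EE_mul (by omega) (EE_z _) ht)
    · exact Submodule.smul_mem _ _ (EE_mul (by omega) hs (EE_z _))
  induction s using Finsupp.induction_linear with
  | zero => simp
  | add s t hs ht => exact hadd s t hs ht
  | single i m =>
    induction m with
    | zero => simp
    | succ m ih =>
      rw [Finsupp.single_add]
      refine hadd _ _ ih ?_
      have : (monomial (Finsupp.single i 1) (1:ℂ)) = MvPolynomial.X i := rfl
      rw [this]
      simp only [aeval_X, eval_X, Finsupp.degree_single, pow_one]
      exact EE_w (by simpa using hx i)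

lemma nn_step [Nontrivial A] {k : ℕ} (x : Fin (k+1) → A) (hx : ¬ AlgebraicIndependent ℂ x) :
    ∃ x' : Fin k → A, (∀ i, x' i ∈ lspan x) ∧ ∃ Z : Submodule ℂ A, Z.FG ∧
      ∀ M, lspan x ^ M ≤ Z * lspan x' ^ M := by
  classical
  rw [algebraicIndependent_iff] at hx
  push Not at hx
  obtain ⟨f, hf, hf0⟩ := hx
  set a := f.totalDegree with ha
  have ha1 : 1 ≤ a := by
    by_contra h
    have h0 : f.totalDegree = 0 := by omega
    rw [totalDegree_eq_zero_iff_eq_C] at h0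
    rw [h0] at hf
    simp only [aeval_C] at hf
    have : coeff 0 f = 0 := by
      apply (algebraMap ℂ A).injective; simpa using hf
    rw [this] at h0
    exact hf0 (by simpa using h0)
  have hfa : homogeneousComponent a f ≠ 0 := by
    obtain ⟨s, hs, hsd⟩ := Finset.exists_mem_eq_sup f.support (by simpa using hf0)
      (fun s => s.degree)
    intro h
    have := congrArg (coeff s) h
    rw [coeff_homogeneousComponent] at this
    have hd : s.degree = a := by
      rw [ha, totalDegree_eq]
      rw [← hsd]; congr; funext s; rw [Finsupp.card_toMultiset]; rfl
    rw [if_pos hd] at this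
    exact (mem_support_iff.1 hs) (by simpa using this)
  obtain ⟨v, hv⟩ : ∃ v : Fin (k+1) → ℂ, eval v (homogeneousComponent a f) ≠ 0 := by
    by_contra! h
    exact hfa (MvPolynomial.funext (by simpa using h))
  obtain ⟨j, hj⟩ : ∃ j, v j ≠ 0 := by
    by_contra! h
    apply hv
    have hv0 : v = 0 := by funext j; exact h j
    rw [hv0, MvPolynomial.eval_zero]
    rw [constantCoeff_eq, coeff_homogeneousComponent, if_neg]
    simp; omega
  set z := (v j)⁻¹ • x j with hz
  let x' : Fin k → A := fun i => x (j.succAbove i) - v (j.succAbove i) • z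
  have hzx : z ∈ lspan x := Submodule.smul_mem _ _ (mem_lspan x j)
  refine ⟨x', fun i => sub_mem (mem_lspan x _) (Submodule.smul_mem _ _ hzx), ?_⟩
  set X' := lspan x'
  have hX : ∀ i, x i - v i • z ∈ X' := by
    intro i
    rcases Fin.eq_self_or_eq_succAbove j i with rfl | ⟨i, rfl⟩
    · simp [hz, smul_smul, hj]
    · exact mem_lspan x' i
  have hza : z ^ a ∈ EE z X' a a := by
    have h1 : aeval x f - (eval v (homogeneousComponent a f)) • z ^ a ∈ EE z X' a a := by
      have e1 : aeval x f = ∑ s ∈ f.support, coeff s f • aeval x (monomial s (1:ℂ)) := by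
        conv_lhs => rw [f.as_sum]
        rw [map_sum]
        refine Finset.sum_congr rfl fun s _ => ?_
        rw [← map_smul, smul_monomial, smul_eq_mul, mul_one]
      have e2 : eval v (homogeneousComponent a f) = ∑ s ∈ f.support,
          (if s.degree = a then coeff s f * eval v (monomial s (1:ℂ)) else 0) := by
        rw [homogeneousComponent_apply, map_sum, Finset.sum_filter]
        refine Finset.sum_congr rfl fun s _ => ?_
        split_ifs
        · rw [← smul_eval, smul_monomial, smul_eq_mul, mul_one]
        · rfl
      rw [e1, e2, Finset.sum_smul, ← Finset.sum_sub_distrib]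
      refine Submodule.sum_mem _ fun s hs => ?_
      have hsa : s.degree ≤ a := by
        have := le_totalDegree hs
        exact this
      have hm := nn_monomial x z X' v hX s
      split_ifs with hh
      · rw [mul_smul, ← smul_sub, ← hh]
        exact Submodule.smul_mem _ _ hm
      · rw [zero_smul, sub_zero]
        apply Submodule.smul_mem
        have : aeval x (monomial s (1:ℂ)) = (aeval x (monomial s (1:ℂ)) - (eval v (monomial s (1:ℂ))) • z ^ s.degree)
          + (eval v (monomial s (1:ℂ))) • z ^ s.degree := by abel
        rw [this]
        refine add_mem (EE_mono hsa hsa hm) (Submodule.smul_mem _ _ ?_)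
        exact EE_mono (by omega) hsa (EE_z s.degree)
    rw [hf, zero_sub] at h1
    have h2 := Submodule.smul_mem _ (-(eval v (homogeneousComponent a f))⁻¹) h1
    rwa [neg_smul, smul_neg, neg_neg, smul_smul, inv_mul_cancel₀ hv, one_smul] at h2
  have hstep : ∀ m, ∀ y ∈ lspan x, ∀ t ∈ EE z X' a m, y * t ∈ EE z X' a (m+1) := by
    intro m y hy t ht
    have hzt : z * t ∈ EE z X' a (m+1) := by
      refine Submodule.span_induction (p := fun t _ => z * t ∈ EE z X' a (m+1)) ?_ ?_ ?_ ?_ ht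
      · rintro _ ⟨i, j, w, hw, h1, h2, rfl⟩
        rw [← mul_assoc, ← pow_succ']
        by_cases hi : i + 1 < a
        · exact Submodule.subset_span ⟨i+1, j, w, hw, hi, by omega, rfl⟩
        · have : i + 1 = a := by omega
          rw [this]
          exact EE_mono le_rfl (by omega) (EE_mul (c := a) (by omega) hza (EE_w hw))
      · simp
      · intro x y _ _ h1 h2; rw [mul_add]; exact add_mem h1 h2
      · intro c x _ h1; rw [mul_smul_comm]; exact Submodule.smul_mem _ _ h1
    have hwt : ∀ w ∈ X', w * t ∈ EE z X' a (m+1) := by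
      intro w hw
      rw [add_comm]
      exact EE_mul (a := 1) (by omega) (EE_w (by simpa using hw)) ht
    refine Submodule.span_induction (p := fun y _ => y * t ∈ EE z X' a (m+1)) ?_ ?_ ?_ ?_ hy
    · rintro y (rfl | ⟨i, rfl⟩)
      · exact hwt 1 (one_mem_lspan _)
      · have : x i = (x i - v i • z) + v i • z := by abel
        rw [this, add_mul]
        refine add_mem (hwt _ (hX i)) ?_
        rw [smul_mul_assoc]
        exact Submodule.smul_mem _ _ hzt
    · simp
    · intro x y _ _ h1 h2; rw [add_mul]; exact add_mem h1 h2
    · intro c x _ h1; rw [smul_mul_assoc]; exact Submodule.smul_mem _ _ h1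
  refine ⟨Submodule.span ℂ ((fun i => z ^ i) '' (Finset.range a : Set ℕ)),
    Submodule.fg_span ((Finset.finite_toSet _).image _), fun M => ?_⟩
  have h1 : lspan x ^ M ≤ EE z X' a M := by
    induction M with
    | zero =>
      rw [pow_zero, Submodule.one_le]
      exact EE_mono ha1 le_rfl (by simpa using EE_z (z := z) (X := X') 0)
    | succ M ih =>
      rw [pow_succ', Submodule.mul_le]
      intro y hy t ht
      exact hstep M y hy t (ih ht)
  refine h1.trans ?_
  unfold EE
  rw [Submodule.span_le]
  rintro _ ⟨i, j, w, hw, h1, h2, rfl⟩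
  refine Submodule.mul_mem_mul (Submodule.subset_span ⟨i, by simpa using h1, rfl⟩) ?_
  exact sub_pow_mono (one_mem_lspan _) (by omega) hw

theorem nn_exists [Nontrivial A] {k : ℕ} (x : Fin k → A) :
    ∃ r, ∃ y : Fin r → A, (∀ i, y i ∈ lspan x) ∧ AlgebraicIndependent ℂ y ∧
      ∃ Z : Submodule ℂ A, Z.FG ∧ ∀ M, lspan x ^ M ≤ Z * lspan y ^ M := by
  induction k with
  | zero =>
    refine ⟨0, x, fun i => i.elim0, ?_, 1, ?_, fun M => by simp⟩
    · rw [algebraicIndependent_empty_type_iff]; exact (algebraMap ℂ A).injective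
    · exact ⟨{1}, by simp [Submodule.one_eq_span]⟩
  | succ k ih =>
    by_cases hx : AlgebraicIndependent ℂ x
    · refine ⟨k+1, x, mem_lspan x, hx, 1, ⟨{1}, by simp [Submodule.one_eq_span]⟩, fun M => by simp⟩
    · obtain ⟨x', hx', Z, hZ, h⟩ := nn_step x hx
      obtain ⟨r, y, hy, hyi, Z', hZ', h'⟩ := ih x'
      refine ⟨r, y, fun i => ?_, hyi, Z * Z', hZ.mul hZ', fun M => ?_⟩
      · refine (?_ : lspan x' ≤ lspan x) (hy i)
        unfold lspan
        rw [Submodule.span_le]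
        rintro _ (rfl | ⟨i, rfl⟩)
        · exact one_mem_lspan x
        · exact hx' i
      · rw [mul_assoc]
        exact (h M).trans (mul_le_mul_right (h' M) Z)
end NN


/-! ### Primitive element data -/

attribute [local instance] FractionRing.liftAlgebra FractionRing.isScalarTower_liftAlgebra in
theorem prim_data (B A : Type) [CommRing B] [IsDomain B] [IsIntegrallyClosed B] [CharZero B]
    [CommRing A] [IsDomain A] [Algebra B A] [FaithfulSMul B A] [Module.Finite B A] :
    ∃ u : A, ∃ q : B, q ≠ 0 ∧
      (∀ a : A, ∃ g : Polynomial B, g.degree < (minpoly B u).degree ∧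
        q • a = Polynomial.aeval u g) ∧
      ∃ s t : Polynomial B, ∃ ρ : B, ρ ≠ 0 ∧
        s * minpoly B u + t * Polynomial.derivative (minpoly B u) = Polynomial.C ρ := by
  classical
  set K := FractionRing B
  set L := FractionRing A
  have hint : Algebra.IsIntegral B A := inferInstance
  have hinjA : Function.Injective (algebraMap A L) := IsFractionRing.injective A L
  have hinjB : Function.Injective (algebraMap B K) := IsFractionRing.injective B K
  have hinjBA : Function.Injective (algebraMap B A) := FaithfulSMul.algebraMap_injective B A
  have hsurj : ∀ x : L, ∃ a : A, ∃ β : B, β ≠ 0 ∧ β • x = algebraMap A L a := by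
    intro x
    obtain ⟨a, b, hb, rfl⟩ := IsFractionRing.div_surjective (A := A) x
    obtain ⟨β, hβ, c, hc⟩ := (hint.isIntegral b).isAlgebraic.exists_nonzero_dvd hb
    refine ⟨a * c, β, hβ, ?_⟩
    have hb0 : algebraMap A L b ≠ 0 := by
      intro h; exact nonZeroDivisors.ne_zero hb (hinjA (by simpa using h))
    have : algebraMap B L β = algebraMap A L b * algebraMap A L c := by
      rw [← map_mul, ← hc, ← IsScalarTower.algebraMap_apply]
    rw [Algebra.smul_def, this, map_mul, mul_div_assoc', div_eq_iff hb0]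
    ring
  have hfin : FiniteDimensional K L := by
    obtain ⟨G, hG⟩ := (Module.Finite.fg_top : (⊤ : Submodule B A).FG)
    refine ⟨⟨G.image (algebraMap A L), ?_⟩⟩
    rw [eq_top_iff]
    intro x _
    obtain ⟨a, β, hβ, h⟩ := hsurj x
    have hβ' : algebraMap B K β ≠ 0 := by
      intro h; exact hβ (hinjB (by simpa using h))
    have hx : x = (algebraMap B K β)⁻¹ • algebraMap A L a := by
      rw [← h, ← algebraMap_smul K β x, smul_smul, inv_mul_cancel₀ hβ', one_smul]
    rw [hx]
    apply Submodule.smul_mem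
    have ha : a ∈ Submodule.span B (G : Set A) := by rw [hG]; trivial
    refine Submodule.span_induction (p := fun a _ => algebraMap A L a ∈ Submodule.span K (↑(G.image (algebraMap A L)) : Set L)) ?_ ?_ ?_ ?_ ha
    · intro a ha; exact Submodule.subset_span (Finset.mem_coe.2 (Finset.mem_image_of_mem _ ha))
    · simp
    · intro a b _ _ h1 h2; rw [map_add]; exact add_mem h1 h2
    · intro c a _ h1
      have : algebraMap A L (c • a) = (algebraMap B K c) • algebraMap A L a := by
        rw [algebraMap_smul, Algebra.smul_def, map_mul, ← IsScalarTower.algebraMap_apply,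
          Algebra.smul_def]
      rw [this]; exact Submodule.smul_mem _ _ h1
  have : CharZero K := charZero_of_injective_algebraMap hinjB
  obtain ⟨u0, hu0⟩ := Field.exists_primitive_element K L
  obtain ⟨u, β, hβ, hu⟩ := hsurj u0
  have hβ' : algebraMap B K β ≠ 0 := by
    intro h; exact hβ (hinjB (by simpa using h))
  have htop : IntermediateField.adjoin K {algebraMap A L u} = ⊤ := by
    rw [eq_top_iff, ← hu0, IntermediateField.adjoin_simple_le_iff]
    have hx : u0 = (algebraMap B K β)⁻¹ • algebraMap A L u := by
      rw [← hu, ← algebraMap_smul K β u0, smul_smul, inv_mul_cancel₀ hβ', one_smul]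
    rw [hx]
    exact IntermediateField.smul_mem _ (IntermediateField.mem_adjoin_simple_self K _)
  have hui : IsIntegral B u := hint.isIntegral u
  have hmin : minpoly K (algebraMap A L u) = (minpoly B u).map (algebraMap B K) :=
    minpoly.isIntegrallyClosed_eq_field_fractions K L hui
  have hone : ∀ a : A, ∃ q : B, q ≠ 0 ∧ ∃ g : Polynomial B, g.degree < (minpoly B u).degree ∧
        q • a = Polynomial.aeval u g := by
    intro a
    have h1 : algebraMap A L a ∈ (IntermediateField.adjoin K {algebraMap A L u}).toSubalgebra := by
      rw [htop]; trivial
    rw [IntermediateField.adjoin_simple_toSubalgebra_of_isAlgebraic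
      (Algebra.IsAlgebraic.isAlgebraic _), Algebra.adjoin_singleton_eq_range_aeval] at h1
    obtain ⟨p, hp⟩ := h1
    have hp : Polynomial.aeval (algebraMap A L u) p = algebraMap A L a := hp
    have hmon : (minpoly K (algebraMap A L u)).Monic := minpoly.monic (Algebra.IsIntegral.isIntegral _)
    set p' := p %ₘ (minpoly K (algebraMap A L u)) with hp'
    have hp'a : Polynomial.aeval (algebraMap A L u) p' = algebraMap A L a := by
      rw [hp', Polynomial.aeval_modByMonic_eq_self_of_root (minpoly.aeval _ _), hp]
    have hp'd : p'.degree < (minpoly K (algebraMap A L u)).degree := Polynomial.degree_modByMonic_lt _ hmon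
    obtain ⟨b, hb, hb2⟩ := IsLocalization.integerNormalization_spec (nonZeroDivisors B) p'
    refine ⟨b, nonZeroDivisors.ne_zero hb, IsLocalization.integerNormalization (nonZeroDivisors B) p', ?_, ?_⟩
    · rw [hmin, Polynomial.degree_map_eq_of_injective hinjB] at hp'd
      refine lt_of_le_of_lt ?_ hp'd
      exact Polynomial.degree_mono (IsLocalization.integerNormalization_support _ _)
    · apply hinjA
      rw [← Polynomial.aeval_algebraMap_apply, ← Polynomial.aeval_map_algebraMap K, hb2,
        ← algebraMap_smul K b p', Polynomial.smul_eq_C_mul, map_mul, Polynomial.aeval_C, hp'a,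
        Algebra.smul_def, map_mul, ← IsScalarTower.algebraMap_apply,
        ← IsScalarTower.algebraMap_apply]
  refine ⟨u, ?_⟩
  have hex : ∃ q : B, q ≠ 0 ∧ (∀ a : A, ∃ g : Polynomial B, g.degree < (minpoly B u).degree ∧
        q • a = Polynomial.aeval u g) := by
    obtain ⟨G, hG⟩ := (Module.Finite.fg_top : (⊤ : Submodule B A).FG)
    choose qq hqq gg hgg hgq using hone
    refine ⟨∏ a ∈ G, qq a, Finset.prod_ne_zero_iff.2 fun a _ => hqq a, ?_⟩
    intro a
    have ha : a ∈ Submodule.span B (G : Set A) := by rw [hG]; trivial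
    refine Submodule.span_induction (p := fun a _ => ∃ g : Polynomial B, g.degree < (minpoly B u).degree ∧ (∏ a ∈ G, qq a) • a = Polynomial.aeval u g) ?_ ?_ ?_ ?_ ha
    · intro a ha
      refine ⟨(∏ a ∈ G.erase a, qq a) • gg a, lt_of_le_of_lt (Polynomial.degree_smul_le _ _) (hgg a), ?_⟩
      rw [map_smul, ← hgq, smul_smul, Finset.prod_erase_mul _ _ ha]
    · exact ⟨0, by simpa [bot_lt_iff_ne_bot] using minpoly.ne_zero hui, by simp⟩
    · rintro a b _ _ ⟨g, h1, h2⟩ ⟨g', h1', h2'⟩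
      exact ⟨g + g', lt_of_le_of_lt (Polynomial.degree_add_le _ _) (max_lt h1 h1'), by
        rw [smul_add, h2, h2', map_add]⟩
    · rintro c a _ ⟨g, h1, h2⟩
      exact ⟨c • g, lt_of_le_of_lt (Polynomial.degree_smul_le _ _) h1, by
        rw [smul_comm, h2, map_smul]⟩
  obtain ⟨q, hq, hq'⟩ := hex
  refine ⟨q, hq, hq', ?_⟩
  have hsep : (minpoly K (algebraMap A L u)).Separable := Algebra.IsSeparable.isSeparable K _
  obtain ⟨s, t, hst⟩ := hsep
  obtain ⟨b, hb, hb2⟩ := IsLocalization.integerNormalization_spec (nonZeroDivisors B) s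
  obtain ⟨c, hc, hc2⟩ := IsLocalization.integerNormalization_spec (nonZeroDivisors B) t
  refine ⟨c • IsLocalization.integerNormalization (nonZeroDivisors B) s, b • IsLocalization.integerNormalization (nonZeroDivisors B) t, b * c,
    mul_ne_zero (nonZeroDivisors.ne_zero hb) (nonZeroDivisors.ne_zero hc), ?_⟩
  apply Polynomial.map_injective _ hinjB
  rw [hmin] at hst
  simp only [Polynomial.map_add, Polynomial.map_mul, Polynomial.map_smul, hb2, hc2,
    Polynomial.map_C, ← Polynomial.derivative_map]
  have e : ∀ (b : B) (p : Polynomial K), b • p = Polynomial.C (algebraMap B K b) * p := by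
    intro b p; rw [← algebraMap_smul K b p, Polynomial.smul_eq_C_mul]
  simp only [e, Polynomial.smul_eq_C_mul, map_mul]
  linear_combination (Polynomial.C (algebraMap B K b) * Polynomial.C (algebraMap B K c)) * hst


/-! ### Embedding in power series, growth -/

lemma exists_eval_ne {r : ℕ} (p : MvPolynomial (Fin r) ℂ) (hp : p ≠ 0) : ∃ c, eval c p ≠ 0 := by
  by_contra! h
  exact hp (MvPolynomial.funext (by simpa using h))

section emb
variable {r : ℕ} {A : Type} [CommRing A] [IsDomain A] [Algebra ℂ A]
  [Algebra (MvPolynomial (Fin r) ℂ) A] [IsScalarTower ℂ (MvPolynomial (Fin r) ℂ) A]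
  [FaithfulSMul (MvPolynomial (Fin r) ℂ) A] [Module.Finite (MvPolynomial (Fin r) ℂ) A]

lemma shift_inj (c : Fin r → ℂ) : Function.Injective
    (aeval (fun i => MvPowerSeries.C (c i) + MvPowerSeries.X i) :
      MvPolynomial (Fin r) ℂ →ₐ[ℂ] MvPowerSeries (Fin r) ℂ) := by
  have e : (aeval (fun i => MvPowerSeries.C (c i) + MvPowerSeries.X i) :
      MvPolynomial (Fin r) ℂ →ₐ[ℂ] MvPowerSeries (Fin r) ℂ) =
      (MvPolynomial.coeToMvPowerSeries.algHom ℂ).comp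
        (aeval (fun i => C (c i) + X i)) := by
    ext i : 1
    simp [MvPolynomial.coeToMvPowerSeries.algHom_apply]
  have e2 : (aeval (fun i => X i - C (c i)) : MvPolynomial (Fin r) ℂ →ₐ[ℂ] _).comp
      (aeval (fun i => C (c i) + X i)) = AlgHom.id ℂ (MvPolynomial (Fin r) ℂ) := by
    ext i : 1
    simp [algebraMap_eq]
  intro p q hpq
  rw [e] at hpq
  simp only [AlgHom.comp_apply, MvPolynomial.coeToMvPowerSeries.algHom_apply, Algebra.algebraMap_self,
    MvPowerSeries.map_id, RingHom.id_apply] at hpq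
  have h := MvPolynomial.coe_injective _ _ hpq
  have := congrArg (aeval (fun i => X i - C (c i)) : MvPolynomial (Fin r) ℂ →ₐ[ℂ] MvPolynomial (Fin r) ℂ) h
  rwa [← AlgHom.comp_apply, ← AlgHom.comp_apply, e2] at this

theorem emb_exists : ∃ c : Fin r → ℂ, ∃ ψ : A →ₐ[ℂ] MvPowerSeries (Fin r) ℂ,
    Function.Injective ψ ∧ ∀ i, ψ (algebraMap (MvPolynomial (Fin r) ℂ) A (X i)) =
      MvPowerSeries.C (c i) + MvPowerSeries.X i := by
  classical
  obtain ⟨u, q, hq, hqa, s, t, ρ, hρ, hst⟩ := prim_data (MvPolynomial (Fin r) ℂ) A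
  set f := minpoly (MvPolynomial (Fin r) ℂ) u with hf
  have hui : IsIntegral (MvPolynomial (Fin r) ℂ) u := Algebra.IsIntegral.isIntegral u
  obtain ⟨c, hc⟩ := exists_eval_ne (q * ρ) (mul_ne_zero hq hρ)
  rw [map_mul] at hc
  have hcq : eval c q ≠ 0 := left_ne_zero_of_mul hc
  have hcρ : eval c ρ ≠ 0 := right_ne_zero_of_mul hc
  set φ : MvPolynomial (Fin r) ℂ →ₐ[ℂ] MvPowerSeries (Fin r) ℂ :=
    aeval (fun i => MvPowerSeries.C (c i) + MvPowerSeries.X i) with hφ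
  have hφi : Function.Injective φ := shift_inj c
  have hφc : ∀ p, MvPowerSeries.constantCoeff (φ p) = eval c p := by
    intro p
    have : (MvPowerSeries.constantCoeff : MvPowerSeries (Fin r) ℂ →+* ℂ).comp φ.toRingHom = eval c := by
      apply MvPolynomial.ringHom_ext
      · intro z; simp [hφ, MvPowerSeries.algebraMap_apply]
      · intro i; simp [hφ]
    exact congrArg (fun h => h p) this
  have hmon : f.Monic := minpoly.monic hui
  obtain ⟨lam, hlam⟩ : ∃ lam, (f.map (eval c)).eval lam = 0 := by
    apply IsAlgClosed.exists_root
    rw [hmon.degree_map]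
    exact (minpoly.degree_pos hui).ne'
  have hder : (f.derivative.map (eval c)).eval lam ≠ 0 := by
    intro h
    have := congrArg (fun p => (p.map (eval c)).eval lam) hst
    simp only [Polynomial.map_add, Polynomial.map_mul, Polynomial.eval_add, Polynomial.eval_mul,
      hlam, h, Polynomial.map_C, Polynomial.eval_C] at this
    exact hcρ (by simpa using this.symm)
  have hcc : ∀ g : Polynomial (MvPolynomial (Fin r) ℂ),
      MvPowerSeries.constantCoeff ((g.map φ.toRingHom).eval (MvPowerSeries.C lam))
        = (g.map (eval c)).eval lam := by
    intro g
    rw [Polynomial.eval_map, Polynomial.hom_eval₂, Polynomial.eval_map]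
    congr 1
    · exact RingHom.ext (fun p => hφc p)
  obtain ⟨uh, huh⟩ := hensel_mv (f.map φ.toRingHom) lam (by rw [hcc, hlam])
    (by rw [Polynomial.derivative_map, hcc]; exact hder)
  set Θ : Polynomial (MvPolynomial (Fin r) ℂ) →+* MvPowerSeries (Fin r) ℂ :=
    Polynomial.eval₂RingHom φ.toRingHom uh with hΘ
  have hΘf : Θ f = 0 := by rw [← huh, Polynomial.eval_map]; rfl
  have hΘC : ∀ p, Θ (Polynomial.C p) = φ p := by intro p; simp [hΘ]
  have hΘ0 : ∀ g, Polynomial.aeval u g = 0 → Θ g = 0 := by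
    intro g hg
    obtain ⟨h, rfl⟩ := minpoly.isIntegrallyClosed_dvd hui hg
    rw [map_mul, ← hf, hΘf, zero_mul]
  have hΘe : ∀ g h, Polynomial.aeval u g = Polynomial.aeval u h → Θ g = Θ h := by
    intro g h hgh
    rw [← sub_eq_zero, ← map_sub]
    exact hΘ0 _ (by rw [map_sub, hgh, sub_self])
  choose g _ hg using hqa
  have hΘi : ∀ h, Θ h = 0 → Polynomial.aeval u h = 0 := by
    intro h hh
    by_contra hne
    obtain ⟨β, hβ, w, hw⟩ := (Algebra.IsIntegral.isIntegral (R := MvPolynomial (Fin r) ℂ)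
      (Polynomial.aeval u h)).isAlgebraic.exists_nonzero_dvd (mem_nonZeroDivisors_of_ne_zero hne)
    have : Θ (Polynomial.C (q * β)) = Θ (h * g w) := by
      apply hΘe
      rw [map_mul (Polynomial.aeval u) h, ← hg, Polynomial.aeval_C, map_mul, hw, Algebra.smul_def]; ring
    rw [map_mul Θ, hh, zero_mul, hΘC] at this
    exact mul_ne_zero hq hβ (hφi (by simpa using this))
  obtain ⟨v, hv⟩ : ∃ v, φ q * v = 1 := ⟨(φ q)⁻¹, MvPowerSeries.mul_inv_cancel _ (by rw [hφc]; exact hcq)⟩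
  have hval : ∀ p : MvPolynomial (Fin r) ℂ, Θ (g (algebraMap _ A p)) * v = φ p := by
    intro p
    have : Θ (g (algebraMap _ A p)) = φ q * φ p := by
      rw [← map_mul, ← hΘC]
      apply hΘe
      rw [← hg, Polynomial.aeval_C, Algebra.smul_def, map_mul]
    rw [this]
    linear_combination φ p * hv
  let ψ : A →ₐ[ℂ] MvPowerSeries (Fin r) ℂ :=
    { toFun := fun a => Θ (g a) * v
      map_one' := by simpa using hval 1
      map_zero' := by simpa using hval 0
      map_mul' := by
        intro a b
        have : φ q * Θ (g (a * b)) = Θ (g a) * Θ (g b) := by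
          rw [← hΘC, ← map_mul, ← map_mul]
          apply hΘe
          rw [map_mul, map_mul, ← hg, ← hg, ← hg, Polynomial.aeval_C]
          simp only [Algebra.smul_def]; ring
        linear_combination v * v * this + (- Θ (g (a*b)) * v) * hv
      map_add' := by
        intro a b
        have : Θ (g (a + b)) = Θ (g a) + Θ (g b) := by
          rw [← map_add]
          apply hΘe
          rw [map_add, ← hg, ← hg, ← hg, smul_add]
        rw [this]; ring
      commutes' := by
        intro z
        have := hval (C z)
        rw [← algebraMap_eq, ← IsScalarTower.algebraMap_apply] at this
        rw [this, AlgHom.commutes] }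
  refine ⟨c, ψ, ?_, ?_⟩
  · rw [injective_iff_map_eq_zero]
    intro a ha
    have h1 : Θ (g a) * v = 0 := ha
    have h2 : Θ (g a) = 0 := by linear_combination φ q * h1 - Θ (g a) * hv
    have h3 := hΘi _ h2
    rw [← hg, Algebra.smul_def, mul_eq_zero] at h3
    rcases h3 with h3 | h3
    · exact absurd (FaithfulSMul.algebraMap_injective (MvPolynomial (Fin r) ℂ) A (by simpa using h3)) hq
    · exact h3
  · intro i
    have : ψ (algebraMap (MvPolynomial (Fin r) ℂ) A (X i)) = φ (X i) := hval (X i)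
    rw [this, hφ, aeval_X]

lemma lexOrder_monomial (b : Fin r →₀ ℕ) :
    (MvPowerSeries.monomial b (1:ℂ)).lexOrder = ((toLex b : Lex (Fin r →₀ ℕ)) : WithTop _) := by
  classical
  apply le_antisymm
  · apply MvPowerSeries.lexOrder_le_of_coeff_ne_zero
    simp
  · rw [MvPowerSeries.le_lexOrder_iff]
    intro d hd
    rw [MvPowerSeries.coeff_monomial, if_neg]
    rintro rfl
    exact lt_irrefl _ hd

lemma lexOrder_pow' {w : MvPowerSeries (Fin r) ℂ} {s : Fin r →₀ ℕ}
    (h : w.lexOrder = ((toLex s : Lex (Fin r →₀ ℕ)) : WithTop _)) (k : ℕ) :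
    (w ^ k).lexOrder = ((toLex (k • s) : Lex (Fin r →₀ ℕ)) : WithTop _) := by
  induction k with
  | zero =>
    rw [pow_zero, zero_smul]
    exact lexOrder_monomial 0
  | succ k ih =>
    rw [pow_succ, MvPowerSeries.lexOrder_mul, ih, h, succ_nsmul]
    rfl

theorem growth_alg (U : Submodule ℂ A) (hU : U.FG) (k : ℕ) (hk : 0 < k) :
    k ^ r * Module.finrank ℂ U ≤ Module.finrank ℂ
      ↥(U ^ k * lspan (fun i => algebraMap (MvPolynomial (Fin r) ℂ) A (X i)) ^ (r * k)) := by
  classical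
  obtain ⟨c, ψ, hψ, hψX⟩ := emb_exists (r := r) (A := A)
  set y := (fun i => algebraMap (MvPolynomial (Fin r) ℂ) A (X i))
  have hfr : ∀ W : Submodule ℂ A, Module.finrank ℂ (W.map ψ.toLinearMap) = Module.finrank ℂ W :=
    fun W => (LinearEquiv.finrank_eq (Submodule.equivMapOfInjective ψ.toLinearMap hψ W)).symm
  have hYfg : (lspan y).FG := Submodule.fg_span ((finite_range _).insert _)
  set W := U ^ k * lspan y ^ (r * k)
  have hWfg : W.FG := (hU.pow k).mul (hYfg.pow _)
  rw [← hfr W, ← hfr U]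
  have : FiniteDimensional ℂ (U.map ψ.toLinearMap) := Module.Finite.iff_fg.2 (hU.map _)
  have : FiniteDimensional ℂ (W.map ψ.toLinearMap) := Module.Finite.iff_fg.2 (hWfg.map _)
  obtain ⟨S, hSc, hS⟩ := lex_exists (U.map ψ.toLinearMap)
  let ι : (Fin r →₀ ℕ) × (Fin r → Fin k) → (Fin r →₀ ℕ) :=
    fun p => k • p.1 + Finsupp.equivFunOnFinite.symm (fun i => (p.2 i : ℕ))
  have hι : Function.Injective ι := by
    rintro ⟨a, b⟩ ⟨a', b'⟩ h
    have h2 : ∀ i, k * a i + (b i : ℕ) = k * a' i + (b' i : ℕ) := by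
      intro i
      have := DFunLike.congr_fun h i
      simpa [ι] using this
    have h3 : ∀ i, (b i : ℕ) = b' i := by
      intro i
      have := congrArg (· % k) (h2 i)
      simpa [Nat.add_mod, Nat.mod_eq_of_lt (b i).2, Nat.mod_eq_of_lt (b' i).2] using this
    have h4 : ∀ i, a i = a' i := by
      intro i
      have := h2 i
      rw [h3 i] at this
      exact Nat.eq_of_mul_eq_mul_left hk (by omega)
    refine Prod.ext (Finsupp.ext h4) (funext fun i => Fin.ext (h3 i))
  have hX : ∀ i, (MvPowerSeries.X i : MvPowerSeries (Fin r) ℂ) ∈ (lspan y).map ψ.toLinearMap := by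
    intro i
    refine ⟨y i - algebraMap ℂ A (c i), sub_mem (mem_lspan y i) ?_, ?_⟩
    · rw [Algebra.algebraMap_eq_smul_one]; exact Submodule.smul_mem _ _ (one_mem_lspan y)
    · have : ψ (y i - algebraMap ℂ A (c i)) = MvPowerSeries.X i := by
        rw [map_sub, hψX, AlgHom.commutes, MvPowerSeries.algebraMap_apply]; simp
      exact this
  have h1X : (1 : MvPowerSeries (Fin r) ℂ) ∈ (lspan y).map ψ.toLinearMap :=
    ⟨1, one_mem_lspan y, map_one ψ⟩
  have := lex_count (W.map ψ.toLinearMap) ((S ×ˢ Finset.univ).image ι) (by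
    intro s hs
    simp only [Finset.mem_image, Finset.mem_product, Finset.mem_univ, and_true] at hs
    obtain ⟨⟨a, b⟩, ha, rfl⟩ := hs
    obtain ⟨w, hw, hwl⟩ := hS a ha
    refine ⟨w ^ k * MvPowerSeries.monomial (Finsupp.equivFunOnFinite.symm (fun i => (b i : ℕ))) 1, ?_, ?_⟩
    · rw [Submodule.map_mul, Submodule.map_pow, Submodule.map_pow]
      refine Submodule.mul_mem_mul (Submodule.pow_mem_pow _ hw k) ?_
      have e : (MvPowerSeries.monomial (Finsupp.equivFunOnFinite.symm (fun i => (b i : ℕ))) 1 : MvPowerSeries (Fin r) ℂ)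
          = ∏ i : Fin r, (MvPowerSeries.X i : MvPowerSeries (Fin r) ℂ) ^ (b i : ℕ) := by
        rw [MvPowerSeries.monomial_one_eq, Finsupp.prod_fintype _ _ (by simp)]; rfl
      rw [e]
      have h2 : ∀ T : Finset (Fin r), ∏ i ∈ T, (MvPowerSeries.X i : MvPowerSeries (Fin r) ℂ) ^ (b i : ℕ) ∈
          ((lspan y).map ψ.toLinearMap) ^ (T.card * k) := by
        intro T
        induction T using Finset.induction_on with
        | empty => simp [Submodule.one_le.1 le_rfl]
        | insert i T hi ih =>
          rw [Finset.prod_insert hi, Finset.card_insert_of_notMem hi, add_mul, one_mul, add_comm,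
            pow_add]
          exact Submodule.mul_mem_mul (sub_pow_mono h1X (b i).2.le (Submodule.pow_mem_pow _ (hX i) _)) ih
      simpa using h2 Finset.univ
    · rw [MvPowerSeries.lexOrder_mul, lexOrder_pow' hwl, lexOrder_monomial]
      rfl)
  rw [Finset.card_image_of_injective _ hι, Finset.card_product] at this
  rw [hSc]
  simpa [mul_comm] using this
end emb


/-! ### Hilbert functions of ideals -/

section generic
variable {A : Type*} [CommRing A] [Algebra ℂ A]

lemma rtd_mul {k a b : ℕ} : restrictTotalDegree (Fin k) ℂ a * restrictTotalDegree (Fin k) ℂ b ≤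
    restrictTotalDegree (Fin k) ℂ (a + b) := by
  rw [Submodule.mul_le]
  intro p hp q hq
  rw [mem_restrictTotalDegree] at *
  exact (totalDegree_mul p q).trans (add_le_add hp hq)

lemma lspan_pow_eq {k : ℕ} (x : Fin k → A) (m : ℕ) :
    lspan x ^ m = (restrictTotalDegree (Fin k) ℂ m).map (aeval x : MvPolynomial (Fin k) ℂ →ₐ[ℂ] A).toLinearMap := by
  apply le_antisymm
  · induction m with
    | zero =>
      rw [pow_zero, Submodule.one_le]
      exact ⟨1, by simp [mem_restrictTotalDegree], by simp⟩
    | succ m ih =>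
      rw [pow_succ]
      refine (mul_le_mul' ih (?_ : _ ≤ (restrictTotalDegree (Fin k) ℂ 1).map (aeval x : MvPolynomial (Fin k) ℂ →ₐ[ℂ] A).toLinearMap)).trans ?_
      · rw [lspan, Submodule.span_le]
        rintro z hz
        rcases hz with rfl | ⟨i, rfl⟩
        · exact ⟨1, by simp [mem_restrictTotalDegree], by simp⟩
        · exact ⟨X i, by simp [mem_restrictTotalDegree], by simp⟩
      · rw [← Submodule.map_mul]
        exact Submodule.map_mono rtd_mul
  · rw [restrictTotalDegree, restrictSupport_eq_span, Submodule.map_span, Submodule.span_le]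
    rintro _ ⟨_, ⟨s, hs, rfl⟩, rfl⟩
    have : aeval x (monomial s (1:ℂ)) ∈ lspan x ^ (s.sum fun _ e => e) := by
      rw [aeval_monomial, map_one, one_mul]
      unfold Finsupp.prod Finsupp.sum
      induction s.support using Finset.induction_on with
      | empty => simp [Submodule.one_le.1 le_rfl]
      | insert i T hi ih =>
        rw [Finset.prod_insert hi, Finset.sum_insert hi, pow_add]
        exact Submodule.mul_mem_mul (Submodule.pow_mem_pow _ (mem_lspan x i) _) ih
    exact sub_pow_mono (one_mem_lspan x) hs this

lemma finrank_rtd_le (k m : ℕ) : Module.finrank ℂ (restrictTotalDegree (Fin k) ℂ m) ≤ (m + 1) ^ k := by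
  classical
  have b := basisRestrictSupport ℂ { n : Fin k →₀ ℕ | (n.sum fun _ e => e) ≤ m }
  let f : { n : Fin k →₀ ℕ | (n.sum fun _ e => e) ≤ m } → (Fin k → Fin (m+1)) :=
    fun s i => ⟨s.1 i, by
      have h : s.1.sum (fun _ e => e) ≤ m := s.2
      rw [Finsupp.sum_fintype _ _ (by simp)] at h
      have := Finset.single_le_sum (f := fun i => s.1 i) (fun _ _ => Nat.zero_le _) (Finset.mem_univ i)
      omega⟩
  have hf : Function.Injective f := by
    intro s t h
    apply Subtype.ext
    ext i
    have := congrFun h i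
    simpa [f] using this
  have e := Module.finrank_eq_nat_card_basis b
  have h2 := Nat.card_le_card_of_injective f hf
  have : Module.finrank ℂ (restrictTotalDegree (Fin k) ℂ m) ≤ Nat.card (Fin k → Fin (m+1)) := by
    rw [← e] at h2; exact h2
  simpa using this

lemma lspan_fg {k : ℕ} (x : Fin k → A) : (lspan x).FG :=
  Submodule.fg_span ((finite_range _).insert _)

lemma finrank_lspan_pow_le {k : ℕ} (x : Fin k → A) (m : ℕ) :
    Module.finrank ℂ ↥(lspan x ^ m) ≤ (m + 1) ^ k := by
  rw [lspan_pow_eq]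
  exact (Submodule.finrank_map_le _ _).trans (finrank_rtd_le k m)

lemma finrank_mul_le' (U W : Submodule ℂ A) (hU : U.FG) (hW : W.FG) :
    Module.finrank ℂ ↥(U * W) ≤ Module.finrank ℂ U * Module.finrank ℂ W := by
  have : Module.Finite ℂ U := Module.Finite.iff_fg.2 hU
  have : Module.Finite ℂ W := Module.Finite.iff_fg.2 hW
  rw [← Submodule.mulMap_range, ← Module.finrank_tensorProduct]
  exact LinearMap.finrank_range_le _

lemma finrank_mono_fg {U W : Submodule ℂ A} (hW : W.FG) (h : U ≤ W) :
    Module.finrank ℂ U ≤ Module.finrank ℂ W := by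
  have : Module.Finite ℂ W := Module.Finite.iff_fg.2 hW
  exact Submodule.finrank_mono h

lemma algindep_count {a : ℕ} (z : Fin a → A) (hz : AlgebraicIndependent ℂ z) (M : ℕ) :
    (M + 1) ^ a ≤ Module.finrank ℂ ↥(lspan z ^ (a * M)) := by
  classical
  have hinj : Function.Injective (aeval z : MvPolynomial (Fin a) ℂ →ₐ[ℂ] A) := hz
  have hfg : (lspan z ^ (a * M)).FG := (lspan_fg z).pow _
  have : Module.Finite ℂ ↥(lspan z ^ (a * M)) := Module.Finite.iff_fg.2 hfg
  let g : (Fin a → Fin (M+1)) → (Fin a →₀ ℕ) := fun b => Finsupp.equivFunOnFinite.symm (fun i => (b i : ℕ))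
  have hg : Function.Injective g := by
    intro b b' h
    funext i
    have := DFunLike.congr_fun h i
    exact Fin.ext (by simpa [g] using this)
  have hmem : ∀ b, aeval z (monomial (g b) (1:ℂ)) ∈ lspan z ^ (a * M) := by
    intro b
    rw [lspan_pow_eq]
    refine ⟨_, ?_, rfl⟩
    simp only [SetLike.mem_coe, mem_restrictTotalDegree]
    rw [totalDegree_monomial _ one_ne_zero, Finsupp.sum_fintype _ _ (by simp)]
    calc ∑ i, g b i ≤ ∑ i : Fin a, M := Finset.sum_le_sum (fun i _ => by
          have := (b i).2; simp [g]; omega)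
      _ = a * M := by simp
  have hli : LinearIndependent ℂ (fun b => (⟨_, hmem b⟩ : ↥(lspan z ^ (a * M)))) := by
    apply LinearIndependent.of_comp (lspan z ^ (a * M)).subtype
    have h1 : LinearIndependent ℂ (fun s : Fin a →₀ ℕ => (monomial s (1:ℂ))) := by
      have := (basisMonomials (Fin a) ℂ).linearIndependent
      simpa using this
    have h2 := (h1.comp g hg).map' (aeval z : MvPolynomial (Fin a) ℂ →ₐ[ℂ] A).toLinearMap
      (LinearMap.ker_eq_bot.2 hinj)
    exact h2
  have := hli.fintype_card_le_finrank
  simpa using this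

lemma nn_finite {r : ℕ} {y : Fin r → A} {Z : Submodule ℂ A} (hZ : Z.FG)
    (h : ∀ a, ∃ M, a ∈ Z * lspan y ^ M) :
    letI : Algebra (MvPolynomial (Fin r) ℂ) A := (aeval y).toAlgebra
    Module.Finite (MvPolynomial (Fin r) ℂ) A := by
  let _ : Algebra (MvPolynomial (Fin r) ℂ) A := (aeval y).toAlgebra
  obtain ⟨S, hS⟩ := hZ
  refine ⟨⟨S, ?_⟩⟩
  rw [eq_top_iff]
  rintro a -
  obtain ⟨M, h1⟩ := h a
  refine Submodule.mul_induction_on h1 ?_ (fun _ _ => add_mem)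
  intro z hz w hw
  rw [lspan_pow_eq] at hw
  obtain ⟨b, -, rfl⟩ := hw
  rw [mul_comm]
  have : (aeval y).toLinearMap b * z = b • z := by rw [Algebra.smul_def]; rfl
  rw [this]
  apply Submodule.smul_mem
  rw [← hS] at hz
  refine Submodule.span_induction (p := fun z _ => z ∈ Submodule.span (MvPolynomial (Fin r) ℂ) (S : Set A))
    (fun x hx => Submodule.subset_span hx) (zero_mem _) (fun _ _ _ _ => add_mem) ?_ hz
  intro c x _ hx
  have : c • x = (C c : MvPolynomial (Fin r) ℂ) • x := by
    rw [Algebra.smul_def, Algebra.smul_def]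
    congr 1
    exact (AlgHom.commutes (aeval y : MvPolynomial (Fin r) ℂ →ₐ[ℂ] _) c).symm
  rw [this]
  exact Submodule.smul_mem _ _ hx

lemma growth_gen {A : Type} [CommRing A] [IsDomain A] [Algebra ℂ A] {r : ℕ} {y : Fin r → A}
    (hi : AlgebraicIndependent ℂ y) {Z : Submodule ℂ A} (hZ : Z.FG)
    (h : ∀ a, ∃ M, a ∈ Z * lspan y ^ M) (U : Submodule ℂ A) (hU : U.FG) (k : ℕ) (hk : 0 < k) :
    k ^ r * Module.finrank ℂ U ≤ Module.finrank ℂ ↥(U ^ k * lspan y ^ (r * k)) := by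
  let _ : Algebra (MvPolynomial (Fin r) ℂ) A := (aeval y).toAlgebra
  have : Module.Finite (MvPolynomial (Fin r) ℂ) A := nn_finite hZ h
  have : IsScalarTower ℂ (MvPolynomial (Fin r) ℂ) A :=
    IsScalarTower.of_algebraMap_eq (fun c => (AlgHom.commutes (aeval y : MvPolynomial (Fin r) ℂ →ₐ[ℂ] _) c).symm)
  have : FaithfulSMul (MvPolynomial (Fin r) ℂ) A :=
    (faithfulSMul_iff_algebraMap_injective _ _).2 hi
  have h1 := growth_alg (r := r) U hU k hk
  have e : (fun i => algebraMap (MvPolynomial (Fin r) ℂ) A (X i)) = y := by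
    funext i; exact aeval_X y i
  rwa [e] at h1
end generic

section HF
variable {n : ℕ}

def Aq (I : Ideal (MvPolynomial (Fin n) ℂ)) (m : ℕ) : Submodule ℂ (MvPolynomial (Fin n) ℂ ⧸ I) :=
  (restrictTotalDegree (Fin n) ℂ m).map (Ideal.Quotient.mkₐ ℂ I).toLinearMap

def HF (I : Ideal (MvPolynomial (Fin n) ℂ)) (m : ℕ) : ℕ := Module.finrank ℂ (Aq I m)

def xb (I : Ideal (MvPolynomial (Fin n) ℂ)) : Fin n → MvPolynomial (Fin n) ℂ ⧸ I :=
  fun i => Ideal.Quotient.mk I (X i)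

lemma aeval_xb (I : Ideal (MvPolynomial (Fin n) ℂ)) :
    (aeval (xb I) : MvPolynomial (Fin n) ℂ →ₐ[ℂ] _) = Ideal.Quotient.mkₐ ℂ I := by
  ext i; simp [xb]

lemma Aq_eq (I : Ideal (MvPolynomial (Fin n) ℂ)) (m : ℕ) : Aq I m = lspan (xb I) ^ m := by
  rw [lspan_pow_eq, aeval_xb]; rfl

lemma Aq_fg (I : Ideal (MvPolynomial (Fin n) ℂ)) (m : ℕ) : (Aq I m).FG := by
  rw [Aq_eq]; exact (lspan_fg _).pow _

instance (I : Ideal (MvPolynomial (Fin n) ℂ)) (m : ℕ) : Module.Finite ℂ (Aq I m) :=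
  Module.Finite.iff_fg.2 (Aq_fg I m)

lemma Aq_mono (I : Ideal (MvPolynomial (Fin n) ℂ)) {a b : ℕ} (h : a ≤ b) : Aq I a ≤ Aq I b := by
  rw [Aq_eq, Aq_eq]; exact sub_pow_mono (one_mem_lspan _) h

lemma Aq_mul (I : Ideal (MvPolynomial (Fin n) ℂ)) (a b : ℕ) : Aq I a * Aq I b = Aq I (a + b) := by
  rw [Aq_eq, Aq_eq, Aq_eq, pow_add]

lemma mk_mem_Aq (I : Ideal (MvPolynomial (Fin n) ℂ)) {m : ℕ} {f : MvPolynomial (Fin n) ℂ}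
    (h : f.totalDegree ≤ m) : Ideal.Quotient.mk I f ∈ Aq I m :=
  ⟨f, by simpa [mem_restrictTotalDegree] using h, rfl⟩

lemma exists_mem_Aq {I : Ideal (MvPolynomial (Fin n) ℂ)} {m : ℕ} {a} (h : a ∈ Aq I m) :
    ∃ f : MvPolynomial (Fin n) ℂ, f.totalDegree ≤ m ∧ Ideal.Quotient.mk I f = a := by
  obtain ⟨f, hf, rfl⟩ := h
  exact ⟨f, by simpa [mem_restrictTotalDegree] using hf, rfl⟩

lemma HF_mono (I : Ideal (MvPolynomial (Fin n) ℂ)) {a b : ℕ} (h : a ≤ b) : HF I a ≤ HF I b :=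
  Submodule.finrank_mono (Aq_mono I h)

lemma HF_anti {I J : Ideal (MvPolynomial (Fin n) ℂ)} (h : I ≤ J) (m : ℕ) : HF J m ≤ HF I m := by
  have : Aq J m = (Aq I m).map (Ideal.Quotient.factorₐ ℂ h).toLinearMap := by
    unfold Aq
    rw [← Submodule.map_comp]
    rfl
  unfold HF
  rw [this]
  exact Submodule.finrank_map_le _ _

lemma HF_pos (I : Ideal (MvPolynomial (Fin n) ℂ)) (hI : I ≠ ⊤) (m : ℕ) : 1 ≤ HF I m := by
  have : Nontrivial (MvPolynomial (Fin n) ℂ ⧸ I) := Ideal.Quotient.nontrivial_iff.2 hI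
  have h : (1 : MvPolynomial (Fin n) ℂ ⧸ I) ∈ Aq I m := ⟨1, by simp [mem_restrictTotalDegree], by simp⟩
  exact Nat.one_le_iff_ne_zero.2 (fun h0 => one_ne_zero (α := MvPolynomial (Fin n) ℂ ⧸ I) (by
    have := Submodule.finrank_eq_zero.1 h0
    rw [this] at h
    simpa using h))

lemma HF_le (I : Ideal (MvPolynomial (Fin n) ℂ)) (m : ℕ) : HF I m ≤ (m+1)^n := by
  unfold HF; rw [Aq_eq]; exact finrank_lspan_pow_le _ _

lemma nn_ideal (P : Ideal (MvPolynomial (Fin n) ℂ)) (hP : P.IsPrime) :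
    ∃ r, ∃ y : Fin r → MvPolynomial (Fin n) ℂ ⧸ P, (∀ i, y i ∈ Aq P 1) ∧ AlgebraicIndependent ℂ y ∧
      ∃ Z : Submodule ℂ (MvPolynomial (Fin n) ℂ ⧸ P), Z.FG ∧ ∀ M, Aq P M ≤ Z * lspan y ^ M := by
  have : Nontrivial (MvPolynomial (Fin n) ℂ ⧸ P) := Ideal.Quotient.nontrivial_iff.2 hP.ne_top
  have := nn_exists (xb P)
  simpa only [Aq_eq, pow_one] using this

def td (P : Ideal (MvPolynomial (Fin n) ℂ)) : ℕ := by
  classical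
  exact if h : P.IsPrime then Classical.choose (nn_ideal P h) else 0

lemma nn_td (P : Ideal (MvPolynomial (Fin n) ℂ)) [hP : P.IsPrime] :
    ∃ y : Fin (td P) → MvPolynomial (Fin n) ℂ ⧸ P, (∀ i, y i ∈ Aq P 1) ∧ AlgebraicIndependent ℂ y ∧
      ∃ Z : Submodule ℂ (MvPolynomial (Fin n) ℂ ⧸ P), Z.FG ∧ ∀ M, Aq P M ≤ Z * lspan y ^ M := by
  have : td P = Classical.choose (nn_ideal P hP) := by unfold td; rw [dif_pos hP]
  rw [this]
  exact Classical.choose_spec (nn_ideal P hP)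

lemma lspan_le_Aq {P : Ideal (MvPolynomial (Fin n) ℂ)} {r : ℕ} {y : Fin r → MvPolynomial (Fin n) ℂ ⧸ P}
    (hy : ∀ i, y i ∈ Aq P 1) (m : ℕ) : lspan y ^ m ≤ Aq P m := by
  have : lspan y ≤ Aq P 1 := by
    rw [lspan, Submodule.span_le]
    rintro z hz
    rcases hz with rfl | ⟨i, rfl⟩
    · rw [Aq_eq, pow_one]; exact one_mem_lspan _
    · exact hy i
  refine (pow_le_pow_left' this m).trans ?_
  rw [Aq_eq, Aq_eq, pow_one]

lemma algindep_HF {P : Ideal (MvPolynomial (Fin n) ℂ)} {r : ℕ} {y : Fin r → MvPolynomial (Fin n) ℂ ⧸ P}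
    (hy : ∀ i, y i ∈ Aq P 1) (hi : AlgebraicIndependent ℂ y) (M : ℕ) : (M+1)^r ≤ HF P (r * M) :=
  (algindep_count y hi M).trans (Submodule.finrank_mono (lspan_le_Aq hy _))

lemma HF_upper (P : Ideal (MvPolynomial (Fin n) ℂ)) [P.IsPrime] :
    ∃ C : ℕ, ∀ M, HF P M ≤ C * (M+1)^(td P) := by
  obtain ⟨y, hy, hi, Z, hZ, h⟩ := nn_td P
  refine ⟨Module.finrank ℂ Z, fun M => ?_⟩
  refine (finrank_mono_fg (hZ.mul ((lspan_fg y).pow M)) (h M)).trans ?_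
  refine (finrank_mul_le' _ _ hZ ((lspan_fg y).pow M)).trans ?_
  exact Nat.mul_le_mul_left _ (finrank_lspan_pow_le _ _)

lemma Aq_exh {P : Ideal (MvPolynomial (Fin n) ℂ)} {W : ℕ → Submodule ℂ (MvPolynomial (Fin n) ℂ ⧸ P)}
    (h : ∀ M, Aq P M ≤ W M) (a : MvPolynomial (Fin n) ℂ ⧸ P) : ∃ M, a ∈ W M := by
  obtain ⟨f, rfl⟩ := Ideal.Quotient.mk_surjective a
  exact ⟨_, h _ (mk_mem_Aq P (le_refl f.totalDegree))⟩

lemma HF_growth (P : Ideal (MvPolynomial (Fin n) ℂ)) [hP : P.IsPrime] (k m : ℕ) (hk : 0 < k) :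
    k ^ (td P) * HF P m ≤ HF P (k * (m + td P)) := by
  obtain ⟨y, hy, hi, Z, hZ, h⟩ := nn_td P
  refine (growth_gen hi hZ (Aq_exh h) (Aq P m) (Aq_fg P m) k hk).trans (Submodule.finrank_mono ?_)
  refine (mul_le_mul' le_rfl (lspan_le_Aq hy _)).trans ?_
  rw [Aq_eq, Aq_eq, Aq_eq, ← pow_mul, ← pow_add]
  apply le_of_eq; congr 1; ring

lemma HF_G (P : Ideal (MvPolynomial (Fin n) ℂ)) [hP : P.IsPrime] {m M : ℕ} (hm : m ≤ M) :
    HF P m * (M + 1)^(td P) ≤ HF P M * (2 * (td P + 1) * (m + 1))^(td P) := by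
  set e := td P with he
  rcases lt_or_ge M (m + e) with h | h
  · exact Nat.mul_le_mul (HF_mono P hm) (Nat.pow_le_pow_left (by nlinarith) _)
  · rcases Nat.eq_zero_or_pos (m + e) with h0 | h0
    · have : e = 0 := by omega
      rw [this]; simpa using HF_mono P hm
    · set k := M / (m + e) with hk
      have hk1 : 1 ≤ k := (Nat.one_le_div_iff h0).2 h
      have hk2 : k * (m + e) ≤ M := Nat.div_mul_le_self _ _
      have hk3 : M + 1 ≤ (k + 1) * (m + e) := by
        have := Nat.lt_mul_div_succ M h0
        rw [← hk] at this; linarith [mul_comm (m+e) (k+1)]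
      have h1 : M + 1 ≤ k * (2 * (e + 1) * (m + 1)) := by
        calc M + 1 ≤ (k+1) * (m+e) := hk3
          _ ≤ (2 * k) * ((e+1) * (m+1)) := Nat.mul_le_mul (by omega) (by nlinarith)
          _ = _ := by ring
      calc HF P m * (M+1)^e ≤ HF P m * (k * (2 * (e + 1) * (m + 1)))^e :=
            Nat.mul_le_mul_left _ (Nat.pow_le_pow_left h1 _)
        _ = (k ^ e * HF P m) * (2 * (e + 1) * (m + 1))^e := by rw [mul_pow]; ring
        _ ≤ HF P (k * (m + e)) * (2 * (e + 1) * (m + 1))^e := Nat.mul_le_mul_right _ (HF_growth P k m hk1)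
        _ ≤ _ := Nat.mul_le_mul_right _ (HF_mono P hk2)

/-- sup of the normalized Hilbert function -/
def Dt (P : Ideal (MvPolynomial (Fin n) ℂ)) : ℝ := sSup (range fun m : ℕ => (HF P m : ℝ) / ((m:ℝ)+1)^(td P))

lemma Dt_bdd (P : Ideal (MvPolynomial (Fin n) ℂ)) [P.IsPrime] :
    BddAbove (range fun m : ℕ => (HF P m : ℝ) / ((m:ℝ)+1)^(td P)) := by
  obtain ⟨C, hC⟩ := HF_upper P
  refine ⟨C, ?_⟩
  rintro _ ⟨m, rfl⟩
  rw [div_le_iff₀ (by positivity)]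
  exact_mod_cast hC m

lemma HF_le_Dt (P : Ideal (MvPolynomial (Fin n) ℂ)) [P.IsPrime] (m : ℕ) :
    (HF P m : ℝ) ≤ Dt P * ((m:ℝ)+1)^(td P) := by
  rw [← div_le_iff₀ (by positivity)]
  exact le_csSup (Dt_bdd P) ⟨m, rfl⟩

lemma Dt_le {P : Ideal (MvPolynomial (Fin n) ℂ)} {K : ℝ}
    (h : ∀ m : ℕ, (HF P m : ℝ) ≤ K * ((m:ℝ)+1)^(td P)) : Dt P ≤ K := by
  apply csSup_le (range_nonempty _)
  rintro _ ⟨m, rfl⟩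
  rw [div_le_iff₀ (by positivity)]
  exact h m

lemma one_le_Dt (P : Ideal (MvPolynomial (Fin n) ℂ)) [hP : P.IsPrime] : 1 ≤ Dt P := by
  have h := HF_le_Dt P 0
  have h2 : (1:ℝ) ≤ HF P 0 := by exact_mod_cast HF_pos P hP.ne_top 0
  simp at h; linarith

end HF


/-! ### Dimension theory through Hilbert functions -/

lemma growth_cmp {a b : ℕ} {K : ℝ} (h : ∀ M : ℕ, ((M:ℝ)+1)^a ≤ K * ((M:ℝ)+1)^b) : a ≤ b := by
  by_contra hab
  obtain ⟨c, rfl⟩ := Nat.exists_eq_add_of_lt (not_le.1 hab)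
  obtain ⟨M, hM⟩ := exists_nat_gt K
  have h1 := h M
  have h2 : (1:ℝ) ≤ (M:ℝ)+1 := by linarith [M.cast_nonneg (α := ℝ)]
  have e : ((M:ℝ)+1)^(b+c+1) = ((M:ℝ)+1)^(c+1) * ((M:ℝ)+1)^b := by rw [← pow_add]; congr 1; ring
  rw [e] at h1
  have h3 := le_of_mul_le_mul_right h1 (by positivity)
  have h4 : ((M:ℝ)+1)^1 ≤ ((M:ℝ)+1)^(c+1) := pow_le_pow_right₀ h2 (by omega)
  rw [pow_one] at h4
  linarith

section
variable {n : ℕ}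

lemma HF_lower (P : Ideal (MvPolynomial (Fin n) ℂ)) [hP : P.IsPrime] (M : ℕ) :
    (M+1)^(td P) ≤ HF P M * (2 * (td P + 1))^(td P) := by
  have h := HF_G P (Nat.zero_le M)
  have h1 := HF_pos P hP.ne_top 0
  simp only [zero_add, mul_one] at h
  nlinarith [Nat.zero_le ((M+1)^td P)]

lemma le_td {P : Ideal (MvPolynomial (Fin n) ℂ)} [P.IsPrime] {r : ℕ} {y : Fin r → MvPolynomial (Fin n) ℂ ⧸ P}
    (hy : ∀ i, y i ∈ Aq P 1) (hi : AlgebraicIndependent ℂ y) : r ≤ td P := by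
  obtain ⟨C, hC⟩ := HF_upper P
  apply growth_cmp (K := C * ((r:ℝ)+1)^(td P))
  intro M
  have h1 := (algindep_HF hy hi M).trans (hC _)
  have h2 : C * (r * M + 1)^(td P) ≤ C * ((r+1)^(td P) * (M+1)^(td P)) := by
    apply Nat.mul_le_mul_left
    rw [← mul_pow]
    exact Nat.pow_le_pow_left (by nlinarith) _
  have h3 := h1.trans h2
  rw [mul_assoc]
  exact_mod_cast h3

lemma td_le (P : Ideal (MvPolynomial (Fin n) ℂ)) [P.IsPrime] : td P ≤ n := by
  apply growth_cmp (K := (2 * (td P + 1))^(td P))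
  intro M
  have h := (HF_lower P M).trans (Nat.mul_le_mul_right _ (HF_le P M))
  rw [mul_comm] at h
  exact_mod_cast h

lemma td_bot : td (⊥ : Ideal (MvPolynomial (Fin n) ℂ)) = n := by
  apply le_antisymm (td_le _)
  apply le_td (y := xb ⊥)
  · intro i; exact mk_mem_Aq _ (by simp)
  · intro p q h
    rw [aeval_xb] at h
    have : Ideal.Quotient.mk ⊥ p = Ideal.Quotient.mk ⊥ q := h
    rw [Ideal.Quotient.eq] at this
    exact sub_eq_zero.1 (by simpa using this)

lemma basic_ineq {P J : Ideal (MvPolynomial (Fin n) ℂ)} [hP : P.IsPrime] (hPJ : P ≤ J)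
    {g : MvPolynomial (Fin n) ℂ} (hgP : g ∉ P) (hgJ : g ∈ J) {δ : ℕ} (hδ : g.totalDegree ≤ δ) (M : ℕ) :
    HF J (M + δ) + HF P M ≤ HF P (M + δ) := by
  set φ := (Ideal.Quotient.factorₐ ℂ hPJ).toLinearMap with hφ
  set f := φ.domRestrict (Aq P (M + δ)) with hf
  have h1 := LinearMap.finrank_range_add_finrank_ker f
  have h2 : LinearMap.range f = Aq J (M + δ) := by
    rw [hf, LinearMap.range_domRestrict]
    unfold Aq
    rw [← Submodule.map_comp]
    rfl
  set μ := LinearMap.mulLeft ℂ (Ideal.Quotient.mk P g) with hμ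
  have hμi : Function.Injective μ := by
    intro a b hab
    have hg0 : Ideal.Quotient.mk P g ≠ 0 := fun h => hgP (Ideal.Quotient.eq_zero_iff_mem.1 h)
    exact mul_left_cancel₀ hg0 hab
  have h3 : (Aq P M).map μ ≤ (LinearMap.ker f).map (Aq P (M + δ)).subtype := by
    rintro _ ⟨a, ha, rfl⟩
    have hm : Ideal.Quotient.mk P g * a ∈ Aq P (M + δ) := by
      rw [add_comm, ← Aq_mul]
      exact Submodule.mul_mem_mul (mk_mem_Aq P hδ) ha
    refine ⟨⟨_, hm⟩, ?_, rfl⟩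
    have : Ideal.Quotient.factorₐ ℂ hPJ (Ideal.Quotient.mk P g * a) = 0 := by
      rw [map_mul]
      have : Ideal.Quotient.factorₐ ℂ hPJ (Ideal.Quotient.mk P g) = Ideal.Quotient.mk J g := rfl
      rw [this, Ideal.Quotient.eq_zero_iff_mem.2 hgJ, zero_mul]
    exact this
  have h4 := Submodule.finrank_mono h3
  rw [Submodule.finrank_map_subtype_eq,
    ← LinearEquiv.finrank_eq (Submodule.equivMapOfInjective μ hμi (Aq P M))] at h4
  rw [h2] at h1
  unfold HF
  omega

lemma basic_sum {P J : Ideal (MvPolynomial (Fin n) ℂ)} [hP : P.IsPrime] (hPJ : P ≤ J)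
    {g : MvPolynomial (Fin n) ℂ} (hgP : g ∉ P) (hgJ : g ∈ J) {δ : ℕ} (hδ : g.totalDegree ≤ δ) (a k : ℕ) :
    k * HF J a ≤ HF P (a + k * δ) := by
  induction k with
  | zero => simp
  | succ k ih =>
    have h1 := basic_ineq hPJ hgP hgJ hδ (a + k * δ)
    have h2 := HF_mono J (show a ≤ a + k * δ + δ by omega)
    have e : a + (k+1) * δ = a + k * δ + δ := by ring
    rw [e]
    linarith [add_mul k 1 (HF J a)]

lemma td_lt {P Q : Ideal (MvPolynomial (Fin n) ℂ)} [hP : P.IsPrime] [hQ : Q.IsPrime] (h : P < Q) :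
    td Q < td P := by
  obtain ⟨g, hgQ, hgP⟩ := SetLike.exists_of_lt h
  obtain ⟨C, hC⟩ := HF_upper P
  set δ := g.totalDegree
  set K := (2 * (td Q + 1))^(td Q)
  have : td Q + 1 ≤ td P := by
    apply growth_cmp (K := K * C * (δ+1)^(td P))
    intro M
    have h1 := basic_sum h.le hgP hgQ (le_refl δ) M (M+1)
    have h2 := hC (M + (M+1) * δ)
    have h3 := HF_lower Q M
    have h4 : (M + (M+1) * δ + 1)^(td P) = (δ+1)^(td P) * (M+1)^(td P) := by rw [← mul_pow]; congr 1; ring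
    have : (M+1)^(td Q + 1) ≤ K * C * (δ+1)^(td P) * (M+1)^(td P) := by
      calc (M+1)^(td Q + 1) = (M+1) * (M+1)^(td Q) := by ring
        _ ≤ (M+1) * (HF Q M * K) := Nat.mul_le_mul_left _ h3
        _ = K * ((M+1) * HF Q M) := by ring
        _ ≤ K * (C * (M + (M+1) * δ + 1)^(td P)) := Nat.mul_le_mul_left _ (h1.trans h2)
        _ = _ := by rw [h4]; ring
    exact_mod_cast this
  exact this

lemma td_anti {P Q : Ideal (MvPolynomial (Fin n) ℂ)} [hP : P.IsPrime] [hQ : Q.IsPrime] (h : P ≤ Q) :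
    td Q ≤ td P := by
  rcases eq_or_lt_of_le h with rfl | h
  · exact le_rfl
  · exact (td_lt h).le

lemma eq_of_td_le {P Q : Ideal (MvPolynomial (Fin n) ℂ)} [hP : P.IsPrime] [hQ : Q.IsPrime] (h : P ≤ Q)
    (ht : td P ≤ td Q) : P = Q := by
  rcases eq_or_lt_of_le h with rfl | h
  · rfl
  · exact absurd (td_lt h) (by omega)
end


/-! ### Krull: cutting by one equation drops the dimension by one -/

lemma cut_abs {A : Type} [CommRing A] [IsDomain A] [IsNoetherianRing A] {r : ℕ}
    [Algebra (MvPolynomial (Fin r) ℂ) A] [FaithfulSMul (MvPolynomial (Fin r) ℂ) A]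
    [Module.Finite (MvPolynomial (Fin r) ℂ) A] (q : Ideal A) [q.IsPrime] (g : A) (hg : g ≠ 0)
    (hq : q ∈ (Ideal.span {g}).minimalPrimes) :
    ∃ r', ∃ ι : Fin r' → Fin r, r = r' + 1 ∧ Function.Injective ι ∧
      ∀ p : MvPolynomial (Fin r') ℂ, algebraMap (MvPolynomial (Fin r) ℂ) A (rename ι p) ∈ q → p = 0 := by
  classical
  have hgq : g ∈ q := hq.1.2 (Ideal.subset_span rfl)
  set 𝔮 := q.under (MvPolynomial (Fin r) ℂ) with h𝔮
  have h𝔮0 : 𝔮 ≠ ⊥ := by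
    intro h0
    have := Ideal.eq_bot_of_comap_eq_bot (R := MvPolynomial (Fin r) ℂ) (I := q) h0
    rw [this] at hgq
    exact hg (by simpa using hgq)
  obtain ⟨b, hb, hbp⟩ := Ideal.IsPrime.exists_mem_prime_of_ne_bot (inferInstance : 𝔮.IsPrime) h𝔮0
  have hle : Ideal.span {b} ≤ 𝔮 := by rwa [Ideal.span_singleton_le_iff_mem]
  have hbpr : (Ideal.span {b}).IsPrime := (Ideal.span_singleton_prime hbp.ne_zero).2 hbp
  have heq : Ideal.span {b} = 𝔮 := by
    by_contra hne
    have hlt := lt_of_le_of_ne hle hne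
    have : q.LiesOver 𝔮 := ⟨rfl⟩
    obtain ⟨P', hP'lt, hP', hP'o⟩ := Ideal.exists_ideal_lt_liesOver_of_lt q hlt
    have hP'0 : ⊥ < P' := by
      rw [bot_lt_iff_ne_bot]
      rintro rfl
      have h1 : b ∈ (⊥ : Ideal A).under (MvPolynomial (Fin r) ℂ) := by
        rw [← hP'o.over]; exact Ideal.subset_span rfl
      rw [Ideal.mem_comap, Ideal.mem_bot] at h1
      exact hbp.ne_zero (FaithfulSMul.algebraMap_injective (MvPolynomial (Fin r) ℂ) A (by simpa using h1))
    have hbot : (⊥ : Ideal A).IsPrime := Ideal.isPrime_bot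
    have h1 := Ideal.height_add_one_le_of_lt_of_isPrime hP'0
    have h2 := Ideal.height_add_one_le_of_lt_of_isPrime hP'lt
    have h3 := Ideal.height_le_one_of_isPrincipal_of_mem_minimalPrimes _ _ hq
    have h4 : (1 : ℕ∞) ≤ P'.height := le_trans (by simp) h1
    have h5 : (1 : ℕ∞) + 1 ≤ 1 := (add_le_add_left h4 1).trans (h2.trans h3)
    exact absurd h5 (by decide)
  obtain ⟨i, hi⟩ : b.vars.Nonempty := by
    rw [Finset.nonempty_iff_ne_empty]
    intro h0
    rw [vars_eq_empty_iff_eq_C] at h0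
    have hc : coeff 0 b ≠ 0 := by
      intro h1; rw [h1, C_0] at h0; exact hbp.ne_zero h0
    exact hbp.not_unit (by rw [h0]; exact (isUnit_iff_ne_zero.2 hc).map C)
  have hdeg : degreeOf i b ≠ 0 := by
    exact mem_vars_iff_degreeOf_ne_zero.1 hi
  cases r with
  | zero => exact i.elim0
  | succ r' =>
    refine ⟨r', i.succAbove, rfl, Fin.succAbove_right_injective, ?_⟩
    intro p hp
    have : rename i.succAbove p ∈ Ideal.span {b} := by rw [heq]; exact hp
    obtain ⟨c, hc⟩ := Ideal.mem_span_singleton.1 this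
    by_contra hp0
    have hr0 : rename i.succAbove p ≠ 0 := fun h =>
      hp0 (rename_injective _ Fin.succAbove_right_injective (by simpa using h))
    have hc0 : c ≠ 0 := by rintro rfl; exact hr0 (by simpa using hc)
    have h1 := degreeOf_mul_eq (n := i) hbp.ne_zero hc0
    rw [← hc] at h1
    have h2 : degreeOf i (rename i.succAbove p) = 0 := by
      by_contra h
      have : i ∈ (rename i.succAbove p).vars := mem_vars_iff_degreeOf_ne_zero.2 h
      have := vars_rename i.succAbove p this
      simp at this
    omega

section
variable {n : ℕ}

lemma cut_gen {A : Type} [CommRing A] [IsDomain A] [IsNoetherianRing A] [Algebra ℂ A] {r : ℕ} {y : Fin r → A}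
    (hi : AlgebraicIndependent ℂ y) {Z : Submodule ℂ A} (hZ : Z.FG)
    (h : ∀ a, ∃ M, a ∈ Z * lspan y ^ M) (q : Ideal A) [q.IsPrime] (g : A) (hg : g ≠ 0)
    (hq : q ∈ (Ideal.span {g}).minimalPrimes) :
    ∃ r', ∃ ι : Fin r' → Fin r, r = r' + 1 ∧
      ∀ p : MvPolynomial (Fin r') ℂ, aeval (y ∘ ι) p ∈ q → p = 0 := by
  let _ : Algebra (MvPolynomial (Fin r) ℂ) A := (aeval y).toAlgebra
  have : Module.Finite (MvPolynomial (Fin r) ℂ) A := nn_finite hZ h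
  have : FaithfulSMul (MvPolynomial (Fin r) ℂ) A :=
    (faithfulSMul_iff_algebraMap_injective _ _).2 hi
  obtain ⟨r', ι, h1, -, h2⟩ := cut_abs (r := r) q g hg hq
  refine ⟨r', ι, h1, fun p hp => h2 p ?_⟩
  have : algebraMap (MvPolynomial (Fin r) ℂ) A (rename ι p) = aeval y (rename ι p) := rfl
  rwa [this, aeval_rename]

lemma td_cut {P Q : Ideal (MvPolynomial (Fin n) ℂ)} [hP : P.IsPrime] [hQ : Q.IsPrime]
    {g : MvPolynomial (Fin n) ℂ} (hg : g ∉ P)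
    (hPQ : Q ∈ (P ⊔ Ideal.span {g}).minimalPrimes) : td P = td Q + 1 := by
  have hle : P ≤ Q := le_sup_left.trans hPQ.1.2
  have hgQ : g ∈ Q := hPQ.1.2 (Ideal.mem_sup_right (Ideal.subset_span rfl))
  have hlt : P < Q := lt_of_le_of_ne hle (by rintro rfl; exact hg hgQ)
  have h1 := td_lt hlt
  obtain ⟨y, hy, hi, Z, hZ, h⟩ := nn_td P
  set F := Ideal.Quotient.factorₐ ℂ hle with hF
  set q : Ideal (MvPolynomial (Fin n) ℂ ⧸ P) := RingHom.ker F with hq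
  have hqp : q.IsPrime := RingHom.ker_isPrime _
  have hmem : ∀ f, Ideal.Quotient.mk P f ∈ q ↔ f ∈ Q := by
    intro f
    rw [hq, RingHom.mem_ker]
    exact Ideal.Quotient.eq_zero_iff_mem
  have hmin : q ∈ (Ideal.span {Ideal.Quotient.mk P g}).minimalPrimes := by
    refine ⟨⟨hqp, ?_⟩, ?_⟩
    · rw [Ideal.span_singleton_le_iff_mem, hmem]; exact hgQ
    · rintro q' ⟨hq', hq'2⟩ hle'
      intro a ha
      obtain ⟨f, rfl⟩ := Ideal.Quotient.mk_surjective a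
      rw [hmem] at ha
      have := hPQ.2 (y := q'.comap (Ideal.Quotient.mk P)) ⟨inferInstance, ?_⟩ ?_ ha
      · exact this
      · refine sup_le ?_ ?_
        · intro x hx
          rw [Ideal.mem_comap, Ideal.Quotient.eq_zero_iff_mem.2 hx]; exact zero_mem _
        · rw [Ideal.span_singleton_le_iff_mem, Ideal.mem_comap]
          exact hq'2 (Ideal.subset_span rfl)
      · intro x hx
        rw [← hmem]; exact hle' hx
  obtain ⟨r', ι, hr', hp⟩ := cut_gen hi hZ (Aq_exh h) q _
    (fun h0 => hg (Ideal.Quotient.eq_zero_iff_mem.1 h0)) hmin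
  have h2 : r' ≤ td Q := by
    apply le_td (y := fun j => F (y (ι j)))
    · intro j
      obtain ⟨f, hf, he⟩ := exists_mem_Aq (hy (ι j))
      have : F (y (ι j)) = Ideal.Quotient.mk Q f := by rw [← he]; rfl
      rw [this]; exact mk_mem_Aq Q hf
    · rw [AlgebraicIndependent, injective_iff_map_eq_zero]
      intro p h0
      apply hp p
      rw [hq, RingHom.mem_ker, ← h0, ← AlgHom.comp_apply]
      congr 1
      ext j; simp
  omega
end


/-! ### Bezout type inequality -/
section
variable {n : ℕ}

lemma Dt_pos (P : Ideal (MvPolynomial (Fin n) ℂ)) [hP : P.IsPrime] : 0 < Dt P :=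
  lt_of_lt_of_le one_pos (one_le_Dt P)

lemma Dt_half (P : Ideal (MvPolynomial (Fin n) ℂ)) [hP : P.IsPrime] :
    ∃ m : ℕ, Dt P * ((m:ℝ)+1)^(td P) ≤ 2 * HF P m := by
  have h := Dt_pos P
  have h2 : Dt P / 2 < sSup (range fun m : ℕ => (HF P m : ℝ) / ((m:ℝ)+1)^(td P)) :=
    lt_of_lt_of_le (half_lt_self h) le_rfl
  obtain ⟨_, ⟨m, rfl⟩, hm⟩ := exists_lt_of_lt_csSup (range_nonempty _) h2
  refine ⟨m, ?_⟩
  simp only at hm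
  rw [lt_div_iff₀ (by positivity)] at hm
  linarith

lemma Dt_growth {P : Ideal (MvPolynomial (Fin n) ℂ)} [hP : P.IsPrime] {K : ℝ} {m M : ℕ}
    (h : Dt P * ((m:ℝ)+1)^(td P) ≤ K * HF P m) (hM : m ≤ M) (hK : 0 ≤ K) :
    Dt P * ((M:ℝ)+1)^(td P) ≤ K * (2 * (td P + 1))^(td P) * HF P M := by
  have h1 : (HF P m : ℝ) * (M + 1)^(td P) ≤ HF P M * (2 * (td P + 1) * (m + 1))^(td P) := by
    exact_mod_cast HF_G P hM
  rw [mul_pow _ ((m:ℝ)+1)] at h1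
  have hp : (0:ℝ) < ((m:ℝ)+1)^(td P) := by positivity
  have h2 : (0:ℝ) ≤ ((M:ℝ)+1)^(td P) := by positivity
  apply le_of_mul_le_mul_right _ hp
  calc Dt P * ((M:ℝ)+1)^(td P) * ((m:ℝ)+1)^(td P) = (Dt P * ((m:ℝ)+1)^(td P)) * ((M:ℝ)+1)^(td P) := by ring
    _ ≤ (K * HF P m) * ((M:ℝ)+1)^(td P) := mul_le_mul_of_nonneg_right h h2
    _ = K * (HF P m * ((M:ℝ)+1)^(td P)) := by ring
    _ ≤ K * (HF P M * ((2 * (td P + 1))^(td P) * (m + 1)^(td P))) := mul_le_mul_of_nonneg_left h1 hK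
    _ = _ := by ring

lemma Dt_eventually (P : Ideal (MvPolynomial (Fin n) ℂ)) [hP : P.IsPrime] :
    ∃ m : ℕ, ∀ M, m ≤ M → Dt P * ((M:ℝ)+1)^(td P) ≤ 2 * (2 * (td P + 1))^(td P) * HF P M := by
  obtain ⟨m, hm⟩ := Dt_half P
  exact ⟨m, fun M hM => Dt_growth hm hM (by norm_num)⟩

lemma inf_HF {J Q : Ideal (MvPolynomial (Fin n) ℂ)} [hQ : Q.IsPrime]
    {g : MvPolynomial (Fin n) ℂ} (hgQ : g ∉ Q) (hgJ : g ∈ J) {δ : ℕ} (hδ : g.totalDegree ≤ δ) (M : ℕ) :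
    HF J (M + δ) + HF Q M ≤ HF (Q ⊓ J) (M + δ) := by
  set P := Q ⊓ J with hP
  have hPJ : P ≤ J := inf_le_right
  have hPQ : P ≤ Q := inf_le_left
  set φ := (Ideal.Quotient.factorₐ ℂ hPJ).toLinearMap with hφ
  set f := φ.domRestrict (Aq P (M + δ)) with hf
  have h1 := LinearMap.finrank_range_add_finrank_ker f
  have h2 : LinearMap.range f = Aq J (M + δ) := by
    rw [hf, LinearMap.range_domRestrict]
    unfold Aq
    rw [← Submodule.map_comp]
    rfl
  set ψ := (Ideal.Quotient.factorₐ ℂ hPQ).toLinearMap with hψ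
  have hψA : (Aq P M).map ψ = Aq Q M := by
    unfold Aq
    rw [← Submodule.map_comp]
    rfl
  set μ := LinearMap.mulLeft ℂ (Ideal.Quotient.mk P g) with hμ
  set μ' := LinearMap.mulLeft ℂ (Ideal.Quotient.mk Q g) with hμ'
  have hμi : Function.Injective μ' := by
    intro a b hab
    have hg0 : Ideal.Quotient.mk Q g ≠ 0 := fun h => hgQ (Ideal.Quotient.eq_zero_iff_mem.1 h)
    exact mul_left_cancel₀ hg0 hab
  have hcomm : μ' ∘ₗ ψ = ψ ∘ₗ μ := by
    refine LinearMap.ext fun a => ?_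
    have : Ideal.Quotient.factorₐ ℂ hPQ (Ideal.Quotient.mk P g * a) =
      Ideal.Quotient.mk Q g * Ideal.Quotient.factorₐ ℂ hPQ a := by rw [map_mul]; rfl
    exact this.symm
  have h3 : (Aq P M).map μ ≤ (LinearMap.ker f).map (Aq P (M + δ)).subtype := by
    rintro _ ⟨a, ha, rfl⟩
    have hm : Ideal.Quotient.mk P g * a ∈ Aq P (M + δ) := by
      rw [add_comm, ← Aq_mul]
      exact Submodule.mul_mem_mul (mk_mem_Aq P hδ) ha
    refine ⟨⟨_, hm⟩, ?_, rfl⟩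
    have : Ideal.Quotient.factorₐ ℂ hPJ (Ideal.Quotient.mk P g * a) = 0 := by
      rw [map_mul]
      have : Ideal.Quotient.factorₐ ℂ hPJ (Ideal.Quotient.mk P g) = Ideal.Quotient.mk J g := rfl
      rw [this, Ideal.Quotient.eq_zero_iff_mem.2 hgJ, zero_mul]
    exact this
  have h4 := Submodule.finrank_mono h3
  rw [Submodule.finrank_map_subtype_eq] at h4
  have h5 : HF Q M ≤ Module.finrank ℂ ((Aq P M).map μ) := by
    have e : ((Aq P M).map μ).map ψ = (Aq Q M).map μ' := by
      rw [← hψA, ← Submodule.map_comp, ← Submodule.map_comp, hcomm]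
    have h6 := Submodule.finrank_map_le ψ ((Aq P M).map μ)
    rw [e, ← LinearEquiv.finrank_eq (Submodule.equivMapOfInjective μ' hμi (Aq Q M))] at h6
    exact h6
  rw [h2] at h1
  unfold HF at *
  omega

lemma sum_HF (S : Finset (Ideal (MvPolynomial (Fin n) ℂ))) (hS : ∀ Q ∈ S, Q.IsPrime)
    (hinc : ∀ Q ∈ S, ∀ Q' ∈ S, Q ≤ Q' → Q = Q') :
    ∃ c, ∀ M, ∑ Q ∈ S, HF Q M ≤ HF (S.inf id) (M + c) := by
  classical
  induction S using Finset.induction_on with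
  | empty => exact ⟨0, by simp⟩
  | insert Q S hQS ih =>
    obtain ⟨c, hc⟩ := ih (fun Q h => hS Q (Finset.mem_insert_of_mem h))
      (fun Q h Q' h' => hinc Q (Finset.mem_insert_of_mem h) Q' (Finset.mem_insert_of_mem h'))
    have hQ := hS Q (Finset.mem_insert_self _ _)
    have : ¬ S.inf id ≤ Q := by
      intro h
      obtain ⟨Q', hQ', hle⟩ := (Ideal.IsPrime.inf_le' hQ).1 h
      have := hinc Q' (Finset.mem_insert_of_mem hQ') Q (Finset.mem_insert_self _ _) hle
      exact hQS (this ▸ hQ')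
    obtain ⟨g, hg, hgQ⟩ := SetLike.not_le_iff_exists.1 this
    refine ⟨c + g.totalDegree, fun M => ?_⟩
    have h1 := inf_HF (M := M + c) hgQ hg le_rfl
    rw [Finset.sum_insert hQS, Finset.inf_insert, id, ← add_assoc]
    have h2 := HF_mono Q (show M ≤ M + c by omega)
    have h3 := HF_mono (S.inf id) (show M + c ≤ M + c + g.totalDegree by omega)
    have h4 := hc M
    omega

def KB (n : ℕ) : ℝ := 2 * (2 * (n + 1))^n * 3^n

lemma KB_pos (n : ℕ) : 0 < KB n := by unfold KB; positivity

lemma one_le_KB (n : ℕ) : 1 ≤ KB n := by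
  have h1 : (1:ℝ) ≤ (2 * (n+1))^n := one_le_pow₀ (by linarith [n.cast_nonneg (α := ℝ)])
  have h2 : (1:ℝ) ≤ 3^n := one_le_pow₀ (by norm_num)
  unfold KB; nlinarith

lemma bezout {P : Ideal (MvPolynomial (Fin n) ℂ)} [hP : P.IsPrime]
    {g : MvPolynomial (Fin n) ℂ} (hg : g ∉ P) {δ : ℕ} (hδ : g.totalDegree ≤ δ) (hδ1 : 1 ≤ δ)
    (S : Finset (Ideal (MvPolynomial (Fin n) ℂ)))
    (hS : ∀ Q ∈ S, Q.IsPrime ∧ P ≤ Q ∧ g ∈ Q ∧ td P = td Q + 1) :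
    ∑ Q ∈ S, Dt Q ≤ KB n * δ * Dt P := by
  classical
  rcases S.eq_empty_or_nonempty with rfl | ⟨Q0, hQ0⟩
  · have := KB_pos n; have := Dt_pos P; simp; positivity
  obtain ⟨e, he⟩ : ∃ e, td P = e + 1 := ⟨_, (hS Q0 hQ0).2.2.2⟩
  have hen : e + 1 ≤ n := he ▸ td_le P
  have htd : ∀ Q ∈ S, td Q = e := fun Q hQ => by have := (hS Q hQ).2.2.2; omega
  obtain ⟨c, hc⟩ := sum_HF S (fun Q h => (hS Q h).1) (by
    intro Q hQ Q' hQ' hle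
    have := (hS Q hQ).1; have := (hS Q' hQ').1
    exact eq_of_td_le hle (by rw [htd Q hQ, htd Q' hQ']))
  have hev : ∀ Q ∈ S, ∃ m : ℕ, ∀ M, m ≤ M → Dt Q * ((M:ℝ)+1)^e ≤ 2 * (2 * (e + 1))^e * HF Q M := by
    intro Q hQ
    have := (hS Q hQ).1
    have h := Dt_eventually Q
    rwa [htd Q hQ] at h
  choose! m hm using hev
  set J := S.inf id with hJ
  have hPJ : P ≤ J := Finset.le_inf (fun Q hQ => (hS Q hQ).2.1)
  have hgJ : g ∈ J := by
    rw [← Ideal.span_singleton_le_iff_mem]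
    exact Finset.le_inf (fun Q hQ => by
      rw [Ideal.span_singleton_le_iff_mem]; exact (hS Q hQ).2.2.1)
  set h := S.sup m + c + 1 with hh
  obtain ⟨M, hM⟩ : ∃ M, M + 1 = h * δ := ⟨h * δ - 1, by have : 1 ≤ h * δ := Nat.one_le_iff_ne_zero.2 (by positivity); omega⟩
  have hhδ : h ≤ h * δ := Nat.le_mul_of_pos_right _ hδ1
  have hMm : ∀ Q ∈ S, m Q ≤ M := fun Q hQ => by
    have := Finset.le_sup (f := m) hQ; omega
  have h1 : (∑ Q ∈ S, Dt Q) * ((M:ℝ)+1)^e ≤ 2 * (2 * (e + 1))^e * ((∑ Q ∈ S, HF Q M : ℕ) : ℝ) := by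
    push_cast
    rw [Finset.sum_mul, Finset.mul_sum]
    exact Finset.sum_le_sum (fun Q hQ => hm Q hQ M (hMm Q hQ))
  have h2 : ((∑ Q ∈ S, HF Q M : ℕ) : ℝ) ≤ HF J (M + c) := by exact_mod_cast hc M
  have h3 : (h : ℝ) * HF J (M + c) ≤ HF P (M + c + h * δ) := by
    exact_mod_cast basic_sum hPJ hg hgJ hδ (M + c) h
  have h4 := HF_le_Dt P (M + c + h * δ)
  have h5 : (((M + c + h * δ : ℕ) : ℝ) + 1)^(td P) ≤ (3 * (h * δ))^(e+1) := by
    rw [he]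
    apply pow_le_pow_left₀ (by positivity)
    have : M + c + h * δ + 1 ≤ 3 * (h * δ) := by omega
    exact_mod_cast this
  have hMr : (M:ℝ) + 1 = h * δ := by exact_mod_cast hM
  rw [hMr] at h1
  have hhp : (0:ℝ) < h := by rw [hh]; positivity
  have hδp : (0:ℝ) < δ := by exact_mod_cast hδ1
  have hD := Dt_pos P
  have hpos : (0:ℝ) < (h:ℝ) * (h * δ)^e := by positivity
  have hK : (0:ℝ) ≤ 2 * (2 * ((e:ℝ) + 1))^e := by positivity
  have h6 : (∑ Q ∈ S, Dt Q) * ((h:ℝ) * (h * δ)^e) ≤ (2 * (2 * (e + 1))^e * 3^(e+1) * δ * Dt P) * ((h:ℝ) * (h * δ)^e) := by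
    calc (∑ Q ∈ S, Dt Q) * ((h:ℝ) * (h * δ)^e) = h * ((∑ Q ∈ S, Dt Q) * (h * δ)^e) := by ring
      _ ≤ h * (2 * (2 * (e + 1))^e * HF J (M+c)) := by
          apply mul_le_mul_of_nonneg_left _ hhp.le
          exact h1.trans (mul_le_mul_of_nonneg_left h2 hK)
      _ = 2 * (2 * (e + 1))^e * (h * HF J (M+c)) := by ring
      _ ≤ 2 * (2 * (e + 1))^e * (Dt P * (3 * (h * δ))^(e+1)) := by
          apply mul_le_mul_of_nonneg_left _ hK
          exact h3.trans (h4.trans (mul_le_mul_of_nonneg_left h5 hD.le))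
      _ = _ := by rw [mul_pow (3:ℝ), pow_succ ((h:ℝ) * δ)]; ring
  have h7 := le_of_mul_le_mul_right h6 hpos
  refine h7.trans ?_
  apply mul_le_mul_of_nonneg_right _ hD.le
  apply mul_le_mul_of_nonneg_right _ hδp.le
  unfold KB
  have h8 : (2 * ((e:ℝ) + 1))^e ≤ (2 * (n + 1))^n := by
    calc (2 * ((e:ℝ) + 1))^e ≤ (2 * (n + 1))^e := by
          apply pow_le_pow_left₀ (by positivity)
          have : (e:ℝ) ≤ n := by exact_mod_cast (by omega : e ≤ n)
          linarith
      _ ≤ _ := pow_le_pow_right₀ (by linarith [n.cast_nonneg (α := ℝ)]) (by omega)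
  have h9 : (3:ℝ)^(e+1) ≤ 3^n := pow_le_pow_right₀ (by norm_num) hen
  gcongr

lemma cut_one {W P : Ideal (MvPolynomial (Fin n) ℂ)} [hW : W.IsPrime] [hP : P.IsPrime] (hWP : W ≤ P)
    {g : MvPolynomial (Fin n) ℂ} (hgP : g ∈ P) (hgW : g ∉ W) {δ : ℕ} (hδ : g.totalDegree ≤ δ) (hδ1 : 1 ≤ δ) :
    ∃ W' : Ideal (MvPolynomial (Fin n) ℂ), W'.IsPrime ∧ W < W' ∧ W' ≤ P ∧ g ∈ W' ∧ td W = td W' + 1 ∧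
      Dt W' ≤ KB n * δ * Dt W := by
  have hle : W ⊔ Ideal.span {g} ≤ P := sup_le hWP (by rwa [Ideal.span_singleton_le_iff_mem])
  obtain ⟨W', hW', hW'P⟩ := Ideal.exists_minimalPrimes_le hle
  have hp : W'.IsPrime := hW'.1.1
  have hgW' : g ∈ W' := hW'.1.2 (Ideal.mem_sup_right (Ideal.subset_span rfl))
  have hle2 : W ≤ W' := le_sup_left.trans hW'.1.2
  have htd := td_cut hgW hW'
  refine ⟨W', hp, lt_of_le_of_ne hle2 (by rintro rfl; exact hgW hgW'), hW'P, hgW', htd, ?_⟩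
  have := bezout hgW hδ hδ1 {W'} (by simp; exact ⟨hp, hle2, hgW', htd⟩)
  simpa using this

lemma one_le_deg {W P : Ideal (MvPolynomial (Fin n) ℂ)} (hP : P ≠ ⊤)
    {g : MvPolynomial (Fin n) ℂ} (hgP : g ∈ P) (hgW : g ∉ W) : 1 ≤ g.totalDegree := by
  by_contra h
  have h0 : g.totalDegree = 0 := by omega
  rw [totalDegree_eq_zero_iff_eq_C] at h0
  by_cases hc : coeff 0 g = 0
  · rw [hc, C_0] at h0; exact hgW (h0 ▸ zero_mem _)
  · apply hP
    rw [Ideal.eq_top_iff_one]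
    have : C (coeff 0 g)⁻¹ * g ∈ P := P.mul_mem_left _ hgP
    rwa [h0, coeff_zero_C, ← C_mul, inv_mul_cancel₀ hc, C_1] at this
end


/-! ### Chardin-Philippon type lower bound -/
section
variable {n : ℕ}

def CutBy (P : Ideal (MvPolynomial (Fin n) ℂ)) (δ : ℕ) : Prop :=
  ∀ Q : Ideal (MvPolynomial (Fin n) ℂ), Q.IsPrime → Q ≤ P → (∀ f ∈ P, f.totalDegree ≤ δ → f ∈ Q) → Q = P

lemma cut_chain {P : Ideal (MvPolynomial (Fin n) ℂ)} [hP : P.IsPrime] {δ : ℕ} (h : CutBy P δ) (k : ℕ) :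
    ∀ W : Ideal (MvPolynomial (Fin n) ℂ), W.IsPrime → W ≤ P → td W = td P + k →
      Dt P ≤ (KB n * δ)^k * Dt W := by
  induction k with
  | zero =>
    intro W hW hWP ht
    have := eq_of_td_le hWP (by omega)
    subst this; simp
  | succ k ih =>
    intro W hW hWP ht
    have hne : W ≠ P := by rintro rfl; omega
    have : ∃ f ∈ P, f.totalDegree ≤ δ ∧ f ∉ W := by
      by_contra! hcon
      exact hne (h W hW hWP hcon)
    obtain ⟨f, hfP, hfd, hfW⟩ := this
    have hδ1 : 1 ≤ δ := (one_le_deg hP.ne_top hfP hfW).trans hfd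
    obtain ⟨W', hW', -, hW'P, -, htd, hD⟩ := cut_one hWP hfP hfW hfd hδ1
    have h1 := ih W' hW' hW'P (by omega)
    have hK := KB_pos n
    calc Dt P ≤ (KB n * δ)^k * Dt W' := h1
      _ ≤ (KB n * δ)^k * (KB n * δ * Dt W) := mul_le_mul_of_nonneg_left hD (by positivity)
      _ = _ := by ring

lemma HF_le_of_low {P Q : Ideal (MvPolynomial (Fin n) ℂ)} (hQP : Q ≤ P) {m : ℕ}
    (h : ∀ f ∈ P, f.totalDegree ≤ m → f ∈ Q) : HF Q m ≤ HF P m := by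
  have e : (Aq Q m).map (Ideal.Quotient.factorₐ ℂ hQP).toLinearMap = Aq P m := by
    unfold Aq
    rw [← Submodule.map_comp]
    rfl
  unfold HF
  rw [← e]
  apply le_of_eq
  set φ := (Ideal.Quotient.factorₐ ℂ hQP).toLinearMap
  rw [← LinearMap.range_domRestrict]
  symm
  apply LinearMap.finrank_range_of_inj
  rw [← LinearMap.ker_eq_bot, LinearMap.ker_eq_bot']
  rintro ⟨a, ha⟩ h0
  obtain ⟨f, hf, rfl⟩ := exists_mem_Aq ha
  have h1 : Ideal.Quotient.mk P f = 0 := h0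
  have h2 := h f (Ideal.Quotient.eq_zero_iff_mem.mp h1) hf
  exact Subtype.ext (Ideal.Quotient.eq_zero_iff_mem.mpr h2)

lemma cp_aux (j : ℕ) : ∃ K : ℝ, 0 ≤ K ∧ ∀ P : Ideal (MvPolynomial (Fin n) ℂ), P.IsPrime → n - td P ≤ j →
    ∀ δ, CutBy P δ → ∀ m, δ ≤ m → Dt P * ((m:ℝ)+1)^(td P) ≤ K * HF P m := by
  classical
  set K0 : ℝ := Dt (⊥ : Ideal (MvPolynomial (Fin n) ℂ))
  have hK0 : 0 < K0 := Dt_pos _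
  have hbot : ∀ P : Ideal (MvPolynomial (Fin n) ℂ), P = ⊥ → Dt P * (((0:ℕ):ℝ)+1)^(td P) ≤ K0 * HF P 0 := by
    rintro P rfl
    have h2 : (1:ℝ) ≤ HF (⊥ : Ideal (MvPolynomial (Fin n) ℂ)) 0 := by
      exact_mod_cast HF_pos (⊥ : Ideal (MvPolynomial (Fin n) ℂ)) bot_ne_top 0
    simp only [Nat.cast_zero, zero_add, one_pow, mul_one]
    exact le_mul_of_one_le_right hK0.le h2
  have hgrow : ∀ (P : Ideal (MvPolynomial (Fin n) ℂ)), P.IsPrime → ∀ (K : ℝ) (m M : ℕ), 0 ≤ K → m ≤ M →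
      Dt P * ((m:ℝ)+1)^(td P) ≤ K * HF P m →
      Dt P * ((M:ℝ)+1)^(td P) ≤ (K * (2 * (n + 1))^n) * HF P M := by
    intro P hP K m M hK hmM h
    refine (Dt_growth h hmM hK).trans ?_
    apply mul_le_mul_of_nonneg_right _ (Nat.cast_nonneg _)
    apply mul_le_mul_of_nonneg_left _ hK
    have htn := td_le P
    have htn' : (td P : ℝ) ≤ n := by exact_mod_cast htn
    calc (2 * ((td P:ℝ) + 1))^(td P) ≤ (2 * (n + 1))^(td P) :=
          pow_le_pow_left₀ (by positivity) (by linarith) _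
      _ ≤ _ := pow_le_pow_right₀ (by linarith [n.cast_nonneg (α := ℝ)]) htn
  induction j with
  | zero =>
    refine ⟨K0 * (2 * (n + 1))^n, by positivity, ?_⟩
    intro P hP hj δ hδ m hm
    have : ⊥ = P := eq_of_td_le bot_le (by rw [td_bot]; omega)
    exact hgrow P hP K0 0 m hK0.le (Nat.zero_le _) (hbot P this.symm)
  | succ j ih =>
    obtain ⟨K, hK, ih⟩ := ih
    have hKB := KB_pos n
    have hKB1 := one_le_KB n
    refine ⟨(K0 + KB n ^ n * K) * (2 * (n + 1))^n, by positivity, ?_⟩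
    intro P hP hj δ hδ m hm
    have hex : ∃ δ, CutBy P δ := ⟨δ, hδ⟩
    obtain ⟨δ', hδ', hmin, hle⟩ : ∃ δ', CutBy P δ' ∧ (∀ d < δ', ¬ CutBy P d) ∧ δ' ≤ δ :=
      ⟨Nat.find hex, Nat.find_spec hex, fun d hd => Nat.find_min hex hd, Nat.find_le hδ⟩
    rcases Nat.eq_zero_or_pos δ' with h0 | hpos
    · subst h0
      have : ⊥ = P := hδ' ⊥ Ideal.isPrime_bot bot_le (by
        intro f hf hd
        by_contra hfb
        have := one_le_deg hP.ne_top hf hfb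
        omega)
      apply hgrow P hP _ 0 m (by positivity) (Nat.zero_le _)
      refine (hbot P this.symm).trans ?_
      apply mul_le_mul_of_nonneg_right _ (Nat.cast_nonneg _)
      have : 0 ≤ KB n ^ n * K := by positivity
      linarith
    · obtain ⟨d, rfl⟩ : ∃ d, δ' = d + 1 := ⟨δ' - 1, by omega⟩
      have hnot := hmin d (by omega)
      unfold CutBy at hnot
      push Not at hnot
      obtain ⟨Q0, hQ0, hQ0P, hQ0f, hne⟩ := hnot
      have hsp : Ideal.span {f | f ∈ P ∧ f.totalDegree ≤ d} ≤ Q0 := by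
        rw [Ideal.span_le]; rintro f ⟨h1, h2⟩; exact hQ0f f h1 h2
      obtain ⟨Q, hQ, hQQ0⟩ := Ideal.exists_minimalPrimes_le hsp
      have hQp : Q.IsPrime := hQ.1.1
      have hQlt : Q < P := lt_of_le_of_lt hQQ0 (lt_of_le_of_ne hQ0P hne)
      have hQf : ∀ f ∈ P, f.totalDegree ≤ d → f ∈ Q := fun f h1 h2 => hQ.1.2 (Ideal.subset_span ⟨h1, h2⟩)
      have hQcut : CutBy Q d := by
        intro Q' hQ' hQ'Q hf
        refine le_antisymm hQ'Q (hQ.2 ⟨hQ', ?_⟩ hQ'Q)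
        rw [Ideal.span_le]
        rintro f ⟨h1, h2⟩
        exact hf f (hQf f h1 h2) h2
      have htlt := td_lt hQlt
      have htn := td_le Q
      have h1 := ih Q hQp (by omega) d hQcut d le_rfl
      have h2 : (HF Q d : ℝ) ≤ HF P d := by exact_mod_cast HF_le_of_low hQlt.le hQf
      obtain ⟨k, hk⟩ : ∃ k, td Q = td P + k := ⟨td Q - td P, by omega⟩
      have h3 := cut_chain hδ' k Q hQp hQlt.le hk
      apply hgrow P hP _ d m (by positivity) (by omega)
      have hb : KB n ^ k ≤ KB n ^ n := pow_le_pow_right₀ hKB1 (by omega)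
      calc Dt P * ((d:ℝ)+1)^(td P) ≤ ((KB n * ((d+1:ℕ):ℝ))^k * Dt Q) * ((d:ℝ)+1)^(td P) :=
            mul_le_mul_of_nonneg_right h3 (by positivity)
        _ = KB n ^ k * (Dt Q * ((d:ℝ)+1)^(td Q)) := by rw [hk, mul_pow, pow_add]; push_cast; ring
        _ ≤ KB n ^ n * (K * HF P d) := by
            have hDQ := Dt_pos Q
            apply mul_le_mul hb (h1.trans (mul_le_mul_of_nonneg_left h2 hK)) (by positivity) (by positivity)
        _ ≤ _ := by
            rw [add_mul, mul_assoc]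
            have : 0 ≤ K0 * HF P d := by positivity
            linarith

lemma cp_bound (n : ℕ) : ∃ K : ℝ, 0 < K ∧ ∀ P : Ideal (MvPolynomial (Fin n) ℂ), P.IsPrime →
    ∀ δ, CutBy P δ → ∀ m, δ ≤ m → Dt P * ((m:ℝ)+1)^(td P) ≤ K * HF P m := by
  obtain ⟨K, hK, h⟩ := cp_aux (n := n) n
  refine ⟨K + 1, by linarith, fun P hP δ hδ m hm => (h P hP (by omega) δ hδ m hm).trans ?_⟩
  apply mul_le_mul_of_nonneg_right (by linarith) (Nat.cast_nonneg _)
end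


/-! ### Zero sets of primes -/
section
variable {n : ℕ}

abbrev ZZ (I : Ideal (MvPolynomial (Fin n) ℂ)) : Set (Fin n → ℂ) := zeroLocus n (I : Set (MvPolynomial (Fin n) ℂ))

lemma mem_ZZ {I : Ideal (MvPolynomial (Fin n) ℂ)} {x : Fin n → ℂ} : x ∈ ZZ I ↔ ∀ f ∈ I, eval x f = 0 := Iff.rfl

lemma mem_vI {V : Set (Fin n → ℂ)} {f : MvPolynomial (Fin n) ℂ} : f ∈ vanishingIdeal n V ↔ ∀ x ∈ V, eval x f = 0 := Iff.rfl

lemma vI_ZZ (P : Ideal (MvPolynomial (Fin n) ℂ)) [hP : P.IsPrime] : vanishingIdeal n (ZZ P) = P := by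
  have h := MvPolynomial.IsPrime.vanishingIdeal_zeroLocus (k := ℂ) (K := ℂ) P
  conv_rhs => rw [← h]
  ext f
  simp only [mem_vI, mem_ZZ, MvPolynomial.mem_vanishingIdeal_iff, MvPolynomial.mem_zeroLocus_iff, MvPolynomial.aeval_eq_eval]

lemma ZZ_nonempty (P : Ideal (MvPolynomial (Fin n) ℂ)) [hP : P.IsPrime] : (ZZ P).Nonempty := by
  by_contra h
  rw [Set.not_nonempty_iff_eq_empty] at h
  have := vI_ZZ P
  apply hP.ne_top
  rw [Ideal.eq_top_iff_one, ← this, mem_vI, h]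
  simp

lemma ZZ_anti {I J : Ideal (MvPolynomial (Fin n) ℂ)} (h : I ≤ J) : ZZ J ⊆ ZZ I := fun _ hx f hf => hx f (h hf)

lemma vI_anti {V W : Set (Fin n → ℂ)} (h : V ⊆ W) : vanishingIdeal n W ≤ vanishingIdeal n V := fun _ hf x hx => hf x (h hx)

lemma ZZ_subset_iff {P : Ideal (MvPolynomial (Fin n) ℂ)} [P.IsPrime] {J : Ideal (MvPolynomial (Fin n) ℂ)} :
    ZZ P ⊆ ZZ J ↔ J ≤ P := by
  refine ⟨fun h => ?_, ZZ_anti⟩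
  rw [← vI_ZZ P]
  exact fun f hf x hx => h hx f hf

lemma vI_pt_maximal (x : Fin n → ℂ) : (vanishingIdeal n {x}).IsMaximal := by
  have : vanishingIdeal n {x} = RingHom.ker (eval x : MvPolynomial (Fin n) ℂ →+* ℂ) := by
    ext f; simp [mem_vI, RingHom.mem_ker]
  rw [this]
  apply RingHom.ker_isMaximal_of_surjective
  intro c; exact ⟨C c, by simp⟩

lemma ZZ_ncard_le_one (P : Ideal (MvPolynomial (Fin n) ℂ)) [hP : P.IsPrime] (hf : (ZZ P).Finite) : (ZZ P).ncard ≤ 1 := by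
  classical
  have h1 : hf.toFinset.inf (fun x => vanishingIdeal n {x}) ≤ P := by
    intro f h
    rw [← vI_ZZ P, mem_vI]
    intro x hx
    have := (Submodule.mem_finsetInf.mp h) x (by simpa using hx)
    exact this x rfl
  obtain ⟨x, hx, hxP⟩ := (Ideal.IsPrime.inf_le' hP).mp h1
  have := (vI_pt_maximal x).eq_of_le hP.ne_top hxP
  rw [Set.ncard_le_one_iff_eq hf]
  right
  refine ⟨x, ?_⟩
  ext z
  constructor
  · intro hz
    rw [← this] at hz
    ext i
    have := hz (X i - C (x i)) (by show _ ∈ vanishingIdeal n {x}; simp [mem_vI])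
    simpa [sub_eq_zero] using this
  · rintro rfl
    simpa using hx

lemma deg_upper (hs : List (MvPolynomial (Fin n) ℂ)) : ∀ P : Ideal (MvPolynomial (Fin n) ℂ), P.IsPrime →
    (∀ h ∈ hs, h.totalDegree ≤ 1) → (ZZ P ∩ zeroLocus n {h | h ∈ hs}).Finite →
    ((ZZ P ∩ zeroLocus n {h | h ∈ hs}).ncard : ℝ) ≤ KB n ^ hs.length * Dt P := by
  classical
  have hKB1 := one_le_KB n
  have hKB := KB_pos n
  induction hs with
  | nil =>
    intro P hP _ hf
    have e : (ZZ P ∩ zeroLocus n {h | h ∈ ([] : List (MvPolynomial (Fin n) ℂ))}) = ZZ P := by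
      ext x; simp [zeroLocus]
    rw [e] at hf ⊢
    have h1 : ((ZZ P).ncard : ℝ) ≤ 1 := by exact_mod_cast ZZ_ncard_le_one P hf
    simpa using h1.trans (one_le_Dt P)
  | cons h hs ih =>
    intro P hP hd hf
    have e : (ZZ P ∩ zeroLocus n {g | g ∈ h :: hs}) = (ZZ P ∩ zeroLocus n {h}) ∩ zeroLocus n {g | g ∈ hs} := by
      ext x; simp [zeroLocus, and_assoc]
    have hDP := Dt_pos P
    by_cases hP' : h ∈ P
    · have e2 : ZZ P ∩ zeroLocus n {h} = ZZ P := by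
        ext x; constructor
        · exact fun h => h.1
        · intro hx; refine ⟨hx, ?_⟩
          rintro f rfl; exact hx _ hP'
      rw [e, e2] at hf ⊢
      refine (ih P hP (fun g hg => hd g (by simp [hg])) hf).trans ?_
      apply mul_le_mul_of_nonneg_right _ hDP.le
      exact pow_le_pow_right₀ hKB1 (by simp)
    · have hfin : (P ⊔ Ideal.span {h}).minimalPrimes.Finite := Ideal.finite_minimalPrimes_of_isNoetherianRing _ _
      set S := hfin.toFinset with hSdef
      have hS : ∀ Q ∈ S, Q.IsPrime ∧ P ≤ Q ∧ h ∈ Q ∧ td P = td Q + 1 := by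
        intro Q hQ
        rw [hSdef, Set.Finite.mem_toFinset] at hQ
        have hQp : Q.IsPrime := hQ.1.1
        refine ⟨hQ.1.1, le_sup_left.trans hQ.1.2, ?_, td_cut hP' hQ⟩
        exact hQ.1.2 (Ideal.mem_sup_right (Ideal.mem_span_singleton_self h))
      have hsub : (ZZ P ∩ zeroLocus n {g | g ∈ h :: hs}) ⊆ ⋃ Q ∈ S, (ZZ Q ∩ zeroLocus n {g | g ∈ hs}) := by
        rw [e]
        rintro x ⟨⟨h1, h2⟩, h3⟩
        have hle : P ⊔ Ideal.span {h} ≤ vanishingIdeal n {x} := by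
          apply sup_le
          · intro f hf; rw [mem_vI]; rintro _ rfl; exact h1 f hf
          · rw [Ideal.span_singleton_le_iff_mem, mem_vI]; rintro _ rfl; exact h2 h rfl
        have := (vI_pt_maximal x).isPrime
        obtain ⟨Q, hQ, hQx⟩ := Ideal.exists_minimalPrimes_le hle
        simp only [Set.mem_iUnion]
        refine ⟨Q, by simpa [hSdef] using hQ, ?_, h3⟩
        intro f hf; exact hQx hf x rfl
      have hsubQ : ∀ Q ∈ S, (ZZ Q ∩ zeroLocus n {g | g ∈ hs}) ⊆ (ZZ P ∩ zeroLocus n {g | g ∈ h :: hs}) := by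
        intro Q hQ
        rw [e]
        rintro x ⟨h1, h2⟩
        refine ⟨⟨ZZ_anti (hS Q hQ).2.1 h1, ?_⟩, h2⟩
        rintro f rfl; exact h1 _ (hS Q hQ).2.2.1
      have hbz := bezout hP' (hd h (by simp)) le_rfl S hS
      have hfU : (⋃ Q ∈ S, (ZZ Q ∩ zeroLocus n {g | g ∈ hs})).Finite :=
        hf.subset (Set.iUnion₂_subset hsubQ)
      have h1 : ((ZZ P ∩ zeroLocus n {g | g ∈ h :: hs}).ncard : ℝ) ≤ ∑ Q ∈ S, ((ZZ Q ∩ zeroLocus n {g | g ∈ hs}).ncard : ℝ) := by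
        have := (Set.ncard_le_ncard hsub hfU).trans (Finset.set_ncard_biUnion_le S _)
        exact_mod_cast this
      calc _ ≤ _ := h1
        _ ≤ ∑ Q ∈ S, KB n ^ hs.length * Dt Q := by
          apply Finset.sum_le_sum
          intro Q hQ
          exact ih Q (hS Q hQ).1 (fun g hg => hd g (by simp [hg])) (hf.subset (hsubQ Q hQ))
        _ = KB n ^ hs.length * ∑ Q ∈ S, Dt Q := by rw [Finset.mul_sum]
        _ ≤ KB n ^ hs.length * (KB n * (1:ℕ) * Dt P) := mul_le_mul_of_nonneg_left hbz (by positivity)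
        _ = _ := by simp [pow_succ]; ring

/-- An affine subspace is cut out by `n` polynomials of degree at most one. -/
lemma aff_eqs (L : AffineSubspace ℂ (Fin n → ℂ)) (hL : (L : Set (Fin n → ℂ)).Nonempty) :
    ∃ hs : List (MvPolynomial (Fin n) ℂ), hs.length = n ∧ (∀ h ∈ hs, h.totalDegree ≤ 1) ∧
      (L : Set (Fin n → ℂ)) = zeroLocus n {h | h ∈ hs} := by
  classical
  obtain ⟨p, hp⟩ := hL
  obtain ⟨W, hW⟩ := L.direction.exists_isCompl
  set f : (Fin n → ℂ) →ₗ[ℂ] (Fin n → ℂ) := W.subtype ∘ₗ (W.projectionOnto L.direction hW.symm)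
  have hf : LinearMap.ker f = L.direction := by
    rw [LinearMap.ker_comp_of_ker_eq_bot _ (Submodule.ker_subtype _)]
    simp
  have hev : ∀ x i, eval x (∑ j, C (f (Pi.single j 1) i) * (X j - C (p j)) : MvPolynomial (Fin n) ℂ) = f (x - p) i := by
    intro x i
    have hx : x - p = ∑ j, (x j - p j) • (Pi.single j 1 : Fin n → ℂ) := by
      ext k; simp [Pi.single_apply]
    conv_rhs => rw [hx, map_sum]
    simp only [map_sum, map_mul, eval_C, map_sub, eval_X, map_smul, Finset.sum_apply, Pi.smul_apply, smul_eq_mul]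
    exact Finset.sum_congr rfl fun j _ => mul_comm _ _
  refine ⟨List.ofFn fun i => ∑ j, C (f (Pi.single j 1) i) * (X j - C (p j)), by simp, ?_, ?_⟩
  · intro h hh
    rw [List.mem_ofFn] at hh
    obtain ⟨i, rfl⟩ := hh
    apply MvPolynomial.totalDegree_finsetSum_le
    intro j _
    refine (totalDegree_mul _ _).trans ?_
    rw [totalDegree_C, zero_add]
    refine (totalDegree_sub_C_le _ _).trans ?_
    exact (totalDegree_X (R := ℂ) j).le
  · ext x
    rw [SetLike.mem_coe, ← AffineSubspace.vsub_right_mem_direction_iff_mem hp, ← hf, LinearMap.mem_ker, funext_iff]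
    simp only [zeroLocus, Set.mem_ofPred_eq, List.mem_ofFn, forall_exists_index, forall_apply_eq_imp_iff, hev]
    rfl

lemma deg_upper' (P : Ideal (MvPolynomial (Fin n) ℂ)) [hP : P.IsPrime] (L : AffineSubspace ℂ (Fin n → ℂ))
    (hf : (ZZ P ∩ ↑L).Finite) : ((ZZ P ∩ ↑L).ncard : ℝ) ≤ KB n ^ n * Dt P := by
  rcases (L : Set (Fin n → ℂ)).eq_empty_or_nonempty with h | h
  · have := KB_pos n
    have := Dt_pos P
    rw [h]; simp; positivity
  · obtain ⟨hs, hl, hd, he⟩ := aff_eqs L h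
    rw [he] at hf ⊢
    have := deg_upper hs P hP hd hf
    rwa [hl] at this
end


/-! ### Lower bound for the degree -/
section
variable {n : ℕ}

lemma lift_pt (P : Ideal (MvPolynomial (Fin n) ℂ)) [hP : P.IsPrime] {S : Type} [CommRing S]
    (φ : S →+* (MvPolynomial (Fin n) ℂ ⧸ P)) (hφ : φ.IsIntegral) (ψ : S →+* ℂ) (ι : ℂ → S)
    (hι : ∀ c, φ (ι c) = Ideal.Quotient.mk P (C c)) (hψ : ∀ c, ψ (ι c) = c)
    (hk : RingHom.ker φ ≤ RingHom.ker ψ) :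
    ∃ x ∈ ZZ P, ∀ s g, Ideal.Quotient.mk P g = φ s → eval x g = ψ s := by
  let _ : Algebra S (MvPolynomial (Fin n) ℂ ⧸ P) := φ.toAlgebra
  have : Algebra.IsIntegral S (MvPolynomial (Fin n) ℂ ⧸ P) := ⟨hφ⟩
  have hm : (RingHom.ker ψ).IsMaximal :=
    RingHom.ker_isMaximal_of_surjective ψ (fun c => ⟨ι c, hψ c⟩)
  obtain ⟨Q, hQ, hQk⟩ := Ideal.exists_ideal_over_maximal_of_isIntegral (S := MvPolynomial (Fin n) ℂ ⧸ P)
    (RingHom.ker ψ) hk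
  have hM : (Q.comap (Ideal.Quotient.mk P)).IsMaximal :=
    Ideal.comap_isMaximal_of_surjective _ Ideal.Quotient.mk_surjective
  obtain ⟨x, hx⟩ := MvPolynomial.isMaximal_iff_eq_vanishingIdeal_singleton.mp hM
  have hmem : ∀ g, Ideal.Quotient.mk P g ∈ Q → eval x g = 0 := by
    intro g hg
    have h1 : g ∈ Q.comap (Ideal.Quotient.mk P) := hg
    rw [hx, MvPolynomial.mem_vanishingIdeal_singleton_iff] at h1
    simpa [MvPolynomial.aeval_eq_eval] using h1
  refine ⟨x, ?_, ?_⟩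
  · intro f hf
    apply hmem
    rw [Ideal.Quotient.eq_zero_iff_mem.mpr hf]
    exact Q.zero_mem
  · intro s g hg
    have h1 : s - ι (ψ s) ∈ Q.comap (algebraMap S (MvPolynomial (Fin n) ℂ ⧸ P)) := by
      rw [hQk, RingHom.mem_ker, map_sub, hψ, sub_self]
    have h2 : φ (s - ι (ψ s)) ∈ Q := h1
    rw [map_sub, hι, ← hg, ← map_sub] at h2
    have := hmem _ h2
    rw [map_sub, eval_C, sub_eq_zero] at this
    exact this

lemma affine_rep {f : MvPolynomial (Fin n) ℂ} (hf : f.totalDegree ≤ 1) :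
    ∃ (L : (Fin n → ℂ) →ₗ[ℂ] ℂ) (b : ℂ), ∀ x, eval x f = L x + b := by
  have h1 : f ∈ lspan (X : Fin n → MvPolynomial (Fin n) ℂ) := by
    rw [← pow_one (lspan X), lspan_pow_eq]
    exact ⟨f, by simpa [mem_restrictTotalDegree] using hf, by simp⟩
  clear hf
  induction h1 using Submodule.span_induction with
  | mem x hx =>
    rcases hx with rfl | ⟨i, rfl⟩
    · exact ⟨0, 1, by simp⟩
    · exact ⟨LinearMap.proj i, 0, by simp⟩
  | zero => exact ⟨0, 0, by simp⟩
  | add p q _ _ hp hq =>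
    obtain ⟨L, b, h⟩ := hp
    obtain ⟨L', b', h'⟩ := hq
    exact ⟨L + L', b + b', fun x => by simp [h, h']; ring⟩
  | smul a p _ hp =>
    obtain ⟨L, b, h⟩ := hp
    exact ⟨a • L, a * b, fun x => by simp [smul_eval, h]; ring⟩

/-- Upper bound of the Hilbert function by the degree of a primitive element. -/
lemma HF_prim {P : Ideal (MvPolynomial (Fin n) ℂ)} [hP : P.IsPrime] {r : ℕ}
    {y : Fin r → MvPolynomial (Fin n) ℂ ⧸ P}
    {Z : Submodule ℂ (MvPolynomial (Fin n) ℂ ⧸ P)} (hZ : Z.FG) (hM : ∀ M, Aq P M ≤ Z * lspan y ^ M)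
    (u : MvPolynomial (Fin n) ℂ ⧸ P) (D : ℕ) (q : MvPolynomial (Fin n) ℂ ⧸ P) (hq : q ≠ 0)
    (h : ∀ a : MvPolynomial (Fin n) ℂ ⧸ P, ∃ g : Fin D → MvPolynomial (Fin r) ℂ,
      q * a = ∑ i, aeval y (g i) * u ^ (i : ℕ)) :
    ∃ c : ℕ, ∀ M, HF P M ≤ D * (c + M + 1) ^ r := by
  classical
  set W : Submodule ℂ (MvPolynomial (Fin n) ℂ ⧸ P) := Submodule.span ℂ (range fun i : Fin D => u ^ (i : ℕ))
  have hWfg : W.FG := Submodule.fg_span (finite_range _)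
  have hWrank : Module.finrank ℂ W ≤ D := by
    have := finrank_range_le_card (R := ℂ) (fun i : Fin D => u ^ (i : ℕ))
    rw [Fintype.card_fin] at this
    exact this
  have hmono : ∀ {c c' : ℕ}, c ≤ c' → lspan y ^ c ≤ lspan y ^ c' := by
    intro c c' hcc
    exact pow_le_pow_right₀ (by rw [Submodule.one_le]; exact one_mem_lspan y) hcc
  have h1 : ∀ a, ∃ c, q * a ∈ W * lspan y ^ c := by
    intro a
    obtain ⟨g, hg⟩ := h a
    refine ⟨Finset.univ.sup fun i => (g i).totalDegree, ?_⟩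
    rw [hg]
    apply Submodule.sum_mem
    intro i _
    rw [mul_comm]
    apply Submodule.mul_mem_mul (Submodule.subset_span (mem_range_self i))
    rw [lspan_pow_eq]
    refine ⟨g i, ?_, rfl⟩
    have := Finset.le_sup (f := fun i => (g i).totalDegree) (Finset.mem_univ i)
    simpa [mem_restrictTotalDegree] using this
  choose cc hcc using h1
  obtain ⟨S, hS⟩ := hZ
  set c := S.sup cc
  have h2 : ∀ z ∈ Z, q * z ∈ W * lspan y ^ c := by
    intro z hz
    rw [← hS] at hz
    induction hz using Submodule.span_induction with
    | mem x hx => exact (mul_le_mul' le_rfl (hmono (Finset.le_sup hx))) (hcc x)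
    | zero => simp
    | add a b _ _ ha hb => rw [mul_add]; exact add_mem ha hb
    | smul t a _ ha => rw [mul_smul_comm]; exact Submodule.smul_mem _ _ ha
  refine ⟨c, fun M => ?_⟩
  have h3 : (Aq P M).map (LinearMap.mulLeft ℂ q) ≤ W * lspan y ^ (c + M) := by
    rintro _ ⟨a, ha, rfl⟩
    have ha' := hM M ha
    rw [LinearMap.mulLeft_apply, pow_add, ← mul_assoc]
    clear ha
    induction ha' using Submodule.mul_induction_on' with
    | mem_mul_mem z hz t ht => rw [← mul_assoc]; exact Submodule.mul_mem_mul (h2 z hz) ht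
    | add a _ b _ ha hb => rw [mul_add]; exact add_mem ha hb
  have hfg : (W * lspan y ^ (c + M)).FG := hWfg.mul ((lspan_fg y).pow _)
  have h4 : Module.finrank ℂ ((Aq P M).map (LinearMap.mulLeft ℂ q)) = HF P M := by
    rw [← LinearMap.range_domRestrict]
    apply LinearMap.finrank_range_of_inj
    intro a b hab
    exact Subtype.ext (mul_left_cancel₀ hq hab)
  rw [← h4]
  calc _ ≤ _ := finrank_mono_fg hfg h3
    _ ≤ _ := finrank_mul_le' _ _ hWfg ((lspan_fg y).pow _)
    _ ≤ _ := Nat.mul_le_mul hWrank (finrank_lspan_pow_le y _)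
end


section
variable {n : ℕ}

lemma deg_lower (P : Ideal (MvPolynomial (Fin n) ℂ)) [hP : P.IsPrime] :
    ∃ L : AffineSubspace ℂ (Fin n → ℂ), Module.finrank ℂ L.direction = n - td P ∧
      (ZZ P ∩ ↑L).Finite ∧ Dt P ≤ 2 * (4 * ((n:ℝ) + 1)) ^ n * (ZZ P ∩ ↑L).ncard := by
  classical
  obtain ⟨r, hr, y, hy1, hyi, Z, hZ, hM⟩ : ∃ r, r = td P ∧ ∃ y : Fin r → MvPolynomial (Fin n) ℂ ⧸ P,
      (∀ i, y i ∈ Aq P 1) ∧ AlgebraicIndependent ℂ y ∧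
      ∃ Z : Submodule ℂ (MvPolynomial (Fin n) ℂ ⧸ P), Z.FG ∧ ∀ M, Aq P M ≤ Z * lspan y ^ M :=
    ⟨_, rfl, nn_td P⟩
  choose lf hlf1 hlf using fun i => exists_mem_Aq (hy1 i)
  choose Lf bf hLf using fun i => affine_rep (hlf1 i)
  rw [← hr]
  let B : Type := MvPolynomial (Fin r) ℂ
  let A : Type := MvPolynomial (Fin n) ℂ ⧸ P
  let _ : Algebra B A := (aeval y).toAlgebra
  let _ : Module B A := Algebra.toModule
  have halg : ∀ b : B, algebraMap B A b = aeval y b := fun b => rfl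
  have hfin : Module.Finite B A := nn_finite hZ (Aq_exh hM)
  have hint : Algebra.IsIntegral B A := inferInstance
  have hinj : Function.Injective (algebraMap B A) := hyi
  have hfaith : FaithfulSMul B A := (faithfulSMul_iff_algebraMap_injective B A).mpr hinj
  obtain ⟨u, q, hq, hprim, s, t, ρ, hρ, hst⟩ := prim_data B A
  set f := minpoly B u with hfdef
  have hfm : f.Monic := minpoly.monic (hint.isIntegral u)
  set D := f.natDegree with hD
  have hf0 : f ≠ 0 := hfm.ne_zero
  -- the bound for the Hilbert function
  obtain ⟨c, hc⟩ := HF_prim hZ hM u D (algebraMap B A q) (by rwa [Ne, map_eq_zero_iff _ hinj]) (by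
    intro a
    obtain ⟨g, hg, hga⟩ := hprim a
    refine ⟨fun i => g.coeff i, ?_⟩
    rw [← Algebra.smul_def, hga, Polynomial.aeval_eq_sum_range' (n := D) (by
      rw [Polynomial.degree_eq_natDegree hf0] at hg
      rcases eq_or_ne g 0 with rfl | hg0
      · simp only [Polynomial.natDegree_zero]
        rcases Nat.eq_zero_or_pos D with h0 | h0
        · exfalso
          have := hfm.natDegree_eq_zero.mp h0
          exact minpoly.ne_one B u this
        · exact h0
      · rwa [Polynomial.natDegree_lt_iff_degree_lt hg0]), Finset.sum_range]
    apply Finset.sum_congr rfl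
    intro i _
    rw [Algebra.smul_def]; rfl)
  have hDt : Dt P ≤ 2 * (4 * ((n:ℝ) + 1)) ^ n * D := by
    obtain ⟨m, hm⟩ := Dt_eventually P
    set M := max m c
    have h1 := hm M (le_max_left _ _)
    rw [← hr] at h1
    have h2 : (HF P M : ℝ) ≤ D * (c + M + 1)^r := by exact_mod_cast hc M
    have h3 : (c + M + 1 : ℝ) ≤ 2 * (M + 1) := by
      have : (c : ℝ) ≤ M := by exact_mod_cast le_max_right m c
      linarith
    have h4 : ((c:ℝ) + M + 1)^r ≤ 2 ^ r * (M+1)^r := by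
      rw [← mul_pow]; exact pow_le_pow_left₀ (by positivity) h3 _
    have hrn : r ≤ n := hr ▸ td_le P
    have hrn' : (r:ℝ) ≤ n := by exact_mod_cast hrn
    have h5 : (2 * ((r:ℝ) + 1))^r * 2^r ≤ (4 * ((n:ℝ) + 1)) ^ n := by
      rw [← mul_pow]
      calc (2 * ((r:ℝ) + 1) * 2)^r ≤ (4 * ((n:ℝ) + 1)) ^ r := pow_le_pow_left₀ (by positivity) (by linarith) _
        _ ≤ _ := pow_le_pow_right₀ (by linarith [n.cast_nonneg (α := ℝ)]) hrn
    have hp : (0:ℝ) < ((M:ℝ)+1)^r := by positivity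
    refine le_of_mul_le_mul_right ?_ hp
    calc Dt P * ((M:ℝ)+1)^r ≤ 2 * (2 * ((r:ℝ) + 1))^r * HF P M := h1
      _ ≤ 2 * (2 * ((r:ℝ) + 1))^r * (D * (2^r * (M+1)^r)) := by gcongr; exact h2.trans (by gcongr)
      _ = 2 * ((2 * ((r:ℝ) + 1))^r * 2^r) * D * (M+1)^r := by ring
      _ ≤ _ := by gcongr
  -- the generic fibre
  obtain ⟨c0, hc0⟩ := exists_eval_ne ρ hρ
  have hfib : ∀ e : Fin r → ℂ, ∃ x ∈ ZZ P, ∀ i, eval x (lf i) = e i := by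
    intro e
    obtain ⟨x, hx, h⟩ := lift_pt P (algebraMap B A) hint.isIntegral (eval e) C
      (by intro c; rw [halg]; exact aeval_C y c) (fun c => eval_C c) (by
        intro b hb
        rw [RingHom.mem_ker, map_eq_zero_iff _ hinj] at hb
        rw [hb]; exact Ideal.zero_mem _)
    exact ⟨x, hx, fun i => (h (X i) (lf i) (by rw [hlf, halg, aeval_X])).trans (eval_X i)⟩
  obtain ⟨U, hU⟩ := Ideal.Quotient.mk_surjective u
  have hroot : ∀ θ : ℂ, Polynomial.eval₂ (eval c0) θ f = 0 → ∃ x ∈ ZZ P, (∀ i, eval x (lf i) = c0 i) ∧ eval x U = θ := by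
    intro θ hθ
    obtain ⟨x, hx, h⟩ := lift_pt P (S := Polynomial B) (Polynomial.aeval u : Polynomial B →ₐ[B] A).toRingHom (by
        intro a
        refine ⟨(minpoly B a).map Polynomial.C, (minpoly.monic (hint.isIntegral a)).map _, ?_⟩
        rw [Polynomial.eval₂_map]
        have e : (Polynomial.aeval u : Polynomial B →ₐ[B] A).toRingHom.comp Polynomial.C = algebraMap B A := by
          exact RingHom.ext fun b => Polynomial.aeval_C u b
        rw [e]
        exact minpoly.aeval B a)
      (Polynomial.eval₂RingHom (eval c0) θ) (fun c => Polynomial.C (C c))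
      (by intro c
          show Polynomial.aeval u (Polynomial.C (C c)) = _
          rw [Polynomial.aeval_C, halg]; exact aeval_C y c)
      (fun c => (Polynomial.eval₂_C _ _).trans (eval_C c)) (by
        intro b hb
        have hb' : Polynomial.aeval u b = 0 := hb
        obtain ⟨g, rfl⟩ := minpoly.isIntegrallyClosed_dvd (hint.isIntegral u) hb'
        rw [RingHom.mem_ker, map_mul]
        have : Polynomial.eval₂RingHom (eval c0) θ (minpoly B u) = 0 := hθ
        rw [this, zero_mul])
    refine ⟨x, hx, fun i => ?_, ?_⟩
    · exact (h (Polynomial.C (X i)) (lf i) (by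
        show _ = Polynomial.aeval u _
        rw [hlf, Polynomial.aeval_C, halg, aeval_X])).trans ((Polynomial.eval₂_C _ _).trans (eval_X i))
    · simpa using h Polynomial.X U (by
        show _ = Polynomial.aeval u _
        rw [hU, Polynomial.aeval_X])
  -- linear subspace
  let Λ : (Fin n → ℂ) →ₗ[ℂ] (Fin r → ℂ) := LinearMap.pi Lf
  have hΛ : Function.Surjective Λ := by
    intro e
    obtain ⟨x, -, hx⟩ := hfib (e + bf)
    refine ⟨x, ?_⟩
    ext i
    have := hx i
    rw [hLf] at this
    simpa [Λ] using this
  obtain ⟨x0, hx0, hx0e⟩ := hfib c0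
  set L := AffineSubspace.mk' x0 (LinearMap.ker Λ) with hL
  have hmemL : ∀ x, x ∈ L ↔ ∀ i, eval x (lf i) = c0 i := by
    intro x
    rw [hL, AffineSubspace.mem_mk', LinearMap.mem_ker, vsub_eq_sub, map_sub, sub_eq_zero, _root_.funext_iff]
    refine forall_congr' fun i => ?_
    rw [← hx0e i, hLf, hLf]
    simp [Λ]
  -- finiteness
  have hfinite : (ZZ P ∩ ↑L).Finite := by
    set p : Fin n → Polynomial B := fun i => minpoly B (Ideal.Quotient.mk P (X i) : A)
    have hsub : (ZZ P ∩ ↑L) ⊆ Set.pi univ (fun i => {z : ℂ | Polynomial.eval₂ (eval c0) z (p i) = 0}) := by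
      rintro x ⟨hx, hxL⟩ i -
      have hxL' := (hmemL x).mp hxL
      let ev : A →+* ℂ := Ideal.Quotient.lift P (eval x) hx
      have hev : ev.comp (algebraMap B A) = eval c0 := by
        apply MvPolynomial.ringHom_ext
        · intro c
          rw [RingHom.comp_apply, halg, aeval_C]
          show ev (Ideal.Quotient.mk P (C c)) = _
          exact (eval_C c).trans (eval_C c).symm
        · intro j
          rw [RingHom.comp_apply, halg, aeval_X, ← hlf j]
          exact (hxL' j).trans (eval_X j).symm
      have h0 : Polynomial.aeval (Ideal.Quotient.mk P (X i) : A) (p i) = 0 := minpoly.aeval _ _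
      have h1 := congrArg ev h0
      rw [Polynomial.aeval_def, Polynomial.hom_eval₂, hev, map_zero] at h1
      have h2 : ev (Ideal.Quotient.mk P (X i)) = x i := eval_X i
      rw [h2] at h1
      exact h1
    refine (Set.Finite.pi (fun i => ?_)).subset hsub
    have hpm : (p i).Monic := minpoly.monic (hint.isIntegral _)
    have hne : (p i).map (eval c0) ≠ 0 := (hpm.map _).ne_zero
    refine (((p i).map (eval c0)).roots.toFinset.finite_toSet).subset ?_
    intro z hz
    have hz' : Polynomial.eval₂ (eval c0) z (p i) = 0 := hz
    simp only [Finset.mem_coe, Multiset.mem_toFinset, Polynomial.mem_roots hne, Polynomial.IsRoot,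
      Polynomial.eval_map]
    exact hz'
  refine ⟨L, ?_, hfinite, hDt.trans ?_⟩
  · rw [hL, AffineSubspace.direction_mk']
    have h1 := LinearMap.finrank_range_add_finrank_ker Λ
    rw [LinearMap.range_eq_top.mpr hΛ] at h1
    simp at h1
    omega
  · apply mul_le_mul_of_nonneg_left _ (by positivity)
    norm_cast
    set g : Polynomial ℂ := f.map (eval c0) with hg
    have hgm : g.Monic := hfm.map _
    have hgd : g.natDegree = D := hfm.natDegree_map _
    have hsep : g.Separable := by
      have h1 := congrArg (Polynomial.map (eval c0)) hst
      rw [Polynomial.map_add, Polynomial.map_mul, Polynomial.map_mul, Polynomial.map_C,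
        ← Polynomial.derivative_map] at h1
      refine ⟨Polynomial.C (eval c0 ρ)⁻¹ * s.map (eval c0), Polynomial.C (eval c0 ρ)⁻¹ * t.map (eval c0), ?_⟩
      rw [mul_assoc, mul_assoc, ← mul_add]
      refine (congrArg _ h1).trans ?_
      rw [← Polynomial.C_mul, inv_mul_cancel₀ hc0, Polynomial.C_1]
    have hcard : g.roots.toFinset.card = D := by
      rw [Multiset.toFinset_card_of_nodup (Polynomial.nodup_roots hsep), ← hgd]
      exact (IsAlgClosed.splits g).natDegree_eq_card_roots.symm
    rw [← hcard, ← Set.ncard_coe_finset]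
    have hsub : (↑g.roots.toFinset : Set ℂ) ⊆ (fun x => eval x U) '' (ZZ P ∩ ↑L) := by
      intro θ hθ
      have hθ' : Polynomial.eval₂ (eval c0) θ f = 0 := by
        have : g.IsRoot θ := by simpa [hgm.ne_zero] using hθ
        rwa [Polynomial.IsRoot, hg, Polynomial.eval_map] at this
      obtain ⟨x, hx, h1, h2⟩ := hroot θ hθ'
      exact ⟨x, ⟨hx, (hmemL x).mpr h1⟩, h2⟩
    exact (Set.ncard_le_ncard hsub (hfinite.image _)).trans (Set.ncard_image_le hfinite)
end


/-! ### Bridge: varieties and primes -/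
section
variable {n : ℕ}

lemma IsIrredVariety.prime {V : Set (Fin n → ℂ)} (hV : IsIrredVariety n V) : (vanishingIdeal n V).IsPrime := by
  obtain ⟨-, ⟨x, hx⟩, hirr⟩ := hV
  refine ⟨?_, ?_⟩
  · intro h
    have h1 : (1 : MvPolynomial (Fin n) ℂ) ∈ vanishingIdeal n V := by rw [h]; trivial
    simpa using h1 x hx
  · intro f g hfg
    have h := hirr (zeroLocus n {f}) (zeroLocus n {g}) ⟨_, rfl⟩ ⟨_, rfl⟩ (by
      intro z hz
      have := hfg z hz
      rw [map_mul, mul_eq_zero] at this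
      rcases this with h | h
      · left; rintro _ rfl; exact h
      · right; rintro _ rfl; exact h)
    rcases h with h | h
    · left; intro z hz; exact h hz f rfl
    · right; intro z hz; exact h hz g rfl

lemma IsIrredVariety.ZZ_eq {V : Set (Fin n → ℂ)} (hV : IsIrredVariety n V) : ZZ (vanishingIdeal n V) = V := by
  obtain ⟨⟨I, hI⟩, -, -⟩ := hV
  apply Subset.antisymm
  · intro x hx
    rw [hI]
    intro f hf
    apply hx
    intro z hz
    rw [hI] at hz
    exact hz f hf
  · intro x hx f hf
    exact hf x hx

lemma irred_ZZ (P : Ideal (MvPolynomial (Fin n) ℂ)) [hP : P.IsPrime] : IsIrredVariety n (ZZ P) := by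
  refine ⟨⟨_, rfl⟩, ZZ_nonempty P, ?_⟩
  rintro _ _ ⟨I, rfl⟩ ⟨J, rfl⟩ h
  by_contra! hcon
  obtain ⟨h1, h2⟩ := hcon
  rw [Set.not_subset] at h1 h2
  obtain ⟨x, hx, hxI⟩ := h1
  obtain ⟨z, hz, hzJ⟩ := h2
  simp only [zeroLocus, Set.mem_ofPred_eq] at hxI hzJ
  push Not at hxI hzJ
  obtain ⟨f, hfI, hfx⟩ := hxI
  obtain ⟨g, hgJ, hgz⟩ := hzJ
  have hfg : f * g ∈ P := by
    rw [← vI_ZZ P]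
    intro w hw
    rw [map_mul, mul_eq_zero]
    rcases h hw with h | h
    · left; exact h f hfI
    · right; exact h g hgJ
  rcases hP.mem_or_mem hfg with h | h
  · exact hfx (hx f h)
  · exact hgz (hz g h)

lemma td_pt (x : Fin n → ℂ) : td (vanishingIdeal n {x}) = 0 := by
  have := (vI_pt_maximal x).isPrime
  by_contra hne
  obtain ⟨y, -, hy, -⟩ := nn_td (vanishingIdeal n {x})
  let i : Fin (td (vanishingIdeal n {x})) := ⟨0, Nat.pos_of_ne_zero hne⟩
  have ht := hy.transcendental i
  apply ht
  obtain ⟨g, hg⟩ := Ideal.Quotient.mk_surjective (y i)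
  have : y i = algebraMap ℂ _ (eval x g) := by
    rw [← hg]
    show _ = Ideal.Quotient.mk _ (C (eval x g))
    rw [Ideal.Quotient.eq, mem_vI]
    rintro _ rfl
    simp
  rw [this]
  exact isAlgebraic_algebraMap _

lemma chain_le {V : Set (Fin n → ℂ)} {P : Ideal (MvPolynomial (Fin n) ℂ)} [hP : P.IsPrime] (hV : V ⊆ ZZ P)
    {k : ℕ} (h : HasChain n V k) : k ≤ td P := by
  obtain ⟨W, hW, hlt, hl⟩ := h
  have key : ∀ i : ℕ, ∀ hi : i < k + 1, i ≤ td (vanishingIdeal n (W ⟨i, hi⟩)) := by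
    intro i
    induction i with
    | zero => intro _; exact Nat.zero_le _
    | succ i ih =>
      intro hi
      have h1 := ih (by omega)
      have h2 := hlt ⟨i, by omega⟩ ⟨i+1, hi⟩ (by simp)
      have p1 := (hW ⟨i, by omega⟩).prime
      have p2 := (hW ⟨i+1, hi⟩).prime
      have h3 : vanishingIdeal n (W ⟨i+1, hi⟩) < vanishingIdeal n (W ⟨i, by omega⟩) := by
        refine lt_of_le_of_ne (vI_anti h2.1) ?_
        intro he
        apply h2.2
        rw [← (hW ⟨i, by omega⟩).ZZ_eq, ← he, (hW ⟨i+1, hi⟩).ZZ_eq]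
      have := td_lt h3
      omega
  have p := (hW (Fin.last k)).prime
  have h1 : k ≤ td (vanishingIdeal n (W (Fin.last k))) := key k (by omega)
  have h2 : P ≤ vanishingIdeal n (W (Fin.last k)) := by
    rw [← vI_ZZ P]; exact vI_anti (hl.trans hV)
  exact h1.trans (td_anti h2)

lemma chain_exists (k : ℕ) : ∀ P : Ideal (MvPolynomial (Fin n) ℂ), P.IsPrime → td P = k → HasChain n (ZZ P) k := by
  induction k with
  | zero =>
    intro P hP _
    refine ⟨fun _ => ZZ P, fun _ => irred_ZZ P, ?_, Subset.rfl⟩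
    intro i j hij
    exact absurd hij (by simp)
  | succ k ih =>
    intro P hP ht
    obtain ⟨x, hx⟩ := ZZ_nonempty P
    have hle : P ≤ vanishingIdeal n {x} := by
      intro f hf; rintro _ rfl; exact hx f hf
    have hpm := (vI_pt_maximal x).isPrime
    have hne : ∃ g ∈ vanishingIdeal n {x}, g ∉ P := by
      by_contra! hcon
      have : P = vanishingIdeal n {x} := le_antisymm hle hcon
      rw [this, td_pt] at ht
      omega
    obtain ⟨g, hg, hgP⟩ := hne
    obtain ⟨Q, hQ, hlt, -, -, hQt, -⟩ := cut_one hle hg hgP le_rfl (one_le_deg hpm.ne_top hg hgP)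
    obtain ⟨W, hW, hWlt, hWl⟩ := ih Q hQ (by omega)
    have hss : ZZ Q ⊂ ZZ P := ⟨ZZ_anti hlt.le, fun h => by
      rw [ZZ_subset_iff] at h; exact absurd h (not_le_of_gt hlt)⟩
    refine ⟨Fin.snoc (α := fun _ => Set (Fin n → ℂ)) W (ZZ P), ?_, ?_, ?_⟩
    · intro i
      refine Fin.lastCases ?_ (fun i => ?_) i
      · simpa using irred_ZZ P
      · simpa using hW i
    · intro i j hij
      obtain ⟨i, rfl⟩ : ∃ i', i = Fin.castSucc i' := ⟨i.castPred (by
        intro h; rw [h] at hij; exact absurd (Fin.le_last j) (not_le_of_gt hij)), by simp⟩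
      revert hij
      refine Fin.lastCases ?_ (fun j => ?_) j
      · intro _
        simp only [Fin.snoc_castSucc, Fin.snoc_last]
        refine lt_of_le_of_lt ?_ hss
        rcases eq_or_lt_of_le (Fin.le_last i) with h | h
        · rw [h]; exact hWl
        · exact (hWlt _ _ h).1.trans hWl
      · intro hij
        simp only [Fin.snoc_castSucc]
        exact hWlt i j (by simpa using hij)
    · simp

lemma dim_ZZ (P : Ideal (MvPolynomial (Fin n) ℂ)) [hP : P.IsPrime] : dim n (ZZ P) = td P :=
  IsGreatest.csSup_eq ⟨chain_exists _ P hP rfl, fun _ hk => chain_le Subset.rfl hk⟩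

lemma degree_le (P : Ideal (MvPolynomial (Fin n) ℂ)) [hP : P.IsPrime] : (degree n (ZZ P) : ℝ) ≤ KB n ^ n * Dt P := by
  have hK := KB_pos n
  have hD := Dt_pos P
  have h0 : (0:ℝ) ≤ KB n ^ n * Dt P := by positivity
  refine (Nat.le_floor_iff h0).mp ?_
  unfold degree
  obtain ⟨L, hL, hf, -⟩ := deg_lower P
  refine csSup_le ⟨_, L, by rw [dim_ZZ, hL], hf, rfl⟩ ?_
  rintro _ ⟨L, -, hf, rfl⟩
  exact Nat.le_floor (deg_upper' P L hf)

lemma le_degree (P : Ideal (MvPolynomial (Fin n) ℂ)) [hP : P.IsPrime] :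
    Dt P ≤ 2 * (4 * ((n:ℝ) + 1)) ^ n * degree n (ZZ P) := by
  obtain ⟨L, hL, hf, hD⟩ := deg_lower P
  refine hD.trans (mul_le_mul_of_nonneg_left ?_ (by positivity))
  norm_cast
  refine le_csSup ⟨⌊KB n ^ n * Dt P⌋₊, ?_⟩ ⟨L, by rw [dim_ZZ, hL], hf, rfl⟩
  rintro _ ⟨L, -, hf, rfl⟩
  exact Nat.le_floor (deg_upper' P L hf)

lemma maxComp_iff (p : Ideal (MvPolynomial (Fin n) ℂ)) [hp : p.IsPrime] (F : Finset (MvPolynomial (Fin n) ℂ)) (e : ℕ) :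
    MaxCompDimEq n (zeroLocus n ↑F) (ZZ p) e ↔
      (∀ Q : Ideal (MvPolynomial (Fin n) ℂ), Q.IsPrime → Q ≤ p → (∀ f ∈ F, f ∈ Q) → td Q ≤ e) ∧
      (∃ Q : Ideal (MvPolynomial (Fin n) ℂ), Q.IsPrime ∧ Q ≤ p ∧ (∀ f ∈ F, f ∈ Q) ∧ td Q = e) := by
  have hcomp : ∀ Q : Ideal (MvPolynomial (Fin n) ℂ), Q.IsPrime → Q ≤ p → (∀ f ∈ F, f ∈ Q) →
      ∃ W, IsIrredComponent n W (zeroLocus n ↑F) ∧ ZZ p ⊆ W ∧ td Q ≤ dim n W := by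
    intro Q hQ hQp hF
    have hle : Ideal.span (F : Set (MvPolynomial (Fin n) ℂ)) ≤ Q := Ideal.span_le.mpr hF
    obtain ⟨M, hM, hMQ⟩ := Ideal.exists_minimalPrimes_le hle
    have hMp : M.IsPrime := hM.1.1
    refine ⟨ZZ M, ⟨irred_ZZ M, ?_, ?_⟩, ZZ_anti (hMQ.trans hQp), ?_⟩
    · intro x hx f hf; exact hx f (hM.1.2 (Ideal.subset_span hf))
    · intro W' hW' hMW hWF
      have := hW'.prime
      have h1 : Ideal.span (F : Set (MvPolynomial (Fin n) ℂ)) ≤ vanishingIdeal n W' :=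
        Ideal.span_le.mpr fun f hf x hx => hWF hx f hf
      have h2 : vanishingIdeal n W' ≤ M := by
        rw [← vI_ZZ M]; exact vI_anti hMW
      rw [← hW'.ZZ_eq, le_antisymm h2 (hM.2 ⟨this, h1⟩ h2)]
    · rw [dim_ZZ]; exact td_anti hMQ
  have hback : ∀ W, IsIrredComponent n W (zeroLocus n ↑F) → ZZ p ⊆ W →
      (vanishingIdeal n W).IsPrime ∧ vanishingIdeal n W ≤ p ∧ (∀ f ∈ F, f ∈ vanishingIdeal n W) ∧
      td (vanishingIdeal n W) = dim n W := by
    intro W hW hpW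
    have hpr := hW.1.prime
    refine ⟨hpr, ?_, fun f hf x hx => hW.2.1 hx f hf, ?_⟩
    · rw [← vI_ZZ p]; exact vI_anti hpW
    · conv_rhs => rw [← hW.1.ZZ_eq, dim_ZZ]
  constructor
  · rintro ⟨⟨W, hW, hpW, hd⟩, hall⟩
    refine ⟨fun Q hQ hQp hF => ?_, ?_⟩
    · obtain ⟨W', hW', h1, h2⟩ := hcomp Q hQ hQp hF
      exact h2.trans (hall W' hW' h1)
    · obtain ⟨h1, h2, h3, h4⟩ := hback W hW hpW
      exact ⟨_, h1, h2, h3, h4.trans hd⟩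
  · rintro ⟨hall, Q, hQ, hQp, hF, hd⟩
    have hall' : ∀ W, IsIrredComponent n W (zeroLocus n ↑F) → ZZ p ⊆ W → dim n W ≤ e := by
      intro W hW hpW
      obtain ⟨h1, h2, h3, h4⟩ := hback W hW hpW
      rw [← h4]; exact hall _ h1 h2 h3
    refine ⟨?_, hall'⟩
    obtain ⟨W, hW, hpW, hle⟩ := hcomp Q hQ hQp hF
    exact ⟨W, hW, hpW, le_antisymm (hall' W hW hpW) (hd ▸ hle)⟩

/-- Primes below `p` containing all elements of `p` of degree at most `δ` have dimension at most `e`. -/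
def DL (p : Ideal (MvPolynomial (Fin n) ℂ)) (δ e : ℕ) : Prop :=
  ∀ Q : Ideal (MvPolynomial (Fin n) ℂ), Q.IsPrime → Q ≤ p → (∀ f ∈ p, f.totalDegree ≤ δ → f ∈ Q) → td Q ≤ e

lemma exists_exact (p : Ideal (MvPolynomial (Fin n) ℂ)) [hp : p.IsPrime] {i : ℕ} (hi : 1 ≤ i) (hin : i ≤ n)
    (J : Finset (MvPolynomial (Fin n) ℂ)) :
    (∀ f ∈ J, f ∈ p) →
    (∀ Q : Ideal (MvPolynomial (Fin n) ℂ), Q.IsPrime → Q ≤ p → (∀ f ∈ J, f ∈ Q) → td Q ≤ n - i) →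
    ∃ F ⊆ J, MaxCompDimEq n (zeroLocus n ↑F) (ZZ p) (n - i) := by
  classical
  induction J using Finset.strongInduction with
  | H J ih =>
    intro hJp hJ
    by_cases hex : ∃ f ∈ J, ∀ Q : Ideal (MvPolynomial (Fin n) ℂ), Q.IsPrime → Q ≤ p →
        (∀ g ∈ J.erase f, g ∈ Q) → td Q ≤ n - i
    · obtain ⟨f, hf, h⟩ := hex
      obtain ⟨F, hF, hm⟩ := ih (J.erase f) (Finset.erase_ssubset hf)
        (fun g hg => hJp g (Finset.mem_of_mem_erase hg)) h
      exact ⟨F, hF.trans (Finset.erase_subset _ _), hm⟩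
    · push Not at hex
      refine ⟨J, Finset.Subset.refl _, (maxComp_iff p J _).mpr ⟨hJ, ?_⟩⟩
      rcases J.eq_empty_or_nonempty with rfl | ⟨f, hf⟩
      · have := hJ ⊥ Ideal.isPrime_bot bot_le (by simp)
        rw [td_bot] at this
        omega
      · obtain ⟨Q, hQ, hQp, hQJ, ht⟩ := hex f hf
        have hfQ : f ∉ Q := by
          intro hfQ
          have := hJ Q hQ hQp (fun g hg => by
            by_cases h : g = f
            · rwa [h]
            · exact hQJ g (Finset.mem_erase.mpr ⟨h, hg⟩))
          omega
        obtain ⟨W, hW, hlt, hWp, hfW, htW, -⟩ := cut_one hQp (hJp f hf) hfQ le_rfl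
          (one_le_deg hp.ne_top (hJp f hf) hfQ)
        have hWJ : ∀ g ∈ J, g ∈ W := fun g hg => by
          by_cases h : g = f
          · rwa [h]
          · exact hlt.le (hQJ g (Finset.mem_erase.mpr ⟨h, hg⟩))
        have := hJ W hW hWp hWJ
        exact ⟨W, hW, hWp, hWJ, by omega⟩

lemma exists_fin (p : Ideal (MvPolynomial (Fin n) ℂ)) (S : Set (MvPolynomial (Fin n) ℂ)) (hS : S ⊆ p) :
    ∃ J : Finset (MvPolynomial (Fin n) ℂ), ↑J ⊆ S ∧ Ideal.span (J : Set (MvPolynomial (Fin n) ℂ)) = Ideal.span S := by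
  have hfg : (Submodule.span (MvPolynomial (Fin n) ℂ) S).FG := IsNoetherian.noetherian _
  obtain ⟨J, hJ, he⟩ := Submodule.fg_span_iff_fg_span_finset_subset S |>.mp hfg
  exact ⟨J, hJ, he.symm⟩

lemma pd_nonempty (p : Ideal (MvPolynomial (Fin n) ℂ)) [hp : p.IsPrime] {i : ℕ} (hi : 1 ≤ i) (hin : i ≤ n - td p)
    {δ : ℕ} (h : DL p δ (n - i)) : ∃ F : Finset (MvPolynomial (Fin n) ℂ),
    (∀ f ∈ F, f.totalDegree ≤ δ) ∧ ZZ p ⊆ zeroLocus n ↑F ∧ MaxCompDimEq n (zeroLocus n ↑F) (ZZ p) (n - i) := by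
  obtain ⟨J, hJ, he⟩ := exists_fin p {f | f ∈ p ∧ f.totalDegree ≤ δ} (fun f hf => hf.1)
  obtain ⟨F, hF, hm⟩ := exists_exact p hi (by omega) J (fun f hf => (hJ hf).1) (by
    intro Q hQ hQp hQJ
    apply h Q hQ hQp
    intro f hf hfd
    have h1 : Ideal.span (J : Set (MvPolynomial (Fin n) ℂ)) ≤ Q := Ideal.span_le.mpr hQJ
    rw [he] at h1
    exact h1 (Ideal.subset_span ⟨hf, hfd⟩))
  exact ⟨F, fun f hf => (hJ (hF hf)).2, fun x hx f hf => hx f (hJ (hF hf)).1, hm⟩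

lemma pd_spec (p : Ideal (MvPolynomial (Fin n) ℂ)) [hp : p.IsPrime] {i : ℕ} (hi : 1 ≤ i) (hin : i ≤ n - td p) :
    DL p (partialDeg n (ZZ p) i) (n - i) ∧ ∀ δ, δ < partialDeg n (ZZ p) i → ¬ DL p δ (n - i) := by
  have e : partialDeg n (ZZ p) i = sInf { δ | ∃ I : Finset (MvPolynomial (Fin n) ℂ),
    (∀ f ∈ I, f.totalDegree ≤ δ) ∧ ZZ p ⊆ zeroLocus n ↑I ∧
      MaxCompDimEq n (zeroLocus n ↑I) (ZZ p) (n - i) } := by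
    unfold partialDeg; rw [if_neg (by omega)]
  rw [e]
  refine ⟨?_, fun δ hδ hDL => Nat.notMem_of_lt_sInf hδ (pd_nonempty p hi hin hDL)⟩
  have hne : { δ | ∃ I : Finset (MvPolynomial (Fin n) ℂ),
    (∀ f ∈ I, f.totalDegree ≤ δ) ∧ ZZ p ⊆ zeroLocus n ↑I ∧
      MaxCompDimEq n (zeroLocus n ↑I) (ZZ p) (n - i) }.Nonempty := by
    obtain ⟨G, hG⟩ : p.FG := IsNoetherian.noetherian p
    refine ⟨G.sup totalDegree, pd_nonempty p hi hin ?_⟩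
    intro Q hQ hQp h
    have : p ≤ Q := by
      rw [← hG, Submodule.span_le]
      intro f hf
      exact h f (hG ▸ Ideal.subset_span hf) (Finset.le_sup (f := totalDegree) hf)
    have h2 := td_anti this
    omega
  obtain ⟨F, hFd, hFp, hm⟩ := Nat.sInf_mem hne
  have h := ((maxComp_iff p F _).mp hm).1
  intro Q hQ hQp hf
  apply h Q hQ hQp
  intro f hfF
  refine hf f ?_ (hFd f hfF)
  rw [← vI_ZZ p]
  exact fun x hx => hFp hx f hfF
end


/-! ### The counting argument -/
section
variable {n : ℕ}

lemma HF_inf_le (I J : Ideal (MvPolynomial (Fin n) ℂ)) (m : ℕ) : HF (I ⊓ J) m ≤ HF I m + HF J m := by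
  have hI : I ⊓ J ≤ I := inf_le_left
  have hJ : I ⊓ J ≤ J := inf_le_right
  have eI : (Aq (I ⊓ J) m).map (Ideal.Quotient.factorₐ ℂ hI).toLinearMap = Aq I m := by
    unfold Aq
    rw [← Submodule.map_comp]
    rfl
  have eJ : (Aq (I ⊓ J) m).map (Ideal.Quotient.factorₐ ℂ hJ).toLinearMap = Aq J m := by
    unfold Aq
    rw [← Submodule.map_comp]
    rfl
  let f1 : ↥(Aq (I ⊓ J) m) →ₗ[ℂ] ↥(Aq I m) :=
    (Ideal.Quotient.factorₐ ℂ hI).toLinearMap.restrict (fun x hx => eI ▸ Submodule.mem_map_of_mem hx)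
  let f2 : ↥(Aq (I ⊓ J) m) →ₗ[ℂ] ↥(Aq J m) :=
    (Ideal.Quotient.factorₐ ℂ hJ).toLinearMap.restrict (fun x hx => eJ ▸ Submodule.mem_map_of_mem hx)
  have : Module.Finite ℂ ↥(Aq I m) := Module.Finite.iff_fg.2 (Aq_fg I m)
  have : Module.Finite ℂ ↥(Aq J m) := Module.Finite.iff_fg.2 (Aq_fg J m)
  unfold HF
  rw [← Module.finrank_prod]
  apply LinearMap.finrank_le_finrank_of_injective (f := f1.prod f2)
  rw [← LinearMap.ker_eq_bot, LinearMap.ker_eq_bot']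
  rintro ⟨a, ha⟩ h0
  obtain ⟨f, hf, rfl⟩ := exists_mem_Aq ha
  have h1 : Ideal.Quotient.mk I f = 0 := congrArg (fun z => (z.1 : MvPolynomial (Fin n) ℂ ⧸ I)) h0
  have h2 : Ideal.Quotient.mk J f = 0 := congrArg (fun z => (z.2 : MvPolynomial (Fin n) ℂ ⧸ J)) h0
  exact Subtype.ext (Ideal.Quotient.eq_zero_iff_mem.mpr
    ⟨Ideal.Quotient.eq_zero_iff_mem.mp h1, Ideal.Quotient.eq_zero_iff_mem.mp h2⟩)

lemma HF_top (m : ℕ) : HF (⊤ : Ideal (MvPolynomial (Fin n) ℂ)) m = 0 := by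
  unfold HF
  have : Subsingleton (MvPolynomial (Fin n) ℂ ⧸ (⊤ : Ideal (MvPolynomial (Fin n) ℂ))) :=
    Ideal.Quotient.subsingleton_iff.mpr rfl
  have : Subsingleton ↥(Aq (⊤ : Ideal (MvPolynomial (Fin n) ℂ)) m) := inferInstance
  exact Module.finrank_zero_of_subsingleton

lemma HF_finset_inf {ι : Type*} (T : Finset ι) (I : ι → Ideal (MvPolynomial (Fin n) ℂ)) (m : ℕ) :
    HF (T.inf I) m ≤ ∑ t ∈ T, HF (I t) m := by
  classical
  induction T using Finset.induction_on with
  | empty => simp [HF_top]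
  | insert a T ha ih =>
    rw [Finset.inf_insert, Finset.sum_insert ha]
    exact (HF_inf_le _ _ m).trans (Nat.add_le_add_left ih _)

lemma exists_vanish {ι : Type*} (T : Finset ι) (I : ι → Ideal (MvPolynomial (Fin n) ℂ))
    (Q : Ideal (MvPolynomial (Fin n) ℂ)) {m : ℕ} (h : ∑ t ∈ T, HF (I t) m < HF Q m) :
    ∃ f, f.totalDegree ≤ m ∧ (∀ t ∈ T, f ∈ I t) ∧ f ∉ Q := by
  by_contra! hcon
  set J := T.inf I
  have h1 : HF (Q ⊓ J) m ≤ HF J m := HF_le_of_low inf_le_right (by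
    intro f hf hfd
    exact ⟨hcon f hfd (fun t ht => (Finset.inf_le ht : J ≤ I t) hf), hf⟩)
  have h2 : HF Q m ≤ HF (Q ⊓ J) m := HF_anti inf_le_left m
  have h3 : HF J m ≤ ∑ t ∈ T, HF (I t) m := HF_finset_inf T I m
  omega

lemma DL_s (p : Ideal (MvPolynomial (Fin n) ℂ)) [hp : p.IsPrime] {s : ℕ} (hs : s ≤ n - td p) :
    DL p (partialDeg n (ZZ p) s) (n - s) := by
  rcases Nat.eq_zero_or_pos s with rfl | h
  · intro Q hQ _ _
    exact td_le Q
  · exact (pd_spec p h hs).1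

lemma minimal_exists (p : Ideal (MvPolynomial (Fin n) ℂ)) [hp : p.IsPrime] {s : ℕ} (hs : s ≤ n - td p)
    (hadm : s < n - td p → partialDeg n (ZZ p) s < partialDeg n (ZZ p) (s + 1)) :
    ∃ Q : Ideal (MvPolynomial (Fin n) ℂ), Q.IsPrime ∧ Q ≤ p ∧ td Q = n - s ∧ CutBy Q (partialDeg n (ZZ p) s) ∧
      ∀ f, (s < n - td p → f.totalDegree < partialDeg n (ZZ p) (s + 1)) → f ∈ p → f ∈ Q := by
  have hD := DL_s p hs
  have htn := td_le p
  rcases Nat.eq_or_lt_of_le hs with he | hlt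
  · refine ⟨p, hp, le_rfl, by omega, ?_, fun f _ h => h⟩
    intro Q hQ hQp h
    have := hD Q hQ hQp h
    exact eq_of_td_le hQp (by omega)
  · have ha := hadm hlt
    obtain ⟨δ, hδ⟩ : ∃ δ, partialDeg n (ZZ p) (s + 1) = δ + 1 := ⟨partialDeg n (ZZ p) (s + 1) - 1, by omega⟩
    have hb := (pd_spec p (i := s + 1) (by omega) (by omega)).2 δ (by omega)
    unfold DL at hb
    push Not at hb
    obtain ⟨Q, hQ, hQp, hQf, ht⟩ := hb
    have h1 := hD Q hQ hQp (fun f hf hfd => hQf f hf (by omega))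
    refine ⟨Q, hQ, hQp, by omega, ?_, fun f hf hfp => hQf f hfp (by have := hf hlt; omega)⟩
    intro Q' hQ' hQ'Q h
    have := hD Q' hQ' (hQ'Q.trans hQp) (fun f hf hfd => h f (hQf f hf (by omega)) hfd)
    exact eq_of_td_le hQ'Q (by omega)

lemma Dt_chain (p : Ideal (MvPolynomial (Fin n) ℂ)) [hp : p.IsPrime] (k : ℕ) :
    ∀ i W, i + k = n - td p → W.IsPrime → W ≤ p → td W = n - i →
      Dt p ≤ KB n ^ k * (∏ j ∈ Finset.Icc (i + 1) (n - td p), (partialDeg n (ZZ p) j : ℝ)) * Dt W := by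
  have hK := KB_pos n
  have htn := td_le p
  induction k with
  | zero =>
    intro i W hi hW hWp ht
    have : W = p := eq_of_td_le hWp (by omega)
    subst this
    rw [Finset.Icc_eq_empty (by omega)]
    simp
  | succ k ih =>
    intro i W hi hW hWp ht
    have hDL := (pd_spec p (i := i + 1) (by omega) (by omega)).1
    have hex : ∃ f ∈ p, f.totalDegree ≤ partialDeg n (ZZ p) (i + 1) ∧ f ∉ W := by
      by_contra! hcon
      have := hDL W hW hWp hcon
      omega
    obtain ⟨f, hfp, hfd, hfW⟩ := hex
    obtain ⟨W', hW', -, hW'p, -, htW', hDt⟩ := cut_one hWp hfp hfW hfd ((one_le_deg hp.ne_top hfp hfW).trans hfd)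
    have h1 := ih (i + 1) W' (by omega) hW' hW'p (by omega)
    have e : Finset.Icc (i + 1) (n - td p) = insert (i + 1) (Finset.Icc (i + 1 + 1) (n - td p)) := by
      ext j; simp; omega
    rw [e, Finset.prod_insert (by simp)]
    refine h1.trans ?_
    have hpos : (0:ℝ) ≤ ∏ j ∈ Finset.Icc (i + 1 + 1) (n - td p), (partialDeg n (ZZ p) j : ℝ) :=
      Finset.prod_nonneg fun _ _ => Nat.cast_nonneg _
    calc _ ≤ KB n ^ k * (∏ j ∈ Finset.Icc (i + 1 + 1) (n - td p), (partialDeg n (ZZ p) j : ℝ)) *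
          (KB n * (partialDeg n (ZZ p) (i + 1)) * Dt W) :=
          mul_le_mul_of_nonneg_left hDt (mul_nonneg (by positivity) hpos)
      _ = _ := by ring

lemma Delta_le (p : Ideal (MvPolynomial (Fin n) ℂ)) [hp : p.IsPrime] {s : ℕ} (hs : s ≤ n - td p)
    (W : Ideal (MvPolynomial (Fin n) ℂ)) [hW : W.IsPrime] (hWp : W ≤ p) (ht : td W = n - s) :
    Delta n (ZZ p) s ≤ KB n ^ n * KB n ^ n * Dt W := by
  have hK := KB_pos n
  have hK1 := one_le_KB n
  have hD1 := one_le_Dt W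
  unfold Delta
  rw [dim_ZZ]
  have h1 : (1:ℝ) ≤ KB n ^ n * KB n ^ n := one_le_mul_of_one_le_of_one_le (one_le_pow₀ hK1) (one_le_pow₀ hK1)
  refine max_le ?_ (one_le_mul_of_one_le_of_one_le h1 hD1)
  set Pr := ∏ j ∈ Finset.Icc (s + 1) (n - td p), (partialDeg n (ZZ p) j : ℝ)
  have hpos : (0:ℝ) ≤ Pr := Finset.prod_nonneg fun _ _ => Nat.cast_nonneg _
  have h2 := Dt_chain p (n - td p - s) s W (by omega) hW hWp ht
  have h3 := degree_le p
  have h4 : KB n ^ (n - td p - s) ≤ KB n ^ n := pow_le_pow_right₀ hK1 (by omega)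
  apply div_le_of_le_mul₀ hpos (by positivity)
  calc (degree n (ZZ p) : ℝ) ≤ KB n ^ n * Dt p := h3
    _ ≤ KB n ^ n * (KB n ^ (n - td p - s) * Pr * Dt W) := mul_le_mul_of_nonneg_left h2 (by positivity)
    _ ≤ KB n ^ n * (KB n ^ n * Pr * Dt W) := by gcongr
    _ = _ := by ring

lemma core (n : ℕ) : ∃ κ : ℝ, 0 < κ ∧ ∀ (p : Ideal (MvPolynomial (Fin n) ℂ)), p.IsPrime → ∀ s l : ℕ, s ≤ n - td p →
    (s < n - td p → partialDeg n (ZZ p) s < partialDeg n (ZZ p) (s + 1)) → l < td p →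
    ∀ T : Finset (Set (Fin n → ℂ)), (∀ t ∈ T, IsIrredVariety n t ∧ dim n t = l) →
    ∀ m : ℕ, partialDeg n (ZZ p) s ≤ m → (s < n - td p → m < partialDeg n (ZZ p) (s + 1)) →
    κ * degFamilyIrred n T < ((m:ℝ) + 1) ^ (n - (s + l)) * Delta n (ZZ p) s →
    ∃ f : MvPolynomial (Fin n) ℂ, f.totalDegree ≤ m ∧ (∀ t ∈ T, ∀ x ∈ t, eval x f = 0) ∧ f ∉ p := by
  obtain ⟨K, hK, hcp⟩ := cp_bound n
  have hKB := KB_pos n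
  set K1 : ℝ := 2 * (4 * ((n:ℝ) + 1)) ^ n with hK1
  have hK1pos : 0 < K1 := by positivity
  refine ⟨KB n ^ n * KB n ^ n * (K * K1), by positivity, ?_⟩
  intro p hp s l hs hadm hl T hT m hm hm' hlt
  obtain ⟨Q, hQ, hQp, hQt, hcut, hQf⟩ := minimal_exists p hs hadm
  have hΔ := Delta_le p hs Q hQp hQt
  have hlow := hcp Q hQ _ hcut m hm
  have htn := td_le p
  have hup : ((∑ t ∈ T, HF (vanishingIdeal n t) m : ℕ) : ℝ) ≤ K1 * degFamilyIrred n T * ((m:ℝ)+1)^l := by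
    unfold degFamilyIrred
    push_cast
    rw [Finset.mul_sum, Finset.sum_mul]
    apply Finset.sum_le_sum
    intro t ht
    obtain ⟨hirr, hdim⟩ := hT t ht
    have hpr := hirr.prime
    have htd : td (vanishingIdeal n t) = l := by rw [← dim_ZZ, hirr.ZZ_eq, hdim]
    have h1 := HF_le_Dt (vanishingIdeal n t) m
    have h2 := le_degree (vanishingIdeal n t)
    rw [hirr.ZZ_eq] at h2
    rw [htd] at h1
    exact h1.trans (mul_le_mul_of_nonneg_right h2 (by positivity))
  have hstrict : ∑ t ∈ T, HF (vanishingIdeal n t) m < HF Q m := by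
    have hE : n - s = l + (n - (s + l)) := by omega
    rw [hQt, hE, pow_add] at hlow
    have hc : (0:ℝ) < KB n ^ n * KB n ^ n := by positivity
    have hM : (0:ℝ) < ((m:ℝ)+1)^l := by positivity
    have hMa : (0:ℝ) < ((m:ℝ)+1)^(n - (s + l)) := by positivity
    set c := KB n ^ n * KB n ^ n
    set G : ℝ := (degFamilyIrred n T : ℝ)
    have h1 : c * (K * K1) * G < c * (((m:ℝ)+1)^(n - (s + l)) * Dt Q) := by
      refine hlt.trans_le ?_
      calc _ ≤ ((m:ℝ)+1)^(n - (s + l)) * (c * Dt Q) := mul_le_mul_of_nonneg_left hΔ hMa.le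
        _ = _ := by ring
    have h2 : K * K1 * G < ((m:ℝ)+1)^(n - (s + l)) * Dt Q := by
      rw [mul_assoc] at h1; exact lt_of_mul_lt_mul_left h1 hc.le
    have h3 : K * (K1 * G * ((m:ℝ)+1)^l) < K * HF Q m := by
      refine lt_of_lt_of_le ?_ hlow
      calc K * (K1 * G * ((m:ℝ)+1)^l) = (K * K1 * G) * ((m:ℝ)+1)^l := by ring
        _ < (((m:ℝ)+1)^(n - (s + l)) * Dt Q) * ((m:ℝ)+1)^l := mul_lt_mul_of_pos_right h2 hM
        _ = _ := by ring
    have h4 := lt_of_mul_lt_mul_left h3 hK.le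
    exact_mod_cast hup.trans_lt h4
  obtain ⟨f, hfd, hfT, hfQ⟩ := exists_vanish T (fun t => vanishingIdeal n t) Q hstrict
  refine ⟨f, hfd, fun t ht x hx => hfT t ht x hx, fun hfp => hfQ (hQf f (fun h => ?_) hfp)⟩
  exact lt_of_le_of_lt hfd (hm' h)
end

/-- Theorem 4.6 of the paper, generalised Siegel lemma: given a finite set
`T` of `l`-dimensional irreducible varieties with `deg T ∈ ℛ^l_{s,τ_l}(V)` for an admissible
`s`, there is a polynomial of controlled degree vanishing on every member of `T` but not
identically on `V`. -/
theorem statement14 (n l d : ℕ) (hl : l < d) (hd : d ≤ n) :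
    ∃ τ0 : ℝ, 0 < τ0 ∧
      ∀ τl : ℝ, 0 < τl → τl ≤ τ0 →
        ∃ C : ℝ, 0 < C ∧
          ∀ T : Finset (Set (Fin n → ℂ)),
            (∀ t ∈ T, IsIrredVariety n t ∧ dim n t = l) →
            ∀ V : Set (Fin n → ℂ), IsIrredVariety n V → dim n V = d →
              ∀ s : ℕ, s ≤ n - d → Admissible n V s →
                (degFamilyIrred n T : ℝ) ∈ RlSet n τl l V s →
                ∃ P : MvPolynomial (Fin n) ℂ,
                  (P.totalDegree : ℝ) ≤
                    C * ((degFamilyIrred n T : ℝ) / Delta n V s) ^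
                      ((1 : ℝ) / ((n : ℝ) - ((s : ℝ) + (l : ℝ)))) ∧
                  (∀ t ∈ T, ∀ x ∈ t, eval x P = 0) ∧ P ∉ vanishingIdeal n V := by
  obtain ⟨κ, hκ, hcore⟩ := core n
  refine ⟨1 / (2 * κ), by positivity, ?_⟩
  intro τ hτ hτ0
  refine ⟨2 + 1 / τ + κ, by positivity, ?_⟩
  intro T hT V hV hdim s hs hadm hR
  have hZ : ZZ (vanishingIdeal n V) = V := hV.ZZ_eq
  haveI hpr : (vanishingIdeal n V).IsPrime := hV.prime
  have htd : td (vanishingIdeal n V) = d := by rw [← dim_ZZ, hZ, hdim]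
  have hc := hcore _ hpr s l
  rw [hZ, htd] at hc
  have hlt : s < n - d → partialDeg n V s < partialDeg n V (s + 1) := by
    intro h
    unfold Admissible partialDegE at hadm
    rw [hdim, if_pos hs, if_pos (by omega)] at hadm
    have h2 : 2 * s * partialDeg n V s < partialDeg n V (s + 1) := by exact_mod_cast hadm
    rcases Nat.eq_zero_or_pos s with h0 | h0
    · have : partialDeg n V s = 0 := by simp [partialDeg, h0]
      rw [this]; omega
    · nlinarith
  have hD : 1 ≤ Delta n V s := le_max_right _ _
  set D := Delta n V s
  set N : ℝ := (degFamilyIrred n T : ℝ)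
  set a := n - (s + l) with ha
  have ha1 : 1 ≤ a := by omega
  have hacast : (n : ℝ) - ((s : ℝ) + (l : ℝ)) = (a : ℝ) := by
    rw [ha, Nat.cast_sub (by omega)]; push_cast; ring
  rw [hacast]
  have hN : 0 ≤ N := Nat.cast_nonneg _
  have hDpos : 0 < D := by linarith
  set q := N / D
  have hq : 0 ≤ q := by positivity
  have hNq : N = q * D := by simp only [q]; field_simp
  set r : ℝ := q ^ ((1 : ℝ) / (a : ℝ))
  have hr : 0 ≤ r := Real.rpow_nonneg hq _
  have ha0 : a ≠ 0 := by omega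
  have hroot : ∀ x : ℝ, 0 ≤ x → (x ^ ((1 : ℝ) / (a : ℝ))) ^ a = x := by
    intro x hx; rw [one_div]; exact Real.rpow_inv_natCast_pow hx ha0
  have hra : r ^ a = q := hroot q hq
  have hcmp : ∀ c : ℝ, 0 ≤ c → c ≤ (1 + c) ^ a := by
    intro c h
    calc c ≤ 1 + c := by linarith
      _ ≤ (1 + c) ^ a := le_self_pow₀ (by linarith) ha0
  have hlow : τ * (partialDeg n V s : ℝ) ^ a * D ≤ N := by
    unfold RlSet at hR
    split_ifs at hR
    · exact hR
    · exact hR.1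
  have hlow' : τ * (partialDeg n V s : ℝ) ^ a ≤ q := by
    rw [hNq] at hlow; exact le_of_mul_le_mul_right hlow hDpos
  set u : ℝ := (κ * q) ^ ((1 : ℝ) / (a : ℝ))
  have hu : 0 ≤ u := Real.rpow_nonneg (by positivity) _
  have hua : u ^ a = κ * q := hroot _ (by positivity)
  have hb1 : (partialDeg n V s : ℝ) ≤ (1 + 1 / τ) * r := by
    refine le_of_pow_le_pow_left₀ ha0 (by positivity) ?_
    rw [mul_pow, hra]
    calc (partialDeg n V s : ℝ) ^ a = (1 / τ) * (τ * (partialDeg n V s : ℝ) ^ a) := by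
          field_simp
      _ ≤ (1 / τ) * q := by gcongr
      _ ≤ _ := by gcongr; exact hcmp _ (by positivity)
  have hb2 : u ≤ (1 + κ) * r := by
    refine le_of_pow_le_pow_left₀ ha0 (by positivity) ?_
    rw [mul_pow, hra, hua]
    gcongr; exact hcmp _ hκ.le
  obtain ⟨f, hf1, hf2, hf3⟩ := hc hs hlt hl T hT (max (partialDeg n V s) ⌊u⌋₊)
    (le_max_left _ _) (by
      intro h
      refine max_lt (hlt h) ?_
      have hpos : 0 < partialDeg n V (s + 1) := lt_of_le_of_lt (Nat.zero_le _) (hlt h)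
      have hposR : (0 : ℝ) < (partialDeg n V (s + 1) : ℝ) := by exact_mod_cast hpos
      rw [Nat.floor_lt hu]
      refine lt_of_pow_lt_pow_left₀ a hposR.le ?_
      rw [hua]
      have hup : N ≤ τ * (partialDeg n V (s + 1) : ℝ) ^ a * D := by
        unfold RlSet at hR
        rw [if_neg (by rw [hdim]; omega)] at hR
        exact hR.2
      have hup' : q ≤ τ * (partialDeg n V (s + 1) : ℝ) ^ a := by
        rw [hNq] at hup; exact le_of_mul_le_mul_right hup hDpos
      have hX : 0 < (partialDeg n V (s + 1) : ℝ) ^ a := by positivity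
      calc κ * q ≤ κ * (1 / (2 * κ) * (partialDeg n V (s + 1) : ℝ) ^ a) := by
            gcongr; exact hup'.trans (by gcongr)
        _ = (partialDeg n V (s + 1) : ℝ) ^ a / 2 := by field_simp
        _ < _ := by linarith)
    (by
      change κ * N < _
      rw [hNq, ← mul_assoc]
      refine mul_lt_mul_of_pos_right ?_ hDpos
      rw [← hua]
      refine pow_lt_pow_left₀ ?_ hu ha0
      calc u < (⌊u⌋₊ : ℝ) + 1 := Nat.lt_floor_add_one u
        _ ≤ _ := by gcongr; exact le_max_right _ _)
  refine ⟨f, ?_, hf2, hf3⟩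
  calc (f.totalDegree : ℝ) ≤ ((max (partialDeg n V s) ⌊u⌋₊ : ℕ) : ℝ) := by exact_mod_cast hf1
    _ ≤ (partialDeg n V s : ℝ) + u := by
        rw [Nat.cast_max]
        refine max_le (by linarith) ((Nat.floor_le hu).trans ?_)
        linarith [(Nat.cast_nonneg (partialDeg n V s) : (0:ℝ) ≤ _)]
    _ ≤ (2 + 1 / τ + κ) * r := by linarith

end Paper
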